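/- arXiv:math-ph/0512091 — 4 statements merged into one kernel-verified Lean document; each statement's English description precedes it below -/
import Mathlib

section
/- Let X be a Banach space, I ⊆ ℝ an interval, and let U(t,s), (t,s) ∈ D_I, be a strongly continuous, exponentially bounded propagator with constants M ≥ 1 and ω ∈ ℝ. Then for every 1 ≤ p < ∞ the formula (T(σ)f)(t) = U(t,t−σ)f(t−σ) if t, t−σ ∈ I and (T(σ)f)(t) = 0 if t ∈ I but t−σ ∉ I (for σ ≥ 0) defines a strongly continuous semigroup (T(σ))_{σ≥0} of bounded linear operators on L^p(I,X), and ‖T(σ)‖ ≤ M e^{ωσ}. -/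
open MeasureTheory Set Real Filter
open scoped ENNReal Topology Classical

noncomputable def evOp {X : Type*} [NormedAddCommGroup X] [NormedSpace ℝ X]
    (I : Set ℝ) (U : ℝ → ℝ → X →L[ℝ] X) (σ : ℝ) (f : ℝ → X) : ℝ → X :=
  fun t => if t - σ ∈ I then U t (t - σ) (f (t - σ)) else 0

lemma evOp_aux_meas {X : Type*} [NormedAddCommGroup X] [NormedSpace ℝ X]
    (J : Set ℝ) (hJ : MeasurableSet J) (V : ℝ → X →L[ℝ] X) (C : ℝ)
    (hV : ∀ x, ContinuousOn (fun t => V t x) J) (hC : ∀ t ∈ J, ‖V t‖ ≤ C)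
    (h : ℝ → X) (hh : AEStronglyMeasurable h (volume.restrict J)) :
    AEStronglyMeasurable (fun t => V t (h t)) (volume.restrict J) := by
  rw [← map_comap_subtype_coe hJ, (MeasurableEmbedding.subtype_coe hJ).aestronglyMeasurable_map_iff]
    at hh ⊢
  have hc : Continuous (fun q : J × X => V q.1 q.2) := by
    refine continuous_prod_of_continuous_lipschitzWith' _ C.toNNReal ?_ ?_
    · intro a
      refine LipschitzWith.weaken (V a).lipschitz ?_
      rw [← norm_toNNReal]
      exact Real.toNNReal_le_toNNReal (hC a a.2)
    · intro b
      exact continuousOn_iff_continuous_domRestrict.1 (hV b)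
  have h1 : AEStronglyMeasurable (fun t : J => (t, h t)) (Measure.comap Subtype.val volume) :=
    AEStronglyMeasurable.prodMk continuous_id.aestronglyMeasurable hh
  exact hc.comp_aestronglyMeasurable h1

lemma evOp_congr {X : Type*} [NormedAddCommGroup X] [NormedSpace ℝ X]
    (I : Set ℝ) (hImeas : MeasurableSet I) (U : ℝ → ℝ → X →L[ℝ] X) (σ : ℝ) {f g : ℝ → X}
    (h : f =ᵐ[volume.restrict I] g) :
    evOp I U σ f =ᵐ[volume.restrict I] evOp I U σ g := by
  refine ae_restrict_of_ae ?_
  have h1 := (ae_restrict_iff' hImeas).1 h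
  have h2 := (measurePreserving_sub_right volume σ).quasiMeasurePreserving.ae h1
  filter_upwards [h2] with t ht
  unfold evOp
  split_ifs with hm
  · rw [ht hm]
  · rfl

section
variable {X : Type*} [NormedAddCommGroup X] [NormedSpace ℝ X]
    {I : Set ℝ} (hI : I.OrdConnected) (hImeas : MeasurableSet I)
    {M ω : ℝ} (hM : 1 ≤ M)
    {U : ℝ → ℝ → X →L[ℝ] X}
    (hU_cont : ∀ x : X, ContinuousOn (fun q : ℝ × ℝ => U q.1 q.2 x)
      {q : ℝ × ℝ | q.1 ∈ I ∧ q.2 ∈ I ∧ q.2 ≤ q.1})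
    (hU_bound : ∀ t ∈ I, ∀ s ∈ I, s ≤ t → ‖U t s‖ ≤ M * exp (ω * (t - s)))

include hImeas hU_cont hU_bound in
lemma evOp_meas {σ : ℝ} (hσ : 0 ≤ σ) {f : ℝ → X}
    (hf : AEStronglyMeasurable f (volume.restrict I)) :
    AEStronglyMeasurable (evOp I U σ f) (volume.restrict I) := by
  have hS : MeasurableSet ((fun t : ℝ => t - σ) ⁻¹' I) := (measurable_sub_const σ) hImeas
  set S := (fun t : ℝ => t - σ) ⁻¹' I with hSdef
  have e : evOp I U σ f = S.indicator (fun t => U t (t - σ) (I.indicator f (t - σ))) := by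
    ext t
    by_cases h : t - σ ∈ I <;> simp [evOp, S, h, indicator]
  rw [e, aestronglyMeasurable_indicator_iff hS, Measure.restrict_restrict hS]
  refine evOp_aux_meas _ (hS.inter hImeas) (fun t => U t (t - σ)) (M * exp (ω * σ)) ?_ ?_ _ ?_
  · intro x
    have : ContinuousOn (fun t : ℝ => (t, t - σ)) (S ∩ I) := by fun_prop
    refine (hU_cont x).comp this ?_
    intro t ht
    exact ⟨ht.2, ht.1, by simpa using hσ⟩
  · intro t ht
    simpa using hU_bound t ht.2 (t - σ) ht.1 (by simpa using hσ)
  · have h1 : AEStronglyMeasurable (I.indicator f) volume :=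
      (aestronglyMeasurable_indicator_iff hImeas).2 hf
    exact (h1.comp_measurePreserving (measurePreserving_sub_right volume σ)).restrict

include hU_bound in
lemma evOp_norm_le {σ : ℝ} (hσ : 0 ≤ σ) (f : ℝ → X) {t : ℝ} (ht : t ∈ I) :
    ‖evOp I U σ f t‖ ≤ M * exp (ω * σ) * ‖I.indicator f (t - σ)‖ := by
  by_cases h : t - σ ∈ I
  · simp only [evOp, h, if_true, indicator_of_mem]
    refine ((U t (t - σ)).le_opNorm _).trans ?_
    gcongr
    simpa using hU_bound t ht (t - σ) h (by simpa using hσ)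
  · simp [evOp, h]

include hImeas hU_bound in
lemma evOp_eLpNorm {σ : ℝ} (hσ : 0 ≤ σ) {f : ℝ → X} (p : ℝ≥0∞)
    (hf : AEStronglyMeasurable f (volume.restrict I)) :
    eLpNorm (evOp I U σ f) p (volume.restrict I) ≤
      ENNReal.ofReal (M * exp (ω * σ)) * eLpNorm f p (volume.restrict I) := by
  have h1 : AEStronglyMeasurable (I.indicator f) volume :=
      (aestronglyMeasurable_indicator_iff hImeas).2 hf
  have h2 := eLpNorm_le_mul_eLpNorm_of_ae_le_mul (μ := volume.restrict I)
    (f := evOp I U σ f) (g := fun t => I.indicator f (t - σ)) (c := M * exp (ω * σ))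
    ((ae_restrict_iff' hImeas).2 (ae_of_all _ fun t ht => evOp_norm_le hU_bound hσ f ht)) p
  refine h2.trans ?_
  gcongr
  refine (eLpNorm_mono_measure _ Measure.restrict_le_self).trans ?_
  have := eLpNorm_comp_measurePreserving (p := p) h1 (measurePreserving_sub_right volume σ)
  rw [← eLpNorm_indicator_eq_eLpNorm_restrict hImeas, ← this]
  rfl

include hImeas hU_cont hU_bound in
lemma evOp_memLp {σ : ℝ} (hσ : 0 ≤ σ) {f : ℝ → X} {p : ℝ≥0∞}
    (hf : MemLp f p (volume.restrict I)) :
    MemLp (evOp I U σ f) p (volume.restrict I) :=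
  ⟨evOp_meas hImeas hU_cont hU_bound hσ hf.1,
   (evOp_eLpNorm hImeas hU_bound hσ p hf.1).trans_lt (ENNReal.mul_lt_top ENNReal.ofReal_lt_top hf.2)⟩

include hU_cont hU_bound in
lemma evOp_tendsto {f : ℝ → X} (hf : Continuous f) {σ₀ : ℝ} (hσ₀ : 0 ≤ σ₀) {t : ℝ}
    (ht : t ∈ I) (hfr : t - σ₀ ∉ frontier I) :
    Tendsto (fun σ => evOp I U σ f t) (𝓝[Ici 0] σ₀) (𝓝 (evOp I U σ₀ f t)) := by
  have hsub : Tendsto (fun σ : ℝ => t - σ) (𝓝[Ici 0] σ₀) (𝓝 (t - σ₀)) :=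
    (Continuous.tendsto (by fun_prop) σ₀).mono_left nhdsWithin_le_nhds
  by_cases hc : t - σ₀ ∈ closure I
  · have hi : t - σ₀ ∈ interior I := by
      by_contra h
      exact hfr ⟨hc, h⟩
    have hm : t - σ₀ ∈ I := interior_subset hi
    have hev : ∀ᶠ σ in 𝓝[Ici 0] σ₀, t - σ ∈ I :=
      (hsub.eventually (isOpen_interior.mem_nhds hi)).mono fun σ h => interior_subset h
    have hge : ∀ᶠ σ in 𝓝[Ici 0] σ₀, (0:ℝ) ≤ σ := eventually_mem_nhdsWithin
    have h1 : Tendsto (fun σ => U t (t - σ) (f (t - σ₀))) (𝓝[Ici 0] σ₀)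
        (𝓝 (U t (t - σ₀) (f (t - σ₀)))) := by
      have := hU_cont (f (t - σ₀)) (t, t - σ₀) ⟨ht, hm, by simpa using hσ₀⟩
      have h2 : Tendsto (fun σ : ℝ => (t, t - σ)) (𝓝[Ici 0] σ₀)
          (𝓝[{q : ℝ × ℝ | q.1 ∈ I ∧ q.2 ∈ I ∧ q.2 ≤ q.1}] (t, t - σ₀)) := by
        refine tendsto_nhdsWithin_iff.2 ⟨?_, ?_⟩
        · exact tendsto_const_nhds.prodMk_nhds hsub
        · filter_upwards [hev, hge] with σ ha hb
          exact ⟨ht, ha, by simpa using hb⟩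
      exact Tendsto.comp this h2
    have h3 : Tendsto (fun σ => U t (t - σ) (f (t - σ) - f (t - σ₀))) (𝓝[Ici 0] σ₀) (𝓝 0) := by
      have hb : Tendsto (fun σ => M * exp (ω * σ) * ‖f (t - σ) - f (t - σ₀)‖)
          (𝓝[Ici 0] σ₀) (𝓝 0) := by
        have : Continuous (fun σ => M * exp (ω * σ) * ‖f (t - σ) - f (t - σ₀)‖) := by fun_prop
        have := (this.tendsto σ₀).mono_left (nhdsWithin_le_nhds (s := Ici 0))
        simpa using this
      refine squeeze_zero_norm' ?_ hb
      filter_upwards [hev, hge] with σ ha hb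
      refine ((U t (t - σ)).le_opNorm _).trans ?_
      gcongr
      simpa using hU_bound t ht (t - σ) ha (by simpa using hb)
    have h4 := h3.add h1
    have e : evOp I U σ₀ f t = 0 + U t (t - σ₀) (f (t - σ₀)) := by simp [evOp, hm]
    rw [e]
    refine h4.congr' ?_
    filter_upwards [hev] with σ ha
    simp [evOp, ha]
  · have hm : t - σ₀ ∉ I := fun h => hc (subset_closure h)
    have hev : ∀ᶠ σ in 𝓝[Ici 0] σ₀, t - σ ∉ I :=
      (hsub.eventually (isClosed_closure.isOpen_compl.mem_nhds hc)).mono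
        fun σ h h' => h (subset_closure h')
    have e : evOp I U σ₀ f t = 0 := by simp [evOp, hm]
    rw [e]
    refine tendsto_const_nhds.congr' ?_
    filter_upwards [hev] with σ ha
    simp [evOp, ha]

include hM in
lemma evC_le {σ R : ℝ} (h0 : 0 ≤ σ) (h : σ ≤ R) : M * exp (ω * σ) ≤ M * exp (|ω| * R) := by
  have : ω * σ ≤ |ω| * R :=
    (mul_le_mul_of_nonneg_right (le_abs_self ω) h0).trans
      (mul_le_mul_of_nonneg_left h (abs_nonneg ω))
  gcongr

include hI hImeas hM hU_cont hU_bound in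
lemma evOp_tendsto_eLpNorm {f : ℝ → X} (hf : Continuous f) (hfs : HasCompactSupport f)
    {σ₀ : ℝ} (hσ₀ : 0 ≤ σ₀) {p : ℝ≥0∞} (hp1 : 1 ≤ p) (hp : p ≠ ∞) :
    Tendsto (fun σ => eLpNorm (evOp I U σ f - evOp I U σ₀ f) p (volume.restrict I))
      (𝓝[Ici 0] σ₀) (𝓝 0) := by
  have hp0 : p ≠ 0 := (zero_lt_one.trans_le hp1).ne'
  have hpr : 0 < p.toReal := ENNReal.toReal_pos hp0 hp
  obtain ⟨K, hK⟩ := hf.bounded_above_of_compact_support hfs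
  obtain ⟨R, hR⟩ := hfs.isCompact.isBounded.subset_closedBall 0
  have hK0 : 0 ≤ K := (norm_nonneg _).trans (hK 0)
  set C := M * exp (|ω| * (σ₀ + 1)) with hC
  have hC0 : 0 ≤ C := by positivity
  have hge : ∀ᶠ σ in 𝓝[Ici 0] σ₀, (0:ℝ) ≤ σ := eventually_mem_nhdsWithin
  have hle : ∀ᶠ σ in 𝓝[Ici 0] σ₀, σ ≤ σ₀ + 1 :=
    nhdsWithin_le_nhds (Iic_mem_nhds (by linarith))
  have hfm : AEStronglyMeasurable f (volume.restrict I) := hf.aestronglyMeasurable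
  -- pointwise domination
  set B : Set ℝ := Icc (-R) (R + (σ₀ + 1)) with hB
  have hdom : ∀ σ, 0 ≤ σ → σ ≤ σ₀ + 1 → ∀ t ∈ I,
      ‖evOp I U σ f t‖ ≤ B.indicator (fun _ => C * K) t := by
    intro σ h0 h1 t ht
    by_cases hz : f (t - σ) = 0
    · have : evOp I U σ f t = 0 := by simp [evOp, hz]
      rw [this, norm_zero]
      exact indicator_nonneg (fun _ _ => by positivity) _
    · have hmem : t - σ ∈ tsupport f := subset_tsupport _ hz
      have h2 := hR hmem
      rw [mem_closedBall_zero_iff, Real.norm_eq_abs, abs_le] at h2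
      have htB : t ∈ B := ⟨by linarith, by linarith⟩
      rw [indicator_of_mem htB]
      refine (evOp_norm_le hU_bound h0 f ht).trans ?_
      refine mul_le_mul (evC_le hM h0 h1) ?_ (norm_nonneg _) hC0
      exact (norm_indicator_le_norm_self _ _).trans (hK _)
  have hkey : Tendsto (fun σ => ∫⁻ t in I, ‖(evOp I U σ f - evOp I U σ₀ f) t‖ₑ ^ p.toReal)
      (𝓝[Ici 0] σ₀) (𝓝 (∫⁻ t in I, 0)) := by
    refine tendsto_lintegral_filter_of_dominated_convergence'
      (B.indicator fun _ => ENNReal.ofReal (2 * (C * K)) ^ p.toReal) ?_ ?_ ?_ ?_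
    · filter_upwards [hge] with σ h0
      exact (((evOp_meas hImeas hU_cont hU_bound h0 hfm).sub
        (evOp_meas hImeas hU_cont hU_bound hσ₀ hfm)).enorm).pow_const _
    · filter_upwards [hge, hle] with σ h0 h1
      refine (ae_restrict_iff' hImeas).2 (ae_of_all _ fun t ht => ?_)
      have a1 := hdom σ h0 h1 t ht
      have a2 := hdom σ₀ hσ₀ (by linarith) t ht
      have a3 : ‖(evOp I U σ f - evOp I U σ₀ f) t‖ ≤
          2 * B.indicator (fun _ => C * K) t := by
        rw [Pi.sub_apply]
        exact (norm_sub_le _ _).trans (by linarith)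
      rw [← ofReal_norm]
      by_cases htB : t ∈ B
      · rw [indicator_of_mem htB] at a3 ⊢
        gcongr
      · rw [indicator_of_notMem htB] at a3 ⊢
        rw [ENNReal.ofReal_of_nonpos (by simpa using a3), ENNReal.zero_rpow_of_pos hpr]
    · rw [lintegral_indicator_const measurableSet_Icc]
      refine ENNReal.mul_ne_top (ENNReal.rpow_ne_top_of_nonneg hpr.le ENNReal.ofReal_ne_top) ?_
      exact ((Measure.restrict_le_self _).trans_lt measure_Icc_lt_top).ne
    · have hfr : ∀ᵐ t : ℝ, t ∉ frontier I :=
        measure_eq_zero_iff_ae_notMem.1 (hI.convex.addHaar_frontier volume)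
      have hfr2 := (measurePreserving_sub_right volume σ₀).quasiMeasurePreserving.ae hfr
      filter_upwards [ae_restrict_of_ae hfr2, ae_restrict_mem hImeas] with t h1 ht
      have := evOp_tendsto hU_cont hU_bound hf hσ₀ ht h1
      have h2 : Tendsto (fun σ => evOp I U σ f t - evOp I U σ₀ f t) (𝓝[Ici 0] σ₀) (𝓝 0) := by
        simpa using this.sub_const (evOp I U σ₀ f t)
      have h3 := (h2.enorm).ennrpow_const p.toReal
      simpa [ENNReal.zero_rpow_of_pos hpr] using h3
  have := hkey.ennrpow_const (1 / p.toReal)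
  simp only [eLpNorm_eq_lintegral_rpow_enorm_toReal hp0 hp]
  simpa [ENNReal.zero_rpow_of_pos (inv_pos.2 hpr)] using this

end

/-- **Existence of the evolution semigroup on `L^p(I,X)`.**
Given a strongly continuous, exponentially bounded propagator `U(t,s)` on the
interval `I` with constants `M ≥ 1`, `ω`, the formula
`(T σ f)(t) = U t (t-σ) (f (t-σ))` (and `0` if `t - σ ∉ I`) defines, for
`1 ≤ p < ∞`, a strongly continuous semigroup of bounded operators on
`L^p(I,X)` with `‖T σ‖ ≤ M e^{ω σ}`. -/
theorem evolution_semigroup_exists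
    {X : Type*} [NormedAddCommGroup X] [NormedSpace ℝ X] [CompleteSpace X]
    (I : Set ℝ) (hI : I.OrdConnected) (hImeas : MeasurableSet I)
    (M ω : ℝ) (hM : 1 ≤ M)
    (U : ℝ → ℝ → X →L[ℝ] X)
    (hU_id : ∀ t ∈ I, U t t = 1)
    (hU_comp : ∀ t ∈ I, ∀ r ∈ I, ∀ s ∈ I, s ≤ r → r ≤ t →
      (U t r).comp (U r s) = U t s)
    (hU_cont : ∀ x : X, ContinuousOn (fun q : ℝ × ℝ => U q.1 q.2 x)
      {q : ℝ × ℝ | q.1 ∈ I ∧ q.2 ∈ I ∧ q.2 ≤ q.1})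
    (hU_bound : ∀ t ∈ I, ∀ s ∈ I, s ≤ t → ‖U t s‖ ≤ M * exp (ω * (t - s)))
    (p : ℝ≥0∞) [Fact (1 ≤ p)] (hp : p ≠ ∞) :
    ∃ T : ℝ → (Lp X p (volume.restrict I) →L[ℝ] Lp X p (volume.restrict I)),
      -- the defining pointwise (a.e.) formula
      (∀ σ : ℝ, 0 ≤ σ → ∀ f : Lp X p (volume.restrict I),
        ⇑(T σ f) =ᵐ[volume.restrict I]
          fun t => if t - σ ∈ I then U t (t - σ) (f (t - σ)) else 0) ∧
      -- semigroup property
      T 0 = 1 ∧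
      (∀ σ τ : ℝ, 0 ≤ σ → 0 ≤ τ → T (σ + τ) = (T σ).comp (T τ)) ∧
      -- strong continuity
      (∀ f : Lp X p (volume.restrict I),
        ContinuousOn (fun σ => T σ f) (Ici (0:ℝ))) ∧
      -- exponential bound
      (∀ σ : ℝ, 0 ≤ σ → ‖T σ‖ ≤ M * exp (ω * σ)) := by
  have hp1 : 1 ≤ p := Fact.out
  have hmem : ∀ σ : ℝ, 0 ≤ σ → ∀ f : Lp X p (volume.restrict I),
      MemLp (evOp I U σ f) p (volume.restrict I) := fun σ hσ f =>
    evOp_memLp hImeas hU_cont hU_bound hσ (Lp.memLp f)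
  have hex : ∀ σ : ℝ, 0 ≤ σ → ∃ S : Lp X p (volume.restrict I) →L[ℝ] Lp X p (volume.restrict I),
      (∀ f, ⇑(S f) =ᵐ[volume.restrict I] evOp I U σ f) ∧ ‖S‖ ≤ M * exp (ω * σ) := by
    intro σ hσ
    let L : Lp X p (volume.restrict I) →ₗ[ℝ] Lp X p (volume.restrict I) :=
      { toFun := fun f => (hmem σ hσ f).toLp _
        map_add' := by
          intro f g
          rw [← MemLp.toLp_add, MemLp.toLp_eq_toLp_iff]
          refine (evOp_congr I hImeas U σ (Lp.coeFn_add f g)).trans (ae_of_all _ fun t => ?_)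
          by_cases h : t - σ ∈ I <;> simp [evOp, h]
        map_smul' := by
          intro c f
          rw [RingHom.id_apply, ← MemLp.toLp_const_smul, MemLp.toLp_eq_toLp_iff]
          refine (evOp_congr I hImeas U σ (Lp.coeFn_smul c f)).trans (ae_of_all _ fun t => ?_)
          by_cases h : t - σ ∈ I <;> simp [evOp, h] }
    have hL : ∀ f, ‖L f‖ ≤ M * exp (ω * σ) * ‖f‖ := by
      intro f
      have h1 := evOp_eLpNorm hImeas hU_bound hσ p (Lp.memLp f).1
      change ‖(hmem σ hσ f).toLp _‖ ≤ _
      rw [Lp.norm_toLp, Lp.norm_def]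
      have h2 := ENNReal.toReal_mono
        (ENNReal.mul_ne_top ENNReal.ofReal_ne_top (Lp.memLp f).2.ne) h1
      rwa [ENNReal.toReal_mul, ENNReal.toReal_ofReal (by positivity)] at h2
    exact ⟨L.mkContinuous _ hL, fun f => MemLp.coeFn_toLp (hmem σ hσ f),
      L.mkContinuous_norm_le (by positivity) hL⟩
  let T : ℝ → (Lp X p (volume.restrict I) →L[ℝ] Lp X p (volume.restrict I)) :=
    fun σ => if h : 0 ≤ σ then (hex σ h).choose else 0
  have hT : ∀ σ : ℝ, 0 ≤ σ → (∀ f, ⇑(T σ f) =ᵐ[volume.restrict I] evOp I U σ f) ∧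
      ‖T σ‖ ≤ M * exp (ω * σ) := by
    intro σ h
    have : T σ = (hex σ h).choose := by simp [T, h]
    rw [this]
    exact (hex σ h).choose_spec
  refine ⟨T, fun σ h f => (hT σ h).1 f, ?_, ?_, ?_, fun σ h => (hT σ h).2⟩
  · ext1 f
    refine Lp.ext (((hT 0 le_rfl).1 f).trans ?_)
    filter_upwards [ae_restrict_mem hImeas] with t ht
    simp [evOp, ht, hU_id t ht]
  · intro σ τ hσ hτ
    ext1 f
    refine Lp.ext (((hT _ (add_nonneg hσ hτ)).1 f).trans ?_)
    refine EventuallyEq.symm (((hT σ hσ).1 (T τ f)).trans ?_)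
    refine (evOp_congr I hImeas U σ ((hT τ hτ).1 f)).trans ?_
    filter_upwards [ae_restrict_mem hImeas] with t ht
    have e : t - σ - τ = t - (σ + τ) := by ring
    by_cases h : t - (σ + τ) ∈ I
    · have h1 : t - σ ∈ I := hI.out h ht ⟨by linarith, by linarith⟩
      simp only [evOp, e, h, h1, if_true]
      rw [← hU_comp t ht (t - σ) h1 (t - (σ + τ)) h (by linarith) (by linarith)]
      rfl
    · simp [evOp, e, h]
  · intro f σ₀ hσ₀
    have hσ₀' : (0:ℝ) ≤ σ₀ := hσ₀
    refine continuousWithinAt_of_locally_uniform_approx_of_continuousWithinAt hσ₀ ?_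
    intro u hu
    obtain ⟨ε, hε, hεu⟩ := Metric.mem_uniformity_dist.1 hu
    set C := M * exp (|ω| * (σ₀ + 1)) with hC
    have hC0 : 0 < C := by positivity
    obtain ⟨g, hgs, hg, hgc, hgm⟩ := (Lp.memLp f).exists_hasCompactSupport_eLpNorm_sub_le hp
      (ε := ENNReal.ofReal (ε / (2 * C))) (by simpa using by positivity)
    have hge : ∀ᶠ σ in 𝓝[Ici 0] σ₀, (0:ℝ) ≤ σ := eventually_mem_nhdsWithin
    have hle : ∀ᶠ σ in 𝓝[Ici 0] σ₀, σ ≤ σ₀ + 1 :=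
      nhdsWithin_le_nhds (Iic_mem_nhds (by linarith))
    refine ⟨_, hge.and hle, fun σ => T σ (hgm.toLp g), ?_, ?_⟩
    · have hTg : ∀ σ, 0 ≤ σ → ⇑(T σ (hgm.toLp g)) =ᵐ[volume.restrict I] evOp I U σ g :=
        fun σ h => ((hT σ h).1 _).trans (evOp_congr I hImeas U σ hgm.coeFn_toLp)
      refine (Lp.tendsto_Lp_iff_tendsto_eLpNorm' _ _).2 ?_
      refine (evOp_tendsto_eLpNorm hI hImeas hM hU_cont hU_bound hgc hgs hσ₀' hp1 hp).congr' ?_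
      filter_upwards [hge] with σ h
      exact eLpNorm_congr_ae ((hTg σ h).sub (hTg σ₀ hσ₀')).symm
    · rintro σ ⟨h0, h1⟩
      apply hεu
      have hfg : ‖f - hgm.toLp g‖ ≤ ε / (2 * C) := by
        rw [Lp.norm_def]
        refine ENNReal.toReal_le_of_le_ofReal (by positivity) (le_trans (le_of_eq ?_) hg)
        refine eLpNorm_congr_ae ((Lp.coeFn_sub _ _).trans ?_)
        exact (EventuallyEq.refl _ _).sub hgm.coeFn_toLp
      rw [dist_eq_norm, ← map_sub]
      calc ‖T σ (f - hgm.toLp g)‖ ≤ ‖T σ‖ * ‖f - hgm.toLp g‖ := (T σ).le_opNorm _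
        _ ≤ C * (ε / (2 * C)) := by
            gcongr
            exact ((hT σ h0).2).trans (evC_le hM h0 h1)
        _ = ε / 2 := by field_simp
        _ < ε := by linarith
end

section
/- Let T(·) be an evolution semigroup with generator G on E_p = L^p(ℝ,X) (respectively C_0(ℝ,X) if p = ∞), 1 ≤ p ≤ ∞, with time interval I = ℝ. Let D be a core for G such that φf ∈ D for all f ∈ D and all φ ∈ C¹_c(ℝ). Then D_c = D ∩ C_c(ℝ,X) is also a core for G. Moreover, if f ∈ D(G) ∩ C_c(ℝ,X), then f can be approximated in the graph norm of G by functions f_n ∈ D_c whose supports are all contained in one fixed bounded interval J ⊇ supp f. -/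
open MeasureTheory Set Real Filter
open scoped ENNReal Topology

theorem ec_mulOp (X : Type*) [NormedAddCommGroup X] [NormedSpace ℝ X]
    (p : ℝ≥0∞) [Fact (1 ≤ p)] :
    ∃ m : (BoundedContinuousFunction ℝ ℝ) →L[ℝ]
        (Lp X p (volume : Measure ℝ) →L[ℝ] Lp X p (volume : Measure ℝ)),
      (∀ c f, ⇑(m c f) =ᵐ[volume] fun t => c t • f t) ∧
      (∀ c f (C : ℝ), (∀ t, |c t| ≤ C) → ‖m c f‖ ≤ C * ‖f‖) := by
  have hmem : ∀ (c : BoundedContinuousFunction ℝ ℝ) (f : Lp X p (volume : Measure ℝ)),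
      MemLp (fun t => c t • f t) p volume := fun c f => by
    refine MemLp.of_le_mul (c := ‖c‖) (Lp.memLp f)
      (c.continuous.aestronglyMeasurable.smul (Lp.aestronglyMeasurable f)) ?_
    refine Eventually.of_forall fun t => ?_
    rw [norm_smul]
    gcongr
    exact c.norm_coe_le_norm t
  have hb : ∀ c f (C : ℝ), (∀ t, |c t| ≤ C) → ‖(hmem c f).toLp _‖ ≤ C * ‖f‖ := by
    intro c f C hC
    refine Lp.norm_le_mul_norm_of_ae_le_mul ?_
    filter_upwards [(hmem c f).coeFn_toLp] with t ht
    rw [ht, norm_smul]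
    gcongr
    exact hC t
  let m0 : (BoundedContinuousFunction ℝ ℝ) →ₗ[ℝ]
        (Lp X p (volume : Measure ℝ) →ₗ[ℝ] Lp X p (volume : Measure ℝ)) :=
    LinearMap.mk₂ ℝ (fun c f => (hmem c f).toLp _)
      (by
        intro c c' f
        apply Lp.ext
        filter_upwards [(hmem (c + c') f).coeFn_toLp, (hmem c f).coeFn_toLp,
          (hmem c' f).coeFn_toLp, Lp.coeFn_add ((hmem c f).toLp _) ((hmem c' f).toLp _)]
          with t h1 h2 h3 h4
        rw [h1, h4, Pi.add_apply, h2, h3, BoundedContinuousFunction.add_apply, add_smul])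
      (by
        intro a c f
        apply Lp.ext
        filter_upwards [(hmem (a • c) f).coeFn_toLp, (hmem c f).coeFn_toLp,
          Lp.coeFn_smul a ((hmem c f).toLp _)] with t h1 h2 h4
        rw [h1, h4, Pi.smul_apply, h2]
        simp [mul_smul])
      (by
        intro c f f'
        apply Lp.ext
        filter_upwards [(hmem c (f + f')).coeFn_toLp, (hmem c f).coeFn_toLp,
          (hmem c f').coeFn_toLp, Lp.coeFn_add ((hmem c f).toLp _) ((hmem c f').toLp _),
          Lp.coeFn_add f f']
          with t h1 h2 h3 h4 h5
        rw [h1, h4, Pi.add_apply, h2, h3, h5, Pi.add_apply, smul_add])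
      (by
        intro a c f
        apply Lp.ext
        filter_upwards [(hmem c (a • f)).coeFn_toLp, (hmem c f).coeFn_toLp,
          Lp.coeFn_smul a ((hmem c f).toLp _), Lp.coeFn_smul a f] with t h1 h2 h4 h5
        rw [h1, h4, Pi.smul_apply, h2, h5, Pi.smul_apply, smul_comm])
  refine ⟨LinearMap.mkContinuous₂ m0 1 ?_, ?_, ?_⟩
  · intro c f
    rw [one_mul]
    exact hb c f _ (fun t => c.norm_coe_le_norm t)
  · intro c f
    exact (hmem c f).coeFn_toLp
  · intro c f C hC
    exact hb c f C hC

theorem ec_shift (φ : ℝ → ℝ) (h1 : ContDiff ℝ 1 φ) (h2 : HasCompactSupport φ) :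
    ∃ (c : ℝ → BoundedContinuousFunction ℝ ℝ) (c' : BoundedContinuousFunction ℝ ℝ),
      (∀ σ t, c σ t = φ (t - σ)) ∧ (∀ t, c' t = - deriv φ t) ∧ HasDerivAt c c' 0 := by
  obtain ⟨C, hC⟩ := h2.exists_bound_of_continuous h1.continuous
  have hd : Continuous (deriv φ) := h1.continuous_deriv le_rfl
  obtain ⟨C', hC'⟩ := h2.deriv.exists_bound_of_continuous hd
  have huc := h2.deriv.uniformContinuous_of_continuous hd
  let c : ℝ → BoundedContinuousFunction ℝ ℝ := fun σ =>
    BoundedContinuousFunction.ofNormedAddCommGroup (fun t => φ (t - σ))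
      (h1.continuous.comp (continuous_id.sub continuous_const)) C (fun t => hC _)
  let c' : BoundedContinuousFunction ℝ ℝ :=
    BoundedContinuousFunction.ofNormedAddCommGroup (fun t => - deriv φ t) hd.neg C'
      (fun t => by rw [norm_neg]; exact hC' t)
  refine ⟨c, c', fun _ _ => rfl, fun _ => rfl, ?_⟩
  rw [hasDerivAt_iff_isLittleO, Asymptotics.isLittleO_iff]
  intro ε hε
  rw [Metric.uniformContinuous_iff] at huc
  obtain ⟨δ, hδ, hδ'⟩ := huc ε hε
  filter_upwards [Metric.ball_mem_nhds (0:ℝ) hδ] with σ hσ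
  rw [BoundedContinuousFunction.norm_le (by positivity)]
  intro t
  have key := Convex.norm_image_sub_le_of_norm_hasDerivWithin_le (𝕜 := ℝ)
    (f := fun s => φ (t - s) + s * deriv φ t) (f' := fun s => - deriv φ (t - s) + deriv φ t)
    (s := Metric.ball (0:ℝ) δ) (x := 0) (y := σ) (C := ε) ?_ ?_ (convex_ball _ _)
    (Metric.mem_ball_self hδ) hσ
  · refine le_trans (le_of_eq ?_) key
    congr 1
    simp [c, c']
    ring
  · intro s _
    have hφ : HasDerivAt φ (deriv φ (t - s)) (t - s) :=
      (h1.differentiable one_ne_zero _).hasDerivAt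
    have := hφ.comp_const_sub t s
    have h3 := (hasDerivAt_id s).mul_const (deriv φ t)
    simp only [one_mul, id] at h3
    exact (this.add h3).hasDerivWithinAt
  · intro s hs
    have := hδ' (a := t) (b := t - s) (by simpa [dist_eq_norm] using hs)
    rw [dist_eq_norm] at this
    rw [neg_add_eq_sub]
    exact this.le

theorem ec_bump : ∃ C : ℝ, 0 < C ∧ ∀ R : ℝ, 0 < R → ∃ φ : ℝ → ℝ, ContDiff ℝ 1 φ ∧
    HasCompactSupport φ ∧ tsupport φ ⊆ Icc (-(2*R)) (2*R) ∧ (∀ t, |t| ≤ R → φ t = 1) ∧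
    (∀ t, 0 ≤ φ t ∧ φ t ≤ 1) ∧ (∀ t, |deriv φ t| ≤ C / R) := by
  let χ : ContDiffBump (0:ℝ) := ⟨1, 2, one_pos, one_lt_two⟩
  have hχ : ContDiff ℝ 1 χ := χ.contDiff
  obtain ⟨C, hC⟩ := χ.hasCompactSupport.deriv.exists_bound_of_continuous
    (hχ.continuous_deriv le_rfl)
  refine ⟨max C 1, by positivity, fun R hR => ?_⟩
  have hsub : tsupport (fun t => χ (t / R)) ⊆ Icc (-(2*R)) (2*R) := by
    refine closure_minimal ?_ isClosed_Icc
    intro t ht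
    have : t / R ∈ Function.support χ := ht
    rw [χ.support_eq] at this
    have h2 : |t / R| < 2 := by simpa [χ, abs_div] using this
    rw [abs_div, abs_of_pos hR, div_lt_iff₀ hR] at h2
    exact abs_le.1 h2.le
  refine ⟨fun t => χ (t / R), ?_, ?_, hsub, ?_, ?_, ?_⟩
  · exact hχ.comp (contDiff_id.div_const R)
  · exact isCompact_Icc.of_isClosed_subset (isClosed_tsupport _) hsub
  · intro t ht
    apply χ.one_of_mem_closedBall
    simp only [χ, mem_closedBall_zero_iff, norm_eq_abs, abs_div, abs_of_pos hR]
    rwa [div_le_one hR]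
  · exact fun t => ⟨χ.nonneg, χ.le_one⟩
  · intro t
    have h0 : HasDerivAt χ (deriv χ (t / R)) (t / R) :=
      (hχ.differentiable one_ne_zero _).hasDerivAt
    have := h0.comp t ((hasDerivAt_id t).div_const R)
    have e : deriv (fun t => χ (t / R)) t = deriv χ (t / R) * (1 / R) := this.deriv
    rw [e, abs_mul, abs_of_pos (by positivity : 0 < 1 / R), div_eq_mul_one_div (max C 1)]
    exact mul_le_mul_of_nonneg_right ((hC _).trans (le_max_left _ _)) (by positivity)

theorem ec_intCLM (X : Type*) [NormedAddCommGroup X] [NormedSpace ℝ X]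
    (p : ℝ≥0∞) [Fact (1 ≤ p)] (S : Set ℝ) (hS : volume S ≠ ∞) :
    ∃ L : Lp X p (volume : Measure ℝ) →L[ℝ] X, ∀ f, L f = ∫ t in S, f t := by
  have : IsFiniteMeasure (volume.restrict S) := ⟨by simpa using hS.lt_top⟩
  have hint : ∀ f : Lp X p (volume : Measure ℝ), Integrable f (volume.restrict S) := fun f =>
    ((Lp.memLp f).restrict S).integrable Fact.out
  let L0 : Lp X p (volume : Measure ℝ) →ₗ[ℝ] X :=
    { toFun := fun f => ∫ t in S, f t
      map_add' := by
        intro f g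
        rw [← integral_add (hint f) (hint g)]
        exact integral_congr_ae (ae_restrict_of_ae (Lp.coeFn_add f g))
      map_smul' := by
        intro a f
        rw [RingHom.id_apply, ← integral_smul]
        exact integral_congr_ae (ae_restrict_of_ae (Lp.coeFn_smul a f)) }
  set K : ℝ≥0∞ := (volume.restrict S) univ ^ (1 / (1:ℝ≥0∞).toReal - 1 / p.toReal) with hK
  have hexp : 0 ≤ 1 / (1:ℝ≥0∞).toReal - 1 / p.toReal := by
    simp only [ENNReal.toReal_one, div_one, sub_nonneg]
    by_cases h : p = ∞
    · simp [h]
    · have : (1:ℝ) ≤ p.toReal := by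
        rw [← ENNReal.toReal_one]
        exact ENNReal.toReal_mono h Fact.out
      rw [one_div]
      exact inv_le_one_of_one_le₀ this
  have hKt : K ≠ ∞ := ENNReal.rpow_ne_top_of_nonneg hexp (measure_ne_top _ _)
  refine ⟨L0.mkContinuous K.toReal ?_, fun f => rfl⟩
  intro f
  change ‖∫ t in S, f t‖ ≤ _
  refine (norm_integral_le_integral_norm _).trans ?_
  rw [integral_norm_eq_lintegral_enorm (hint f).1, ← eLpNorm_one_eq_lintegral_enorm, Lp.norm_def,
    ← ENNReal.toReal_mul]
  refine ENNReal.toReal_mono (ENNReal.mul_ne_top hKt (Lp.memLp f).2.ne) ?_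
  rw [mul_comm]
  refine (eLpNorm_le_eLpNorm_mul_rpow_measure_univ (q := p) Fact.out (hint f).1).trans ?_
  gcongr
  exact Measure.restrict_le_self

theorem ec_jcont {X : Type*} [NormedAddCommGroup X] [NormedSpace ℝ X]
    (M ω : ℝ) (U : ℝ → ℝ → X →L[ℝ] X)
    (hU_cont : ∀ x : X, ContinuousOn (fun q : ℝ × ℝ => U q.1 q.2 x)
      {q : ℝ × ℝ | q.2 ≤ q.1})
    (hU_bound : ∀ t s : ℝ, s ≤ t → ‖U t s‖ ≤ M * exp (ω * (t - s))) :
    Continuous (fun q : (ℝ × ℝ) × X => U q.1.1 (q.1.1 - max q.1.2 0) q.2) := by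
  have hx : ∀ x : X, Continuous (fun q : ℝ × ℝ => U q.1 (q.1 - max q.2 0) x) := fun x =>
    (hU_cont x).comp_continuous (f := fun q : ℝ × ℝ => (q.1, q.1 - max q.2 0))
      (by fun_prop) (fun q => by simp)
  rw [continuous_iff_continuousAt]
  rintro ⟨q0, x0⟩
  have h1 : Tendsto (fun q : (ℝ × ℝ) × X => U q.1.1 (q.1.1 - max q.1.2 0) (q.2 - x0))
      (𝓝 (q0, x0)) (𝓝 0) := by
    refine squeeze_zero_norm (a := fun q => M * exp (ω * max q.1.2 0) * ‖q.2 - x0‖) ?_ ?_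
    · intro q
      refine (ContinuousLinearMap.le_opNorm _ _).trans ?_
      gcongr
      refine (hU_bound _ _ (by simp)).trans (le_of_eq ?_)
      ring_nf
    · have : Continuous (fun q : (ℝ × ℝ) × X => M * exp (ω * max q.1.2 0) * ‖q.2 - x0‖) := by
        fun_prop
      have := this.tendsto (q0, x0)
      simpa using this
  have h2 : Tendsto (fun q : (ℝ × ℝ) × X => U q.1.1 (q.1.1 - max q.1.2 0) x0)
      (𝓝 (q0, x0)) (𝓝 (U q0.1 (q0.1 - max q0.2 0) x0)) :=
    ((hx x0).comp continuous_fst).tendsto (q0, x0)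
  have h3 := h1.add h2
  rw [zero_add] at h3
  refine h3.congr fun q => ?_
  rw [← map_add, sub_add_cancel]

theorem ec_kbound {X : Type*} [NormedAddCommGroup X] [NormedSpace ℝ X]
    (M ω : ℝ) (hM : 1 ≤ M) (U : ℝ → ℝ → X →L[ℝ] X)
    (hU_bound : ∀ t s : ℝ, s ≤ t → ‖U t s‖ ≤ M * exp (ω * (t - s))) (σ : ℝ) :
    ∀ t τ x, τ ≤ σ → ‖U t (t - max τ 0) x‖ ≤ M * exp (|ω| * max σ 0) * ‖x‖ := by
  intro t τ x hτ
  refine (ContinuousLinearMap.le_opNorm _ _).trans ?_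
  gcongr
  refine (hU_bound _ _ (by simp)).trans ?_
  have : t - (t - max τ 0) = max τ 0 := by ring
  rw [this]
  refine mul_le_mul_of_nonneg_left (exp_le_exp.2 ?_) (by linarith)
  have h0 : 0 ≤ max τ 0 := le_max_right _ _
  calc ω * max τ 0 ≤ |ω| * max τ 0 := by gcongr; exact le_abs_self _
    _ ≤ _ := by gcongr

theorem ec_Fcont {X : Type*} [NormedAddCommGroup X] [NormedSpace ℝ X]
    (M ω : ℝ) (hM : 1 ≤ M) (U : ℝ → ℝ → X →L[ℝ] X)
    (hU_cont : ∀ x : X, ContinuousOn (fun q : ℝ × ℝ => U q.1 q.2 x)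
      {q : ℝ × ℝ | q.2 ≤ q.1})
    (hU_bound : ∀ t s : ℝ, s ≤ t → ‖U t s‖ ≤ M * exp (ω * (t - s)))
    (h : ℝ → X) (hh : LocallyIntegrable h volume) (σ : ℝ) (hσ : 0 ≤ σ) :
    Continuous (fun t => ∫ τ in (0:ℝ)..σ, U t (t - max τ 0) (h (t - τ))) := by
  have hj := ec_jcont M ω U hU_cont hU_bound
  have e : (fun t => ∫ τ in (0:ℝ)..σ, U t (t - max τ 0) (h (t - τ))) =
      fun t => ∫ s, (Ioc (t - σ) t).indicator (fun s => U t (t - max (t - s) 0) (h s)) s := by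
    ext t
    rw [integral_indicator measurableSet_Ioc, ← intervalIntegral.integral_of_le (by linarith)]
    have := intervalIntegral.integral_comp_sub_left (a := 0) (b := σ)
      (fun s => U t (t - max (t - s) 0) (h s)) t
    simpa using this
  rw [e, continuous_iff_continuousAt]
  intro t0
  have hmeas : ∀ t, AEStronglyMeasurable (fun s => U t (t - max (t - s) 0) (h s)) volume := by
    intro t
    have h1 : AEStronglyMeasurable (fun s : ℝ => ((t, t - s), h s)) volume :=
      (Continuous.aestronglyMeasurable (by fun_prop)).prodMk hh.aestronglyMeasurable
    exact hj.comp_aestronglyMeasurable h1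
  have hint : IntegrableOn h (Icc (t0 - 1 - σ) (t0 + 1)) volume :=
    hh.integrableOn_isCompact isCompact_Icc
  refine continuousAt_of_dominated (bound := fun s => M * exp (|ω| * max σ 0) *
    (Icc (t0 - 1 - σ) (t0 + 1)).indicator (fun s => ‖h s‖) s) ?_ ?_ ?_ ?_
  · exact Eventually.of_forall fun t => (hmeas t).indicator measurableSet_Ioc
  · filter_upwards [Ioo_mem_nhds (show t0 - 1 < t0 by linarith) (show t0 < t0 + 1 by linarith)]
      with t ht
    refine Eventually.of_forall fun s => ?_
    by_cases hs : s ∈ Ioc (t - σ) t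
    · rw [indicator_of_mem hs, indicator_of_mem
        (show s ∈ Icc (t0 - 1 - σ) (t0 + 1) from ⟨by linarith [hs.1, ht.1], by linarith [hs.2, ht.2]⟩)]
      exact ec_kbound M ω hM U hU_bound σ t (t - s) (h s) (by linarith [hs.1])
    · rw [indicator_of_notMem hs, norm_zero]
      have : 0 ≤ (Icc (t0 - 1 - σ) (t0 + 1)).indicator (fun s => ‖h s‖) s :=
        indicator_nonneg (fun _ _ => norm_nonneg _) _
      positivity
  · exact ((integrable_indicator_iff measurableSet_Icc).2 hint.norm).const_mul _
  · have hne : ∀ᵐ s : ℝ, s ≠ t0 ∧ s ≠ t0 - σ := by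
      have := (measure_singleton (μ := volume) t0)
      exact (Measure.ae_ne volume t0).and (Measure.ae_ne volume (t0 - σ))
    filter_upwards [hne] with s hs
    have hc : Continuous (fun t => U t (t - max (t - s) 0) (h s)) :=
      hj.comp (f := fun t => (((t, t - s), h s) : (ℝ × ℝ) × X)) (by fun_prop)
    by_cases hs' : s ∈ Ioo (t0 - σ) t0
    · refine hc.continuousAt.congr ?_
      filter_upwards [Ioo_mem_nhds hs'.2 (show t0 < s + σ by linarith [hs'.1])] with t ht
      rw [indicator_of_mem (show s ∈ Ioc (t - σ) t from ⟨by linarith [ht.2], ht.1.le⟩)]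
    · refine (continuousAt_const (y := (0:X))).congr ?_
      have : s < t0 - σ ∨ t0 < s := by
        by_contra hcon
        push Not at hcon
        exact hs' ⟨lt_of_le_of_ne hcon.1 hs.2.symm, lt_of_le_of_ne hcon.2 hs.1⟩
      rcases this with hlt | hlt
      · filter_upwards [Ioi_mem_nhds (show s + σ < t0 by linarith)] with t ht
        rw [indicator_of_notMem]
        intro hm
        have := hm.1
        rw [mem_Ioi] at ht
        linarith
      · filter_upwards [Iio_mem_nhds hlt] with t ht
        rw [indicator_of_notMem]
        intro hm
        exact absurd hm.2 (not_le.2 ht)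

theorem ec_fubini {X : Type*} [NormedAddCommGroup X] [NormedSpace ℝ X]
    (M ω : ℝ) (hM : 1 ≤ M) (U : ℝ → ℝ → X →L[ℝ] X)
    (hU_cont : ∀ x : X, ContinuousOn (fun q : ℝ × ℝ => U q.1 q.2 x)
      {q : ℝ × ℝ | q.2 ≤ q.1})
    (hU_bound : ∀ t s : ℝ, s ≤ t → ‖U t s‖ ≤ M * exp (ω * (t - s)))
    (h : ℝ → X) (hm : StronglyMeasurable h)
    (hh : LocallyIntegrable h volume) (σ : ℝ) (hσ : 0 ≤ σ) (A B : ℝ) (S : Set ℝ)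
    (hS : MeasurableSet S) (hSA : S ⊆ Icc A B) :
    ∫ t in S, (∫ τ in (0:ℝ)..σ, U t (t - max τ 0) (h (t - τ))) =
     ∫ τ in (0:ℝ)..σ, ∫ t in S, U t (t - max τ 0) (h (t - τ)) := by
  simp only [intervalIntegral.integral_of_le hσ]
  apply integral_integral_swap
  have hj := ec_jcont M ω U hU_cont hU_bound
  have hk : Integrable ((Icc (A - σ) B).indicator (fun s => ‖h s‖)) volume :=
    (integrable_indicator_iff measurableSet_Icc).2 (hh.integrableOn_isCompact isCompact_Icc).norm
  have h1 : Integrable ((Ioc 0 σ).indicator (fun _ => (1:ℝ))) (volume : Measure ℝ) :=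
    (integrable_indicator_iff measurableSet_Ioc).2 (integrableOn_const (by simp))
  have hI := (h1.convolution_integrand (ContinuousLinearMap.mul ℝ ℝ) hk)
  rw [Measure.prod_restrict]
  have hI' := (hI.const_mul (M * exp (|ω| * max σ 0))).integrableOn (s := S ×ˢ Ioc 0 σ)
  refine Integrable.mono' hI' ?_ ?_
  · have : StronglyMeasurable (fun q : ℝ × ℝ => (q, h (q.1 - q.2))) :=
      stronglyMeasurable_id.prodMk (hm.comp_measurable (measurable_fst.sub measurable_snd))
    exact (hj.comp_stronglyMeasurable this).aestronglyMeasurable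
  · refine (ae_restrict_iff' (hS.prod measurableSet_Ioc)).2 (Eventually.of_forall ?_)
    rintro ⟨t, τ⟩ ⟨ht, hτ⟩
    have ht' := hSA ht
    simp only at ht ht' hτ
    simp only [ContinuousLinearMap.mul_apply']
    rw [indicator_of_mem hτ, indicator_of_mem (show t - τ ∈ Icc (A - σ) B from
      ⟨by linarith [ht'.1, hτ.2], by linarith [ht'.2, hτ.1]⟩), one_mul]
    exact ec_kbound M ω hM U hU_bound σ t τ _ hτ.2

theorem ec_rep {X : Type*} [NormedAddCommGroup X] [NormedSpace ℝ X] [CompleteSpace X]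
    (M ω : ℝ) (hM : 1 ≤ M) (U : ℝ → ℝ → X →L[ℝ] X)
    (hU_cont : ∀ x : X, ContinuousOn (fun q : ℝ × ℝ => U q.1 q.2 x)
      {q : ℝ × ℝ | q.2 ≤ q.1})
    (hU_bound : ∀ t s : ℝ, s ≤ t → ‖U t s‖ ≤ M * exp (ω * (t - s)))
    (p : ℝ≥0∞) [Fact (1 ≤ p)]
    (T : ℝ → (Lp X p (volume : Measure ℝ) →L[ℝ] Lp X p (volume : Measure ℝ)))
    (hT_eq : ∀ σ : ℝ, 0 ≤ σ → ∀ f : Lp X p (volume : Measure ℝ),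
      ⇑(T σ f) =ᵐ[(volume : Measure ℝ)] fun t => U t (t - σ) (f (t - σ)))
    (hT_zero : T 0 = 1)
    (hT_sg : ∀ σ τ : ℝ, 0 ≤ σ → 0 ≤ τ → T (σ + τ) = (T σ).comp (T τ))
    (hT_cont : ∀ f, ContinuousOn (fun σ => T σ f) (Ici (0:ℝ)))
    (f h : Lp X p (volume : Measure ℝ))
    (hf : HasDerivWithinAt (fun σ => T σ f) h (Ici (0:ℝ)) 0)
    (A B : ℝ) (hAB : A ≤ B) (hsupp : ∀ᵐ t : ℝ, t ∉ Icc A B → f t = 0) :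
    ∃ F : ℝ → X, Continuous F ∧ ∀ᵐ t : ℝ, t ∈ Icc A B → f t = F t := by
  set σ : ℝ := B - A + 1 with hσd
  have hσ : 0 ≤ σ := by linarith
  have hloc : LocallyIntegrable h volume := (Lp.memLp h).locallyIntegrable Fact.out
  have hFc := ec_Fcont M ω hM U hU_cont hU_bound h hloc σ hσ
  -- fundamental theorem
  have hcT : ∀ g, ContinuousOn (fun τ => T τ g) (uIcc 0 σ) := fun g =>
    (hT_cont g).mono (by rw [uIcc_of_le hσ]; exact fun x hx => hx.1)
  have hderiv : ∀ τ ∈ Ioo (min 0 σ) (max 0 σ),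
      HasDerivWithinAt (fun τ => T τ f) (T τ h) (Ioi τ) τ := by
    intro τ hτ
    rw [min_eq_left hσ] at hτ
    have h0 : HasDerivWithinAt (fun s => T (s - τ) f) h (Ioi τ) τ := by
      have hsub : HasDerivWithinAt (fun s : ℝ => s - τ) 1 (Ioi τ) τ :=
        ((hasDerivAt_id τ).sub_const τ).hasDerivWithinAt
      have hf' : HasDerivWithinAt (fun σ => T σ f) h (Ici (0:ℝ)) (τ - τ) := by
        rw [sub_self]; exact hf
      have := HasDerivWithinAt.scomp (h := fun s : ℝ => s - τ) τ hf' hsub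
        (fun s hs => by simpa using (le_of_lt (mem_Ioi.1 hs)))
      simpa [Function.comp_def] using this
    have h1 := (T τ).hasFDerivAt.comp_hasDerivWithinAt τ h0
    refine h1.congr (fun s hs => ?_) ?_
    · have := hT_sg τ (s - τ) hτ.1.le (sub_nonneg.2 (le_of_lt hs))
      rw [add_sub_cancel] at this
      simp [this]
    · simp [hT_zero]
  have hII : IntervalIntegrable (fun τ => T τ h) volume 0 σ := (hcT h).intervalIntegrable
  have hFTC := intervalIntegral.integral_eq_sub_of_hasDeriv_right (hcT f) hderiv hII
  have hTσ : ∀ᵐ t : ℝ, t ∈ Icc A B → T σ f t = 0 := by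
    have h1 := (measurePreserving_sub_right (volume : Measure ℝ) σ).quasiMeasurePreserving.ae hsupp
    filter_upwards [hT_eq σ hσ f, h1] with t ht1 ht2 ht
    rw [ht1, ht2 (fun hm => by linarith [hm.1, ht.2]), map_zero]
  refine ⟨fun t => - ∫ τ in (0:ℝ)..σ, U t (t - max τ 0) (h (t - τ)), hFc.neg, ?_⟩
  rw [← ae_restrict_iff' measurableSet_Icc]
  refine Integrable.ae_eq_of_forall_setIntegral_eq _ _ ?_ ?_ ?_
  · exact ((Lp.memLp f).locallyIntegrable Fact.out).integrableOn_isCompact isCompact_Icc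
  · exact hFc.neg.continuousOn.integrableOn_compact isCompact_Icc
  intro S hS _
  rw [Measure.restrict_restrict hS]
  have hS' : MeasurableSet (S ∩ Icc A B) := hS.inter measurableSet_Icc
  have hfin : volume (S ∩ Icc A B) ≠ ∞ :=
    ((measure_mono inter_subset_right).trans_lt measure_Icc_lt_top).ne
  obtain ⟨L, hL⟩ := ec_intCLM X p (S ∩ Icc A B) hfin
  have h2 := congrArg L hFTC
  rw [← ContinuousLinearMap.intervalIntegral_comp_comm L hII, map_sub, hT_zero] at h2
  have h3 : L (T σ f) = 0 := by
    rw [hL]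
    refine setIntegral_eq_zero_of_ae_eq_zero ?_
    filter_upwards [hTσ] with t ht hm using ht hm.2
  rw [h3, zero_sub] at h2
  have h4 : L f = ∫ t in S ∩ Icc A B, f t := hL f
  rw [integral_neg, ec_fubini M ω hM U hU_cont hU_bound h (Lp.stronglyMeasurable h) hloc σ hσ A B _
    hS' inter_subset_right, ← h4, ← neg_eq_iff_eq_neg]
  have h5 : -L f = ∫ τ in (0:ℝ)..σ, L (T τ h) := by rw [h2]; rfl
  rw [h5]
  refine intervalIntegral.integral_congr fun τ hτ => ?_
  rw [uIcc_of_le hσ] at hτ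
  rw [hL]
  refine integral_congr_ae (ae_restrict_of_ae ?_)
  filter_upwards [hT_eq τ hτ.1 h] with t ht
  rw [ht, max_eq_left hτ.1]

theorem ec_prod {X : Type*} [NormedAddCommGroup X] [NormedSpace ℝ X]
    (U : ℝ → ℝ → X →L[ℝ] X) (p : ℝ≥0∞) [Fact (1 ≤ p)]
    (T : ℝ → (Lp X p (volume : Measure ℝ) →L[ℝ] Lp X p (volume : Measure ℝ)))
    (hT_eq : ∀ σ : ℝ, 0 ≤ σ → ∀ f : Lp X p (volume : Measure ℝ),
      ⇑(T σ f) =ᵐ[(volume : Measure ℝ)] fun t => U t (t - σ) (f (t - σ)))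
    (hT_zero : T 0 = 1)
    (m : (BoundedContinuousFunction ℝ ℝ) →L[ℝ]
        (Lp X p (volume : Measure ℝ) →L[ℝ] Lp X p (volume : Measure ℝ)))
    (hm : ∀ c f, ⇑(m c f) =ᵐ[volume] fun t => c t • f t)
    (φ : ℝ → ℝ) (h1 : ContDiff ℝ 1 φ) (h2 : HasCompactSupport φ) :
    ∃ (c c' : BoundedContinuousFunction ℝ ℝ),
      (∀ t, c t = φ t) ∧ (∀ t, c' t = - deriv φ t) ∧
      ∀ f h, HasDerivWithinAt (fun σ => T σ f) h (Ici (0:ℝ)) 0 →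
        HasDerivWithinAt (fun σ => T σ (m c f)) (m c' f + m c h) (Ici (0:ℝ)) 0 := by
  obtain ⟨c, c', hc, hc', hd⟩ := ec_shift φ h1 h2
  refine ⟨c 0, c', fun t => by rw [hc, sub_zero], hc', fun f h hf => ?_⟩
  have key : ∀ σ ∈ Ici (0:ℝ), T σ (m (c 0) f) = m (c σ) (T σ f) := by
    intro σ hσ
    apply Lp.ext
    have e := (measurePreserving_sub_right (volume : Measure ℝ) σ).quasiMeasurePreserving.ae
      (hm (c 0) f)
    filter_upwards [hT_eq σ hσ (m (c 0) f), hT_eq σ hσ f, hm (c σ) (T σ f), e] with t e1 e2 e3 e4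
    rw [e1, e3, e2, e4, map_smul, hc, hc, sub_zero]
  have hmd : HasDerivWithinAt (fun σ => m (c σ)) (m c') (Ici (0:ℝ)) 0 :=
    m.hasFDerivAt.comp_hasDerivWithinAt 0 hd.hasDerivWithinAt
  have := hmd.clm_apply hf
  rw [hT_zero] at this
  exact this.congr key (key 0 self_mem_Ici)

theorem ec_trunc {X : Type*} [NormedAddCommGroup X] [NormedSpace ℝ X]
    (p : ℝ≥0∞) [Fact (1 ≤ p)] (hp : p ≠ ∞)
    (m : (BoundedContinuousFunction ℝ ℝ) →L[ℝ]
        (Lp X p (volume : Measure ℝ) →L[ℝ] Lp X p (volume : Measure ℝ)))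
    (hm : ∀ c f, ⇑(m c f) =ᵐ[volume] fun t => c t • f t)
    (hm' : ∀ c f (C : ℝ), (∀ t, |c t| ≤ C) → ‖m c f‖ ≤ C * ‖f‖)
    (u : Lp X p (volume : Measure ℝ)) (δ : ℝ) (hδ : 0 < δ) :
    ∃ R0 : ℝ, ∀ R, R0 ≤ R → ∀ c : BoundedContinuousFunction ℝ ℝ,
      (∀ t, |t| ≤ R → c t = 1) → (∀ t, 0 ≤ c t ∧ c t ≤ 1) → ‖u - m c u‖ ≤ δ := by
  obtain ⟨g, hg1, hg2, hg3, hg4⟩ := (Lp.memLp u).exists_hasCompactSupport_eLpNorm_sub_le hp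
    (ε := ENNReal.ofReal (δ / 2)) (by simpa using hδ)
  obtain ⟨R0, hR0⟩ := hg1.isCompact.isBounded.subset_closedBall (0:ℝ)
  refine ⟨R0, fun R hR c hc1 hc2 => ?_⟩
  set k := hg4.toLp g with hk
  have hk1 : ‖u - k‖ ≤ δ / 2 := by
    have : u - k = ((Lp.memLp u).sub hg4).toLp _ := by
      rw [MemLp.toLp_sub (Lp.memLp u) hg4, Lp.toLp_coeFn]
    rw [this, Lp.norm_toLp]
    exact ENNReal.toReal_le_of_le_ofReal (by linarith) hg2
  have hk2 : m c k = k := by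
    apply Lp.ext
    filter_upwards [hm c k, hg4.coeFn_toLp] with t e1 e2
    rw [e1, e2]
    by_cases ht : g t = 0
    · simp [ht]
    · have : t ∈ Metric.closedBall (0:ℝ) R0 := hR0 (subset_tsupport g ht)
      rw [mem_closedBall_zero_iff, norm_eq_abs] at this
      rw [hc1 t (this.trans hR), one_smul]
  have e : u - m c u = (u - k) - m c (u - k) := by
    rw [map_sub, hk2]; abel
  have h3 := hm' c (u - k) 1 (fun t => abs_le.2 ⟨by linarith [(hc2 t).1], (hc2 t).2⟩)
  rw [e]
  refine (norm_sub_le _ _).trans ?_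
  linarith

/-- **Compactly supported cores of evolution generators (Lemma 3.8).**
Let `T(·)` be an evolution semigroup with generator `G` on `E_p = L^p(ℝ,X)`
(here `1 ≤ p < ∞`), associated with a propagator `U(t,s)` on `I = ℝ`.
Let `D` be a core for `G` such that `φ f ∈ D` for all `f ∈ D` and all
`φ ∈ C¹_c(ℝ)`. Then `D_c = D ∩ C_c(ℝ,X)` is also a core for `G`; moreover a
function `f ∈ D(G) ∩ C_c(ℝ,X)` can be approximated in the graph norm by
elements of `D_c` supported in one fixed bounded interval `J ⊇ supp f`. -/
theorem evolution_generator_compact_core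
    {X : Type*} [NormedAddCommGroup X] [NormedSpace ℝ X] [CompleteSpace X]
    (M ω : ℝ) (hM : 1 ≤ M)
    (U : ℝ → ℝ → X →L[ℝ] X)
    (hU_id : ∀ t : ℝ, U t t = 1)
    (hU_comp : ∀ t r s : ℝ, s ≤ r → r ≤ t → (U t r).comp (U r s) = U t s)
    (hU_cont : ∀ x : X, ContinuousOn (fun q : ℝ × ℝ => U q.1 q.2 x)
      {q : ℝ × ℝ | q.2 ≤ q.1})
    (hU_bound : ∀ t s : ℝ, s ≤ t → ‖U t s‖ ≤ M * exp (ω * (t - s)))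
    (p : ℝ≥0∞) [Fact (1 ≤ p)] (hp : p ≠ ∞)
    -- the associated evolution semigroup on `E_p = L^p(ℝ,X)`
    (T : ℝ → (Lp X p (volume : Measure ℝ) →L[ℝ] Lp X p (volume : Measure ℝ)))
    (hT_eq : ∀ σ : ℝ, 0 ≤ σ → ∀ f : Lp X p (volume : Measure ℝ),
      ⇑(T σ f) =ᵐ[(volume : Measure ℝ)] fun t => U t (t - σ) (f (t - σ)))
    (hT_zero : T 0 = 1)
    (hT_sg : ∀ σ τ : ℝ, 0 ≤ σ → 0 ≤ τ → T (σ + τ) = (T σ).comp (T τ))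
    (hT_cont : ∀ f, ContinuousOn (fun σ => T σ f) (Ici (0:ℝ)))
    -- `(DomG, Gmap)` is the generator `G` of `T(·)`
    (DomG : Set (Lp X p (volume : Measure ℝ)))
    (Gmap : Lp X p (volume : Measure ℝ) → Lp X p (volume : Measure ℝ))
    (hDomG : ∀ f, f ∈ DomG ↔
      ∃ h, HasDerivWithinAt (fun σ => T σ f) h (Ici (0:ℝ)) 0)
    (hGmap : ∀ f ∈ DomG,
      HasDerivWithinAt (fun σ => T σ f) (Gmap f) (Ici (0:ℝ)) 0)
    -- `D` is a core of `G`
    (D : Set (Lp X p (volume : Measure ℝ)))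
    (hD_sub : D ⊆ DomG)
    (hD_core : ∀ f ∈ DomG, ∀ ε : ℝ, 0 < ε →
      ∃ d ∈ D, ‖f - d‖ + ‖Gmap f - Gmap d‖ < ε)
    -- `φ f ∈ D` for all `f ∈ D` and `φ ∈ C¹_c(ℝ)`
    (hD_mul : ∀ f ∈ D, ∀ φ : ℝ → ℝ, ContDiff ℝ 1 φ → HasCompactSupport φ →
      ∀ g : Lp X p (volume : Measure ℝ),
        (⇑g =ᵐ[(volume : Measure ℝ)] fun t => φ t • f t) → g ∈ D) :
    -- `D_c = D ∩ C_c(ℝ,X)` is a core of `G`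
    (∀ f ∈ DomG, ∀ ε : ℝ, 0 < ε → ∃ d ∈ D,
      (∃ g : ℝ → X, Continuous g ∧ HasCompactSupport g ∧
        ⇑d =ᵐ[(volume : Measure ℝ)] g) ∧
      ‖f - d‖ + ‖Gmap f - Gmap d‖ < ε) ∧
    -- approximation with supports in a fixed bounded interval `J ⊇ supp f`
    (∀ f ∈ DomG, ∀ g : ℝ → X, Continuous g → HasCompactSupport g →
      (⇑f =ᵐ[(volume : Measure ℝ)] g) →
      ∃ a b : ℝ, tsupport g ⊆ Icc a b ∧
        ∀ ε : ℝ, 0 < ε → ∃ d ∈ D, ∃ h : ℝ → X,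
          Continuous h ∧ tsupport h ⊆ Icc a b ∧
          ⇑d =ᵐ[(volume : Measure ℝ)] h ∧
          ‖f - d‖ + ‖Gmap f - Gmap d‖ < ε) := by
  obtain ⟨m, hm, hm'⟩ := ec_mulOp X p
  obtain ⟨C, hC, hbump⟩ := ec_bump
  have hprod := ec_prod U p T hT_eq hT_zero m hm
  have hG : ∀ f h, HasDerivWithinAt (fun σ => T σ f) h (Ici (0:ℝ)) 0 →
      f ∈ DomG ∧ Gmap f = h := fun f h hf => by
    have hfd : f ∈ DomG := (hDomG f).2 ⟨h, hf⟩
    exact ⟨hfd, UniqueDiffWithinAt.eq_deriv _ (uniqueDiffOn_Ici 0 0 self_mem_Ici) (hGmap f hfd) hf⟩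
  -- the cut-off of an element of the domain has a continuous representative
  have hrep : ∀ f ∈ DomG, ∀ R : ℝ, 0 < R → ∀ φ : ℝ → ℝ, Continuous φ →
      tsupport φ ⊆ Icc (-(2*R)) (2*R) →
      ∃ F : ℝ → X, Continuous F ∧ ∀ᵐ t : ℝ, φ t • f t = φ t • F t := by
    intro f hf R hR φ _ hφs
    obtain ⟨ψ, hψ1, hψ2, hψ3, hψ4, -, -⟩ := hbump (2 * R) (by linarith)
    obtain ⟨c, c', hc, hc', hd⟩ := hprod ψ hψ1 hψ2
    have hsupp : ∀ᵐ t : ℝ, t ∉ Icc (-(2 * (2 * R))) (2 * (2 * R)) → m c f t = 0 := by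
      filter_upwards [hm c f] with t ht hn
      rw [ht, hc, image_eq_zero_of_notMem_tsupport (fun h => hn (hψ3 h)), zero_smul]
    obtain ⟨F, hF, hFe⟩ := ec_rep M ω hM U hU_cont hU_bound p T hT_eq hT_zero hT_sg hT_cont
      (m c f) _ (hd f _ (hGmap f hf)) _ _ (by linarith) hsupp
    refine ⟨F, hF, ?_⟩
    filter_upwards [hFe, hm c f] with t e1 e2
    by_cases ht : t ∈ tsupport φ
    · have ht2 := hφs ht
      rw [← e1 ⟨by linarith [ht2.1], by linarith [ht2.2]⟩, e2, hc, hψ4 t (abs_le.2 ht2), one_smul]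
    · rw [image_eq_zero_of_notMem_tsupport ht, zero_smul, zero_smul]
  have hcut : ∀ f ∈ D, ∀ R : ℝ, 0 < R → ∀ φ : ℝ → ℝ, ContDiff ℝ 1 φ → HasCompactSupport φ →
      tsupport φ ⊆ Icc (-(2*R)) (2*R) → ∀ c : BoundedContinuousFunction ℝ ℝ,
      (∀ t, c t = φ t) → m c f ∈ D ∧ ∃ h : ℝ → X, Continuous h ∧
        tsupport h ⊆ Icc (-(2*R)) (2*R) ∧ ⇑(m c f) =ᵐ[(volume : Measure ℝ)] h := by
    intro f hf R hR φ h1 h2 h3 c hc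
    have hmc : ⇑(m c f) =ᵐ[(volume : Measure ℝ)] fun t => φ t • f t := by
      filter_upwards [hm c f] with t ht
      rw [ht, hc]
    obtain ⟨F, hF, hFe⟩ := hrep f (hD_sub hf) R hR φ h1.continuous h3
    refine ⟨hD_mul f hf φ h1 h2 _ hmc, fun t => φ t • F t, h1.continuous.smul hF,
      (tsupport_smul_subset_left φ F).trans h3, hmc.trans hFe⟩
  refine ⟨?_, ?_⟩
  · intro f hf ε hε
    obtain ⟨d, hd, hdε⟩ := hD_core f hf (ε / 2) (by linarith)
    obtain ⟨R1, hR1⟩ := ec_trunc p hp m hm hm' d (ε / 8) (by linarith)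
    obtain ⟨R2, hR2⟩ := ec_trunc p hp m hm hm' (Gmap d) (ε / 8) (by linarith)
    obtain ⟨R, hRa⟩ : ∃ R, R = max (max R1 R2) (max 1 (8 * C * ‖d‖ / ε)) := ⟨_, rfl⟩
    have hRR1 : R1 ≤ R := hRa ▸ (le_max_left _ _).trans (le_max_left _ _)
    have hRR2 : R2 ≤ R := hRa ▸ (le_max_right _ _).trans (le_max_left _ _)
    have hRR3 : 1 ≤ R := hRa ▸ (le_max_left _ _).trans (le_max_right _ _)
    have hRR4 : 8 * C * ‖d‖ / ε ≤ R := hRa ▸ (le_max_right _ _).trans (le_max_right _ _)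
    have hR : 0 < R := by linarith
    obtain ⟨φ, h1, h2, h3, h4, h5, h6⟩ := hbump R hR
    obtain ⟨c, c', hc, hc', hder⟩ := hprod φ h1 h2
    obtain ⟨hmD, h, hh1, hh2, hh3⟩ := hcut d hd R hR φ h1 h2 h3 c hc
    have hGd := (hG _ _ (hder d _ (hGmap d (hD_sub hd)))).2
    refine ⟨m c d, hmD, ⟨h, hh1, isCompact_Icc.of_isClosed_subset (isClosed_tsupport _) hh2, hh3⟩, ?_⟩
    have b1 := hR1 R hRR1 c (fun t ht => by rw [hc, h4 t ht]) (fun t => by rw [hc]; exact h5 t)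
    have b2 := hR2 R hRR2 c (fun t ht => by rw [hc, h4 t ht]) (fun t => by rw [hc]; exact h5 t)
    have b3 := hm' c' d (C / R) (fun t => by rw [hc', abs_neg]; exact h6 t)
    have b4 : C / R * ‖d‖ ≤ ε / 8 := by
      rw [div_le_iff₀ hε] at hRR4
      rw [div_mul_eq_mul_div, div_le_iff₀ hR]
      linarith
    have t1 : ‖f - m c d‖ ≤ ‖f - d‖ + ‖d - m c d‖ := norm_sub_le_norm_sub_add_norm_sub _ _ _
    have t2 : ‖Gmap f - Gmap (m c d)‖ ≤ ‖Gmap f - Gmap d‖ + ‖Gmap d - m c (Gmap d)‖ + ‖m c' d‖ := by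
      rw [hGd]
      have : Gmap f - (m c' d + m c (Gmap d)) =
        (Gmap f - Gmap d) + (Gmap d - m c (Gmap d)) - m c' d := by abel
      rw [this]
      exact (norm_sub_le _ _).trans (by gcongr; exact norm_add_le _ _)
    linarith
  · intro f hf g hg1 hg2 hfg
    obtain ⟨R0, hR0⟩ := hg2.isCompact.isBounded.subset_closedBall (0:ℝ)
    obtain ⟨R, hRR0, hRR1⟩ : ∃ R, R0 ≤ R ∧ 1 ≤ R := ⟨max R0 1, le_max_left _ _, le_max_right _ _⟩
    have hR : 0 < R := by linarith
    have hgR : ∀ t ∈ tsupport g, |t| ≤ R := fun t ht => by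
      have := hR0 ht
      rw [mem_closedBall_zero_iff, norm_eq_abs] at this
      exact this.trans hRR0
    obtain ⟨φ, h1, h2, h3, h4, h5, h6⟩ := hbump R hR
    obtain ⟨c, c', hc, hc', hder⟩ := hprod φ h1 h2
    have hcf : m c f = f := by
      apply Lp.ext
      filter_upwards [hm c f, hfg] with t e1 e2
      rw [e1, hc, e2]
      by_cases ht : t ∈ tsupport g
      · rw [h4 t (hgR t ht), one_smul]
      · rw [image_eq_zero_of_notMem_tsupport ht, smul_zero]
    refine ⟨-(2 * R), 2 * R, fun t ht => abs_le.1 ((hgR t ht).trans (by linarith)), ?_⟩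
    intro ε hε
    obtain ⟨d, hd, hdε⟩ := hD_core f hf (ε / (1 + C / R)) (by positivity)
    obtain ⟨hmD, h, hh1, hh2, hh3⟩ := hcut d hd R hR φ h1 h2 h3 c hc
    refine ⟨m c d, hmD, h, hh1, hh2, hh3, ?_⟩
    have hGd := (hG _ _ (hder d _ (hGmap d (hD_sub hd)))).2
    have hGf := (hG _ _ (hder f _ (hGmap f hf))).2
    rw [hcf] at hGf
    have e1 : f - m c d = m c (f - d) := by rw [map_sub, hcf]
    have e2 : Gmap f - Gmap (m c d) = m c' (f - d) + m c (Gmap f - Gmap d) := by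
      rw [hGd, map_sub, map_sub, sub_add_sub_comm, ← hGf]
    have hc1 : ∀ t, |c t| ≤ 1 := fun t => by
      rw [hc]; exact abs_le.2 ⟨by linarith [(h5 t).1], (h5 t).2⟩
    have b1 := hm' c (f - d) 1 hc1
    have b2 := hm' c (Gmap f - Gmap d) 1 hc1
    have b3 := hm' c' (f - d) (C / R) (fun t => by rw [hc', abs_neg]; exact h6 t)
    have b4 := norm_add_le (m c' (f - d)) (m c (Gmap f - Gmap d))
    rw [lt_div_iff₀ (by positivity)] at hdε
    have hCR : 0 ≤ C / R * ‖Gmap f - Gmap d‖ := by positivity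
    rw [e1, e2]
    nlinarith
end

section
/- Let A(t), t ∈ I, be a Kato-stable family of generators of strongly continuous semigroups on a Banach space X with constants M, ω, and assume that t ↦ R(ω', A(t)) is strongly continuous on I for some ω' > ω. Then the Yosida approximants A_n(t) = n A(t) R(n, A(t)), for n > ω, form an admissible bounded approximation of A(t): t ↦ A_n(t) is strongly continuous, A_n(t)y → A(t)y as n → ∞ for every y ∈ D(A(t)), ‖A_n(t)y‖ ≤ c(‖A(t)y‖ + ‖y‖) for all y ∈ D(A(t)) and a constant c > 0, and the propagators U_n(t,s) generated by A_n(·) are exponentially bounded with constants independent of n. -/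
open MeasureTheory Set Real Filter
open scoped Topology

theorem yos_cont_apply {X : Type*} [NormedAddCommGroup X] [NormedSpace ℝ X]
    (J : Set ℝ) (R : ℝ → X →L[ℝ] X) (hR : ∀ x, ContinuousOn (fun t => R t x) J)
    (C : ℝ) (hC : ∀ t ∈ J, ‖R t‖ ≤ C) (f : ℝ → X) (hf : ContinuousOn f J) :
    ContinuousOn (fun t => R t (f t)) J := by
  intro t0 ht0
  have h1 : Tendsto (fun t => C * ‖f t - f t0‖ + ‖R t (f t0) - R t0 (f t0)‖) (𝓝[J] t0) (𝓝 0) := by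
    have h2 : Tendsto (fun t => ‖f t - f t0‖) (𝓝[J] t0) (𝓝 0) :=
      tendsto_iff_norm_sub_tendsto_zero.1 (hf t0 ht0)
    have h3 : Tendsto (fun t => ‖R t (f t0) - R t0 (f t0)‖) (𝓝[J] t0) (𝓝 0) :=
      tendsto_iff_norm_sub_tendsto_zero.1 (hR (f t0) t0 ht0)
    simpa using (h2.const_mul C).add h3
  refine tendsto_iff_norm_sub_tendsto_zero.2 ?_
  refine squeeze_zero' (Eventually.of_forall fun _ => norm_nonneg _) ?_ h1
  filter_upwards [self_mem_nhdsWithin] with t ht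
  calc ‖R t (f t) - R t0 (f t0)‖ = ‖R t (f t - f t0) + (R t (f t0) - R t0 (f t0))‖ := by
        rw [map_sub]; congr 1; abel
    _ ≤ ‖R t (f t - f t0)‖ + ‖R t (f t0) - R t0 (f t0)‖ := norm_add_le _ _
    _ ≤ _ := by
        gcongr
        exact (R t).le_of_opNorm_le (hC t ht) _

noncomputable def yosG {X : Type*} [NormedAddCommGroup X] [NormedSpace ℝ X]
    (R : ℝ → X →L[ℝ] X) (a s : ℝ) : ℕ → X → ℝ → X
  | 0, x, _ => x
  | k+1, x, t => ∫ τ in s..t, a • R τ (yosG R a s k x τ)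

set_option linter.unusedSectionVars false

section
variable {X : Type*} [NormedAddCommGroup X] [NormedSpace ℝ X] [CompleteSpace X]
  (R : ℝ → X →L[ℝ] X) (a s T M b : ℝ)

theorem yosG_cont (hR : ∀ x, ContinuousOn (fun t => R t x) (Icc s T))
    (C : ℝ) (hC : ∀ t ∈ Icc s T, ‖R t‖ ≤ C) (hsT : s ≤ T) (k : ℕ) (x : X) :
    ContinuousOn (yosG R a s k x) (Icc s T) := by
  induction k with
  | zero => exact continuousOn_const
  | succ k ih =>
    have h : ContinuousOn (fun τ => a • R τ (yosG R a s k x τ)) (Icc s T) :=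
      (yos_cont_apply _ R hR C hC _ ih).const_smul a
    have h2 : IntervalIntegrable (fun τ => a • R τ (yosG R a s k x τ)) volume s T :=
      ContinuousOn.intervalIntegrable (by rwa [uIcc_of_le hsT])
    have := intervalIntegral.continuousOn_primitive_interval' h2 (left_mem_uIcc)
    rw [uIcc_of_le hsT] at this
    exact this

theorem yosG_int (hR : ∀ x, ContinuousOn (fun t => R t x) (Icc s T))
    (C : ℝ) (hC : ∀ t ∈ Icc s T, ‖R t‖ ≤ C) (k : ℕ) (x : X) (t : ℝ) (ht : t ∈ Icc s T) :
    IntervalIntegrable (fun τ => a • R τ (yosG R a s k x τ)) volume s t := by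
  have h : ContinuousOn (fun τ => a • R τ (yosG R a s k x τ)) (Icc s T) :=
      (yos_cont_apply _ R hR C hC _ (yosG_cont R a s T hR C hC (ht.1.trans ht.2) k x)).const_smul a
  refine ContinuousOn.intervalIntegrable ?_
  rw [uIcc_of_le ht.1]
  exact h.mono (Icc_subset_Icc le_rfl ht.2)

theorem yosG_add (hR : ∀ x, ContinuousOn (fun t => R t x) (Icc s T))
    (C : ℝ) (hC : ∀ t ∈ Icc s T, ‖R t‖ ≤ C) (k : ℕ) (x y : X) (t : ℝ) (ht : t ∈ Icc s T) :
    yosG R a s k (x + y) t = yosG R a s k x t + yosG R a s k y t := by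
  induction k generalizing t with
  | zero => rfl
  | succ k ih =>
    simp only [yosG]
    rw [← intervalIntegral.integral_add (yosG_int R a s T hR C hC k x t ht)
      (yosG_int R a s T hR C hC k y t ht)]
    refine intervalIntegral.integral_congr ?_
    intro τ hτ
    rw [uIcc_of_le ht.1] at hτ
    simp only [ih τ ⟨hτ.1, hτ.2.trans ht.2⟩, map_add, smul_add]

theorem yosG_smul (k : ℕ) (c : ℝ) (x : X) (t : ℝ) :
    yosG R a s k (c • x) t = c • yosG R a s k x t := by
  induction k generalizing t with
  | zero => rfl
  | succ k ih =>
    simp only [yosG]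
    rw [← intervalIntegral.integral_smul]
    refine intervalIntegral.integral_congr ?_
    intro τ hτ
    simp only [ih τ, map_smul, smul_comm a c]

theorem yosG_bound (hR : ∀ x, ContinuousOn (fun t => R t x) (Icc s T))
    (ha : 0 ≤ a) (hb : 0 ≤ b) (hM : 0 ≤ M)
    (hst : ∀ l : List ℝ, l.Pairwise (· ≤ ·) → (∀ i ∈ l, i ∈ Icc s T) →
      ‖((l.map R).reverse).prod‖ ≤ M * b ^ l.length)
    (C : ℝ) (hC : ∀ t ∈ Icc s T, ‖R t‖ ≤ C) (x : X) (k : ℕ) :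
    ∀ t ∈ Icc s T, ∀ l : List ℝ, l.Pairwise (· ≤ ·) → (∀ i ∈ l, i ∈ Icc s T) →
      (∀ i ∈ l, t ≤ i) →
      ‖((l.map R).reverse).prod (yosG R a s k x t)‖ ≤
        M * b ^ l.length * ((a * b * (t - s)) ^ k / k.factorial) * ‖x‖ := by
  induction k with
  | zero =>
    intro t ht l h1 h2 h3
    simpa [yosG] using ContinuousLinearMap.le_of_opNorm_le _ (hst l h1 h2) x
  | succ k ih =>
    intro t ht l h1 h2 h3
    simp only [yosG]
    rw [← ContinuousLinearMap.intervalIntegral_comp_comm _ (yosG_int R a s T hR C hC k x t ht)]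
    have hint : ∫ τ in s..t, (a * (M * b ^ (l.length + 1)) * ‖x‖ * (a * b) ^ k / k.factorial) * (τ - s) ^ k
        = M * b ^ l.length * ((a * b * (t - s)) ^ (k + 1) / (k + 1).factorial) * ‖x‖ := by
      rw [intervalIntegral.integral_const_mul, intervalIntegral.integral_comp_sub_right (fun u => u ^ k),
        integral_pow, Nat.factorial_succ, mul_pow (a * b) (t - s)]
      push_cast
      have : (k.factorial : ℝ) ≠ 0 := by positivity
      have : (k : ℝ) + 1 ≠ 0 := by positivity
      field_simp
      ring
    rw [← hint]
    refine intervalIntegral.norm_integral_le_of_norm_le ht.1 ?_ ?_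
    · refine Eventually.of_forall fun τ hτ => ?_
      have hτ' : τ ∈ Icc s T := ⟨hτ.1.le, hτ.2.trans ht.2⟩
      have := ih τ hτ' (τ :: l) (List.pairwise_cons.2 ⟨fun i hi => hτ.2.trans (h3 i hi), h1⟩)
        (by rintro i hi; rcases List.mem_cons.1 hi with rfl | hi
            · exact hτ'
            · exact h2 i hi)
        (by rintro i hi; rcases List.mem_cons.1 hi with rfl | hi
            · exact le_rfl
            · exact hτ.2.trans (h3 i hi))
      simp only [List.map_cons, List.reverse_cons, List.prod_append, List.prod_singleton,
        List.length_cons] at this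
      rw [map_smul, norm_smul, Real.norm_of_nonneg ha]
      refine (mul_le_mul_of_nonneg_left this ha).trans (le_of_eq ?_)
      rw [mul_pow (a * b) (τ - s)]
      ring
    · exact Continuous.intervalIntegrable (by fun_prop) _ _

/-- the Dyson series -/
theorem yos_dyson (hsT : s ≤ T) (hR : ∀ x, ContinuousOn (fun t => R t x) (Icc s T))
    (ha : 0 ≤ a) (hb : 0 ≤ b) (hM : 0 ≤ M)
    (hst : ∀ l : List ℝ, l.Pairwise (· ≤ ·) → (∀ i ∈ l, i ∈ Icc s T) →
      ‖((l.map R).reverse).prod‖ ≤ M * b ^ l.length) :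
    (∀ x y, ∀ t ∈ Icc s T, ∑' k, yosG R a s k (x + y) t
        = ∑' k, yosG R a s k x t + ∑' k, yosG R a s k y t) ∧
    (∀ x, ∀ t ∈ Icc s T, ‖∑' k, yosG R a s k x t‖ ≤ M * exp (a * b * (t - s)) * ‖x‖) ∧
    (∀ x, ContinuousOn (fun t => ∑' k, yosG R a s k x t) (Icc s T)) ∧
    (∀ x, ∀ t ∈ Icc s T, ∑' k, yosG R a s k x t
        = x + ∫ τ in s..t, a • R τ (∑' k, yosG R a s k x τ)) := by
  have hC : ∀ t ∈ Icc s T, ‖R t‖ ≤ M * b := by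
    intro t ht
    simpa using hst [t] (by simp) (by simpa using ht)
  have hbd : ∀ x, ∀ k, ∀ t ∈ Icc s T, ‖yosG R a s k x t‖ ≤
      M * ((a * b * (t - s)) ^ k / k.factorial) * ‖x‖ := by
    intro x k t ht
    simpa using yosG_bound R a s T M b hR ha hb hM hst _ hC x k t ht [] (by simp) (by simp) (by simp)
  have hsum' : ∀ x : X, ∀ t, HasSum (fun k : ℕ => M * ((a * b * (t - s)) ^ k / k.factorial) * ‖x‖)
      (M * exp (a * b * (t - s)) * ‖x‖) := by
    intro x t
    have := NormedSpace.expSeries_div_hasSum_exp (a * b * (t - s))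
    rw [← Real.exp_eq_exp_ℝ] at this
    exact (this.mul_left M).mul_right _
  have hsum : ∀ x, ∀ t ∈ Icc s T, Summable (fun k => yosG R a s k x t) := fun x t ht =>
    Summable.of_norm_bounded (hsum' x t).summable (fun k => hbd x k t ht)
  have hbd2 : ∀ x, ∀ k, ∀ t ∈ Icc s T, ‖yosG R a s k x t‖ ≤
      M * ((a * b * (T - s)) ^ k / k.factorial) * ‖x‖ := by
    intro x k t ht
    refine (hbd x k t ht).trans ?_
    have : 0 ≤ t - s := sub_nonneg.2 ht.1
    have := ht.2
    gcongr
  refine ⟨?_, ?_, ?_, ?_⟩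
  · intro x y t ht
    rw [← (hsum x t ht).tsum_add (hsum y t ht)]
    exact tsum_congr fun k => yosG_add R a s T hR _ hC k x y t ht
  · intro x t ht
    exact tsum_of_norm_bounded (hsum' x t) (fun k => hbd x k t ht)
  · intro x
    exact continuousOn_tsum (fun k => yosG_cont R a s T hR _ hC hsT k x) (hsum' x T).summable
      (fun k t ht => hbd2 x k t ht)
  · intro x t ht
    rw [(hsum x t ht).tsum_eq_zero_add]
    congr 1
    simp only [yosG]
    refine HasSum.tsum_eq ?_
    have hsub : ∀ τ ∈ Set.uIoc s t, τ ∈ Icc s T := by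
      intro τ hτ
      rw [uIoc_of_le ht.1] at hτ
      exact ⟨hτ.1.le, hτ.2.trans ht.2⟩
    refine intervalIntegral.hasSum_integral_of_dominated_convergence
      (bound := fun k _ => a * (M * b * (M * ((a * b * (T - s)) ^ k / k.factorial) * ‖x‖))) ?_ ?_ ?_ ?_ ?_
    · intro k
      rw [uIoc_of_le ht.1]
      exact (yosG_int R a s T hR _ hC k x t ht).1.aestronglyMeasurable
    · intro k
      refine Eventually.of_forall fun τ hτ => ?_
      rw [norm_smul, Real.norm_of_nonneg ha]
      gcongr
      refine ((R τ).le_of_opNorm_le (hC τ (hsub τ hτ)) _).trans ?_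
      have := hbd2 x k τ (hsub τ hτ)
      gcongr
    · exact Eventually.of_forall fun τ hτ => (((hsum' x T).summable.mul_left (M * b)).mul_left a)
    · exact intervalIntegrable_const
    · refine Eventually.of_forall fun τ hτ => ?_
      exact ((R τ).hasSum (hsum x τ (hsub τ hτ)).hasSum).const_smul a

theorem yos_exp (hR : ∀ x, ContinuousOn (fun t => R t x) (Icc s T))
    (C : ℝ) (hC : ∀ t ∈ Icc s T, ‖R t‖ ≤ C) (n : ℝ) (hsT : s ≤ T)
    (v : ℝ → X) (hv : ContinuousOn v (Icc s T)) (x : X)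
    (h : ∀ t ∈ Icc s T, v t = x + ∫ τ in s..t, a • R τ (v τ)) :
    exp (-n * (T - s)) • v T = x + ∫ τ in s..T,
      (a • R τ - n • (1 : X →L[ℝ] X)) (exp (-n * (τ - s)) • v τ) := by
  have hc : ContinuousOn (fun τ => a • R τ (v τ)) (Icc s T) :=
    (yos_cont_apply _ R hR C hC v hv).const_smul a
  have hcu : ContinuousOn (fun τ => (a • R τ - n • (1 : X →L[ℝ] X)) (exp (-n * (τ - s)) • v τ))
      (Icc s T) := by
    have : ContinuousOn (fun τ => exp (-n * (τ - s)) • v τ) (Icc s T) :=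
      ContinuousOn.smul (by fun_prop) hv
    exact ((yos_cont_apply _ R hR C hC _ this).const_smul a).sub (this.const_smul n)
  have hd : ∀ t ∈ Ioo s T, HasDerivAt (fun t => exp (-n * (t - s)) • v t)
      ((a • R t - n • (1 : X →L[ℝ] X)) (exp (-n * (t - s)) • v t)) t := by
    intro t ht
    have hnt : Icc s T ∈ 𝓝 t := Icc_mem_nhds ht.1 ht.2
    have h1 : HasDerivAt (fun t => x + ∫ τ in s..t, a • R τ (v τ)) (a • R t (v t)) t := by
      refine HasDerivAt.const_add x ?_
      refine intervalIntegral.integral_hasDerivAt_right ?_ ?_ (hc.continuousAt hnt)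
      · refine ContinuousOn.intervalIntegrable ?_
        rw [uIcc_of_le ht.1.le]
        exact hc.mono (Icc_subset_Icc le_rfl ht.2.le)
      · exact ContinuousOn.stronglyMeasurableAtFilter_nhdsWithin hc measurableSet_Icc t |>.filter_mono
          (by rw [nhdsWithin_eq_nhds.2 hnt])
    have h2 : HasDerivAt v (a • R t (v t)) t := by
      refine h1.congr_of_eventuallyEq ?_
      filter_upwards [hnt] with τ hτ using h τ hτ
    have h3 : HasDerivAt (fun t => exp (-n * (t - s))) (exp (-n * (t - s)) * (-n)) t := by
      have : HasDerivAt (fun t => -n * (t - s)) (-n) t := by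
        simpa using ((hasDerivAt_id t).sub_const s).const_mul (-n)
      exact this.exp
    refine (h3.smul h2).congr_deriv ?_
    simp only [_root_.sub_apply, _root_.smul_apply, map_smul,
      one_apply_eq_self]
    module
  have := intervalIntegral.integral_eq_sub_of_hasDerivAt_of_le hsT
    (ContinuousOn.smul (f := fun t => exp (-n * (t - s))) (by fun_prop) hv) hd
    (ContinuousOn.intervalIntegrable (by rwa [uIcc_of_le hsT]))
  rw [this]
  have hs : v s = x := by simpa using h s ⟨le_rfl, hsT⟩
  simp [hs]

end

/-- **Yosida approximants are admissible bounded approximations (Lemma 2.13(i)).**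
Let `A(t)`, `t ∈ I`, be a Kato-stable family of generators with constants
`M, ω` (expressed through their resolvents `Res λ t = R(λ, A(t))`), and
suppose `t ↦ R(ω', A(t))` is strongly continuous for some `ω' > ω`. Then the
Yosida approximants `A_n(t) = n A(t) R(n, A(t)) = n² R(n,A(t)) − n` (`n > ω`)
form an admissible bounded approximation of `A(t)`: they are strongly
continuous in `t`, converge to `A(t)` on `D(A(t))`, obey the relative bound
`‖A_n(t)y‖ ≤ c(‖A(t)y‖ + ‖y‖)`, and the propagators they generate are
exponentially bounded with constants independent of `n`. -/
theorem yosida_admissible_approximation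
    {X : Type*} [NormedAddCommGroup X] [NormedSpace ℝ X] [CompleteSpace X]
    (I : Set ℝ) (hI : I.OrdConnected)
    -- the family `A(t)` with domains `Dom t`
    (Dom : ℝ → Set X) (Aop : ℝ → X → X)
    (hdense : ∀ t ∈ I, Dense (Dom t))
    -- resolvents `Res λ t = R(λ, A(t))` for `λ > ω`
    (M ω : ℝ) (hM : 1 ≤ M)
    (Res : ℝ → ℝ → X →L[ℝ] X)
    (hRes_mem : ∀ t ∈ I, ∀ lam : ℝ, ω < lam → ∀ x : X,
      Res lam t x ∈ Dom t ∧ lam • Res lam t x - Aop t (Res lam t x) = x)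
    (hRes_inv : ∀ t ∈ I, ∀ lam : ℝ, ω < lam → ∀ y ∈ Dom t,
      Res lam t (lam • y - Aop t y) = y)
    -- Kato stability with constants `M, ω`
    (hstable : ∀ (k : ℕ) (ts : Fin k → ℝ), (∀ i, ts i ∈ I) → Monotone ts →
      ∀ lam : ℝ, ω < lam →
        ‖((List.ofFn fun i => Res lam (ts i)).reverse).prod‖
          ≤ M * ((lam - ω) ^ k)⁻¹)
    -- strong continuity of `t ↦ R(ω', A(t))`
    (ω' : ℝ) (hω' : ω < ω')
    (hRes_cont : ∀ x : X, ContinuousOn (fun t => Res ω' t x) I) :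
    -- (i) strong continuity of `t ↦ A_n(t)`
    (∀ n : ℕ, ω < (n : ℝ) → ∀ x : X, ContinuousOn
      (fun t => ((n : ℝ) ^ 2 • Res (n : ℝ) t - (n : ℝ) • (1 : X →L[ℝ] X)) x) I) ∧
    -- (ii) convergence `A_n(t) y → A(t) y` for `y ∈ D(A(t))`
    (∀ t ∈ I, ∀ y ∈ Dom t, Tendsto
      (fun n : ℕ => ((n : ℝ) ^ 2 • Res (n : ℝ) t - (n : ℝ) • (1 : X →L[ℝ] X)) y)
      atTop (𝓝 (Aop t y))) ∧
    -- (iii) the relative bound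
    (∃ c : ℝ, 0 < c ∧ ∀ n : ℕ, ω < (n : ℝ) → ∀ t ∈ I, ∀ y ∈ Dom t,
      ‖((n : ℝ) ^ 2 • Res (n : ℝ) t - (n : ℝ) • (1 : X →L[ℝ] X)) y‖
        ≤ c * (‖Aop t y‖ + ‖y‖)) ∧
    -- (iv) the generated propagators are exponentially bounded,
    --      uniformly in `n`
    (∃ M' ω'' : ℝ, 1 ≤ M' ∧ ∀ n : ℕ, ω < (n : ℝ) →
      ∃ Un : ℝ → ℝ → X →L[ℝ] X,
        (∀ s ∈ I, ∀ t ∈ I, s ≤ t → ∀ x : X,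
          Un t s x = x + ∫ τ in s..t,
            ((n : ℝ) ^ 2 • Res (n : ℝ) τ - (n : ℝ) • (1 : X →L[ℝ] X))
              (Un τ s x)) ∧
        (∀ s ∈ I, ∀ t ∈ I, s ≤ t → ‖Un t s‖ ≤ M' * exp (ω'' * (t - s)))) := by
  -- basic bounds
  have hlist : ∀ lam : ℝ, ω < lam → ∀ l : List ℝ, l.Pairwise (· ≤ ·) → (∀ i ∈ l, i ∈ I) →
      ‖((l.map (Res lam)).reverse).prod‖ ≤ M * ((lam - ω)⁻¹) ^ l.length := by
    intro lam hlam l h1 h2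
    have := hstable l.length l.get (fun i => h2 _ (List.get_mem _ _))
      (List.sortedLE_iff_monotone_get.1 h1.sortedLE) lam hlam
    rw [inv_pow]
    convert this using 4
    conv_lhs => rw [← List.ofFn_get l, List.map_ofFn]
    rfl
  have hnorm : ∀ lam : ℝ, ω < lam → ∀ t ∈ I, ‖Res lam t‖ ≤ M * (lam - ω)⁻¹ := by
    intro lam hlam t ht
    simpa using hlist lam hlam [t] (by simp) (by simpa using ht)
  have hM0 : 0 ≤ M := zero_le_one.trans hM
  -- key identity
  have hkey : ∀ lam : ℝ, ω < lam → ∀ t ∈ I, ∀ y ∈ Dom t,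
      lam • Res lam t y = y + Res lam t (Aop t y) := by
    intro lam hlam t ht y hy
    have := hRes_inv t ht lam hlam y hy
    rw [map_sub, map_smul] at this
    rw [← sub_eq_iff_eq_add]; exact this
  have hAn : ∀ n : ℕ, ω < (n : ℝ) → ∀ t ∈ I, ∀ y ∈ Dom t,
      ((n : ℝ) ^ 2 • Res (n : ℝ) t - (n : ℝ) • (1 : X →L[ℝ] X)) y
        = (n : ℝ) • Res (n : ℝ) t (Aop t y) := by
    intro n hn t ht y hy
    simp only [_root_.sub_apply, _root_.smul_apply, one_apply_eq_self]
    rw [pow_two, mul_smul, hkey n hn t ht y hy]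
    module
  -- resolvent identity
  have hresid : ∀ lam : ℝ, ω < lam → ∀ mu : ℝ, ω < mu → ∀ t ∈ I, ∀ x : X,
      Res lam t x - Res mu t x = (mu - lam) • Res lam t (Res mu t x) := by
    intro lam hlam mu hmu t ht x
    obtain ⟨h1, h2⟩ := hRes_mem t ht mu hmu x
    have h3 := hkey lam hlam t ht _ h1
    have h4 : Res lam t x = mu • Res lam t (Res mu t x) - Res lam t (Aop t (Res mu t x)) := by
      rw [← map_smul, ← map_sub, h2]
    rw [h4, sub_smul, h3]
    abel
  -- uniform bound of `n / (n - ω)`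
  obtain ⟨K, hK1, hK⟩ : ∃ K : ℝ, 0 < K ∧ ∀ n : ℕ, ω < (n : ℝ) → (n : ℝ) * ((n : ℝ) - ω)⁻¹ ≤ K := by
    have hδ : 0 < (⌊ω⌋ : ℝ) + 1 - ω := by linarith [Int.lt_floor_add_one ω]
    refine ⟨1 + |ω| / ((⌊ω⌋ : ℝ) + 1 - ω), by positivity, ?_⟩
    intro n hn
    have h1 : (⌊ω⌋ : ℝ) + 1 ≤ n := by
      have : ⌊ω⌋ < (n : ℤ) := Int.floor_lt.2 (by exact_mod_cast hn)
      exact_mod_cast this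
    have h2 : 0 < (n : ℝ) - ω := sub_pos.2 hn
    have h3 : (n : ℝ) * ((n : ℝ) - ω)⁻¹ = 1 + ω / (n - ω) := by field_simp; ring
    rw [h3]
    gcongr
    exact le_abs_self ω
  have hcont : ∀ lam : ℝ, ω < lam → ∀ x : X, ContinuousOn (fun t => Res lam t x) I := by
    intro lam hlam x s hs
    set k := ω' - lam with hk
    set z := x + k • Res lam s x with hz
    set C := 1 + |k| * (M * (lam - ω)⁻¹) with hC
    have hform : ∀ t ∈ I, Res lam t x - Res lam s x =
        (Res ω' t z - Res ω' s z) + k • Res lam t (Res ω' t z - Res ω' s z) := by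
      intro t ht
      have e1 := hresid lam hlam ω' hω' t ht z
      have e2 : Res ω' s z = Res lam s x := by
        have := hresid ω' hω' lam hlam s hs x
        rw [hz, map_add, map_smul, ← sub_eq_zero]
        have h5 : k • Res ω' s (Res lam s x) = -(Res ω' s x - Res lam s x) := by
          rw [this, hk]; module
        rw [h5]; abel
      rw [← hk] at e1
      have e3 : Res lam t z = Res lam t x + k • Res lam t (Res lam s x) := by
        rw [hz, map_add, map_smul]
      rw [map_sub, smul_sub, ← e1, e2, e3]
      abel
    refine tendsto_iff_norm_sub_tendsto_zero.2 ?_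
    have h1 : Tendsto (fun t => C * ‖Res ω' t z - Res ω' s z‖) (𝓝[I] s) (𝓝 0) := by
      simpa using (tendsto_iff_norm_sub_tendsto_zero.1 (hRes_cont z s hs)).const_mul C
    refine squeeze_zero' (Eventually.of_forall fun _ => norm_nonneg _) ?_ h1
    filter_upwards [self_mem_nhdsWithin] with t ht
    rw [hform t ht, hC, add_mul, one_mul]
    refine (norm_add_le _ _).trans ?_
    gcongr
    rw [norm_smul, Real.norm_eq_abs, mul_assoc]
    gcongr
    exact (Res lam t).le_of_opNorm_le (hnorm lam hlam t ht) _
  refine ⟨?_, ?_, ?_, ?_⟩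
  · intro n hn x
    exact ((hcont n hn x).const_smul ((n : ℝ) ^ 2)).sub continuousOn_const
  · intro t ht y hy
    have hev : ∀ᶠ n : ℕ in atTop, ω < (n : ℝ) :=
      tendsto_natCast_atTop_atTop.eventually (eventually_gt_atTop ω)
    have hlim0 : Tendsto (fun n : ℕ => M * ((n : ℝ) - ω)⁻¹) atTop (𝓝 0) := by
      have : Tendsto (fun n : ℕ => ((n : ℝ) - ω)) atTop atTop :=
        tendsto_atTop_add_const_right _ (-ω) tendsto_natCast_atTop_atTop
      simpa using this.inv_tendsto_atTop.const_mul M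
    have hdom : ∀ z ∈ Dom t, Tendsto (fun n : ℕ => (n : ℝ) • Res (n : ℝ) t z) atTop (𝓝 z) := by
      intro z hz
      refine tendsto_iff_norm_sub_tendsto_zero.2 ?_
      have h1 : Tendsto (fun n : ℕ => M * ((n : ℝ) - ω)⁻¹ * ‖Aop t z‖) atTop (𝓝 0) := by
        simpa using hlim0.mul_const ‖Aop t z‖
      refine squeeze_zero' (Eventually.of_forall fun _ => norm_nonneg _) ?_ h1
      filter_upwards [hev] with n hn
      rw [hkey n hn t ht z hz, add_sub_cancel_left]
      exact (Res n t).le_of_opNorm_le (hnorm n hn t ht) _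
    have hall : ∀ w : X, Tendsto (fun n : ℕ => (n : ℝ) • Res (n : ℝ) t w) atTop (𝓝 w) := by
      intro w
      rw [Metric.tendsto_atTop']
      intro ε hε
      obtain ⟨z, hz, hzw⟩ := (hdense t ht).exists_dist_lt w
        (show 0 < ε / (2 * (M * K + 1)) by positivity)
      have h1 := (Metric.tendsto_atTop.1 (hdom z hz)) (ε / 2) (by positivity)
      have h2 : ∀ᶠ n : ℕ in atTop, dist ((n : ℝ) • Res (n : ℝ) t z) z < ε / 2 :=
        eventually_atTop.2 h1
      obtain ⟨N, hN⟩ := eventually_atTop.1 (h2.and hev)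
      refine ⟨N, fun n hn => ?_⟩
      obtain ⟨h3, h4⟩ := hN n hn.le
      rw [dist_eq_norm] at h3 hzw ⊢
      have h5 : ‖(n : ℝ) • Res (n : ℝ) t (w - z)‖ ≤ M * K * ‖w - z‖ := by
        rw [norm_smul, Real.norm_natCast]
        calc (n : ℝ) * ‖Res (n : ℝ) t (w - z)‖
            ≤ n * (M * ((n : ℝ) - ω)⁻¹ * ‖w - z‖) := by
              gcongr; exact (Res n t).le_of_opNorm_le (hnorm n h4 t ht) _
          _ = M * (n * ((n : ℝ) - ω)⁻¹) * ‖w - z‖ := by ring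
          _ ≤ _ := by gcongr; exact hK n h4
      have h6 : (n : ℝ) • Res (n : ℝ) t w - w =
          (n : ℝ) • Res (n : ℝ) t (w - z) + ((n : ℝ) • Res (n : ℝ) t z - z) - (w - z) := by
        rw [map_sub, smul_sub]; abel
      rw [lt_div_iff₀ (by positivity)] at hzw
      rw [h6]
      have h7 := norm_sub_le ((n : ℝ) • Res (n : ℝ) t (w - z) + ((n : ℝ) • Res (n : ℝ) t z - z)) (w - z)
      have h8 := norm_add_le ((n : ℝ) • Res (n : ℝ) t (w - z)) ((n : ℝ) • Res (n : ℝ) t z - z)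
      nlinarith
    refine (hall (Aop t y)).congr' ?_
    filter_upwards [hev] with n hn
    exact (hAn n hn t ht y hy).symm
  · refine ⟨M * K, by positivity, ?_⟩
    intro n hn t ht y hy
    rw [hAn n hn t ht y hy, norm_smul, Real.norm_natCast]
    calc (n : ℝ) * ‖Res (n : ℝ) t (Aop t y)‖
        ≤ n * (M * ((n : ℝ) - ω)⁻¹ * ‖Aop t y‖) := by
          gcongr; exact (Res n t).le_of_opNorm_le (hnorm n hn t ht) _
      _ = M * (n * ((n : ℝ) - ω)⁻¹) * ‖Aop t y‖ := by ring
      _ ≤ M * K * ‖Aop t y‖ := by gcongr; exact hK n hn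
      _ ≤ _ := by gcongr; linarith [norm_nonneg y]
  · refine ⟨M, |ω| * K, hM, ?_⟩
    intro n hn
    have hpos : 0 < (n : ℝ) - ω := sub_pos.2 hn
    have hD := fun (s : ℝ) (hs : s ∈ I) (t : ℝ) (ht : t ∈ I) (hst : s ≤ t) =>
      yos_dyson (Res n) ((n : ℝ) ^ 2) s t M ((n : ℝ) - ω)⁻¹ hst
        (fun x => (hcont n hn x).mono (hI.out hs ht)) (by positivity) (by positivity) hM0
        (fun l h1 h2 => hlist n hn l h1 (fun i hi => hI.out hs ht (h2 i hi)))
    set u : ℝ → ℝ → X → X := fun t s x =>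
      exp (-(n : ℝ) * (t - s)) • ∑' k, yosG (Res n) ((n : ℝ) ^ 2) s k x t with hu
    have hub : ∀ s ∈ I, ∀ t ∈ I, s ≤ t → ∀ x,
        ‖u t s x‖ ≤ M * exp (|ω| * K * (t - s)) * ‖x‖ := by
      intro s hs t ht hst x
      have h1 := (hD s hs t ht hst).2.1 x t ⟨hst, le_rfl⟩
      have hts : 0 ≤ t - s := sub_nonneg.2 hst
      rw [hu]
      simp only
      rw [norm_smul, Real.norm_of_nonneg (exp_pos _).le]
      calc _ ≤ exp (-(n : ℝ) * (t - s)) *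
            (M * exp ((n : ℝ) ^ 2 * ((n : ℝ) - ω)⁻¹ * (t - s)) * ‖x‖) := by gcongr
        _ = M * exp (ω * (n * ((n : ℝ) - ω)⁻¹) * (t - s)) * ‖x‖ := by
            have : ω * (n * ((n : ℝ) - ω)⁻¹) * (t - s) =
              -(n : ℝ) * (t - s) + (n : ℝ) ^ 2 * ((n : ℝ) - ω)⁻¹ * (t - s) := by
              field_simp; ring
            rw [this, exp_add]; ring
        _ ≤ _ := by
            gcongr
            · exact le_abs_self ω
            · exact hK n hn
    have hlin : ∀ s ∈ I, ∀ t ∈ I, s ≤ t → ∃ L : X →L[ℝ] X, ∀ x, L x = u t s x := by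
      intro s hs t ht hst
      refine ⟨LinearMap.mkContinuous
        { toFun := u t s, map_add' := ?_, map_smul' := ?_ } _ (hub s hs t ht hst), fun x => rfl⟩
      · intro x y
        simp only [hu]
        rw [(hD s hs t ht hst).1 x y t ⟨hst, le_rfl⟩, smul_add]
      · intro c x
        simp only [hu, yosG_smul, RingHom.id_apply]
        rw [tsum_const_smul'', smul_comm]
    classical
    refine ⟨fun t s => if h : ∃ L : X →L[ℝ] X, ∀ x, L x = u t s x then h.choose else 0, ?_, ?_⟩
    · have hval : ∀ s ∈ I, ∀ t ∈ I, s ≤ t → ∀ x,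
          (if h : ∃ L : X →L[ℝ] X, ∀ x, L x = u t s x then h.choose else 0) x = u t s x := by
        intro s hs t ht hst x
        rw [dif_pos (hlin s hs t ht hst)]
        exact (hlin s hs t ht hst).choose_spec x
      intro s hs t ht hst x
      obtain ⟨-, -, h3, h4⟩ := hD s hs t ht hst
      have := yos_exp (Res n) ((n : ℝ) ^ 2) s t (fun x => (hcont n hn x).mono (hI.out hs ht))
        _ (fun τ hτ => hnorm n hn τ (hI.out hs ht hτ)) n hst _ (h3 x) x (h4 x)
      rw [hval s hs t ht hst]
      refine this.trans ?_
      congr 1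
      refine intervalIntegral.integral_congr ?_
      intro τ hτ
      rw [uIcc_of_le hst] at hτ
      simp only
      rw [hval s hs τ (hI.out hs ht hτ) hτ.1]
    · intro s hs t ht hst
      simp only
      rw [dif_pos (hlin s hs t ht hst)]
      refine ContinuousLinearMap.opNorm_le_bound _ (by positivity) fun x => ?_
      rw [(hlin s hs t ht hst).choose_spec x]
      exact hub s hs t ht hst x
end

section
/- Let X be a Banach space and I ⊆ ℝ an open interval. Let A(t) be maximally dissipative with 0 ∈ ρ(A(t)) for every t ∈ I, and assume: (i) the operators A(t), t ∈ I, have a common domain of definition D(A(t)) = D; (ii) for each x ∈ X, (t,s) ↦ (t−s)^{-1}(A(t)A(s)^{-1} − 1)x is uniformly strongly continuous for t ≠ s in any fixed compact subinterval of I; (iii) the limit lim_{s→t} (t−s)^{-1}(A(t)A(s)^{-1} − 1)x exists uniformly for t in every fixed compact subinterval, and the limit is bounded and continuous in t. Then there exists a strongly continuous, bounded propagator U(t,s) on D_I such that for every x ∈ D, t ↦ U(t,s)x is a classical solution of the nonautonomous Cauchy problem u'(t) = A(t)u(t), u(s) = x. -/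
open MeasureTheory Set Real Filter
open scoped Topology

namespace KatoAux

/-- product of bounded strongly continuous family with continuous vector function. -/
lemma sc_apply {α E F : Type*} [TopologicalSpace α] [NormedAddCommGroup E] [NormedSpace ℝ E]
    [NormedAddCommGroup F] [NormedSpace ℝ F]
    {f : α → E →L[ℝ] F} {M : ℝ} (hb : ∀ a, ‖f a‖ ≤ M) (hc : ∀ x, Continuous fun a => f a x)
    {g : α → E} (hg : Continuous g) : Continuous fun a => f a (g a) := by
  rw [continuous_iff_continuousAt]
  intro a
  have h1 : Tendsto (fun b => f b (g b - g a)) (𝓝 a) (𝓝 0) := by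
    have h2 : Tendsto (fun b => M * ‖g b - g a‖) (𝓝 a) (𝓝 0) := by
      have : Continuous fun b => M * ‖g b - g a‖ := by fun_prop
      simpa using this.tendsto a
    refine squeeze_zero_norm (fun b => ?_) h2
    exact (f b).le_of_opNorm_le (hb b) _
  have h3 := h1.add ((hc (g a)).tendsto a)
  simp only [map_sub, sub_add_cancel, zero_add] at h3
  exact h3

lemma gronwall_int {K s d : ℝ} (hK : 0 ≤ K) {e δ : ℝ → ℝ} (he : Continuous e) (hδ : Continuous δ)
    (hδ0 : ∀ t, 0 ≤ δ t)
    (h : ∀ t ∈ Icc s d, e t ≤ δ t + K * ∫ r in s..t, e r) :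
    ∀ t ∈ Icc s d, ∫ r in s..t, e r ≤ exp (K * (t - s)) * ∫ r in s..t, δ r := by
  set F : ℝ → ℝ := fun t => ∫ r in s..t, e r with hF
  have hFd : ∀ t, HasDerivAt F (e t) t := fun t => (he.integral_hasStrictDerivAt s t).hasDerivAt
  have hDd : ∀ t, HasDerivAt (fun t => ∫ r in s..t, δ r) (δ t) t :=
    fun t => (hδ.integral_hasStrictDerivAt s t).hasDerivAt
  set G : ℝ → ℝ := fun t => F t * exp (-(K * (t - s))) - ∫ r in s..t, δ r with hG
  have hGd : ∀ t, HasDerivAt G (e t * exp (-(K * (t - s))) +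
      F t * (exp (-(K * (t - s))) * (-(K * 1))) - δ t) t := by
    intro t
    refine ((hFd t).mul ?_).sub (hDd t)
    exact ((((hasDerivAt_id t).sub_const s).const_mul K).neg).exp
  have hanti : AntitoneOn G (Icc s d) := by
    refine antitoneOn_of_deriv_nonpos (convex_Icc s d)
      (fun t _ => (hGd t).continuousAt.continuousWithinAt)
      (fun t _ => (hGd t).differentiableAt.differentiableWithinAt) ?_
    intro t ht
    rw [interior_Icc] at ht
    rw [(hGd t).deriv]
    have h1 := h t (Ioo_subset_Icc_self ht)
    have hpos := exp_pos (-(K * (t - s)))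
    have h2 : exp (-(K * (t - s))) ≤ 1 := by
      rw [exp_le_one_iff]
      nlinarith [ht.1]
    have h3 : (e t - K * F t) * exp (-(K * (t - s))) ≤ δ t * exp (-(K * (t - s))) :=
      mul_le_mul_of_nonneg_right (by simp only [hF]; linarith) hpos.le
    have h4 : δ t * exp (-(K * (t - s))) ≤ δ t * 1 := mul_le_mul_of_nonneg_left h2 (hδ0 t)
    nlinarith
  intro t ht
  have h5 := hanti (left_mem_Icc.2 (ht.1.trans ht.2)) ht ht.1
  simp only [hG, hF, intervalIntegral.integral_same, zero_mul, sub_zero] at h5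
  have h6 : (∫ r in s..t, e r) * exp (-(K * (t - s))) ≤ ∫ r in s..t, δ r := by linarith
  have h7 := mul_le_mul_of_nonneg_left h6 (exp_pos (K * (t - s))).le
  rw [mul_comm (∫ r in s..t, e r), ← mul_assoc, ← exp_add] at h7
  simpa using h7

lemma gronwall_const {K s d C : ℝ} (hK : 0 ≤ K) (hC : 0 ≤ C) {e : ℝ → ℝ} (he : Continuous e)
    (h : ∀ t ∈ Icc s d, e t ≤ C + K * ∫ r in s..t, e r) :
    ∀ t ∈ Icc s d, e t ≤ (1 + K * (exp (K * (t - s)) * (t - s))) * C := by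
  intro t ht
  have h1 := gronwall_int hK he (continuous_const (y := C)) (fun _ => hC) h t ht
  have h2 := h t ht
  simp only [intervalIntegral.integral_const, smul_eq_mul] at h1
  have := mul_le_mul_of_nonneg_left h1 hK
  nlinarith

lemma gronwall_tendsto {K s d M : ℝ} (hK : 0 ≤ K) {e : ℕ → ℝ → ℝ} (he : ∀ n, Continuous (e n))
    (he0 : ∀ n t, 0 ≤ e n t) (heM : ∀ n, ∀ t ∈ Icc s d, e n t ≤ M)
    (h : ∀ t ∈ Icc s d, ∀ ε > 0, ∀ᶠ n in atTop, e n t ≤ ε + K * ∫ r in s..t, e n r) :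
    ∀ t ∈ Icc s d, Tendsto (fun n => e n t) atTop (𝓝 0) := by
  intro t ht
  set δ : ℕ → ℝ → ℝ := fun n t => max (e n t - K * ∫ r in s..t, e n r) 0 with hδ
  have hIc : ∀ n, Continuous fun t => ∫ r in s..t, e n r := fun n =>
    continuous_iff_continuousAt.2
      fun t => ((he n).integral_hasStrictDerivAt s t).hasDerivAt.continuousAt
  have hδc : ∀ n, Continuous (δ n) := fun n =>
    ((he n).sub (continuous_const.mul (hIc n))).max continuous_const
  have hδ0 : ∀ n t, 0 ≤ δ n t := fun n t => le_max_right _ _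
  have hδlim : ∀ r ∈ Icc s d, Tendsto (fun n => δ n r) atTop (𝓝 0) := by
    intro r hr
    rw [Metric.tendsto_atTop']
    intro ε hε
    obtain ⟨N, hN⟩ := eventually_atTop.1 (h r hr (ε / 2) (by positivity))
    refine ⟨N, fun n hn => ?_⟩
    rw [Real.dist_eq, sub_zero, abs_of_nonneg (hδ0 n r)]
    have := hN n hn.le
    exact max_lt (by linarith) hε
  have hint0 : ∀ n, ∀ r ∈ Icc s d, 0 ≤ ∫ q in s..r, e n q := fun n r hr =>
    intervalIntegral.integral_nonneg hr.1 (fun q _ => he0 n q)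
  have hδM : ∀ n, ∀ r ∈ Icc s d, δ n r ≤ M := by
    intro n r hr
    refine max_le ?_ ((he0 n r).trans (heM n r hr))
    have := mul_nonneg hK (hint0 n r hr)
    linarith [heM n r hr]
  have hlim : Tendsto (fun n => ∫ r in s..t, δ n r) atTop (𝓝 (∫ r in s..t, (0:ℝ))) := by
    refine intervalIntegral.tendsto_integral_filter_of_dominated_convergence (fun _ => M)
      (Eventually.of_forall fun n => (hδc n).aestronglyMeasurable)
      (Eventually.of_forall fun n => Eventually.of_forall fun r hr => ?_)
      (continuous_const.intervalIntegrable _ _)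
      (Eventually.of_forall fun r hr => ?_)
    · rw [uIoc_of_le ht.1] at hr
      rw [Real.norm_of_nonneg (hδ0 n r)]
      exact hδM n r ⟨hr.1.le, hr.2.trans ht.2⟩
    · rw [uIoc_of_le ht.1] at hr
      exact hδlim r ⟨hr.1.le, hr.2.trans ht.2⟩
  simp only [intervalIntegral.integral_zero] at hlim
  have hb : ∀ n, e n t ≤ δ n t + K * (exp (K * (t - s)) * ∫ r in s..t, δ n r) := by
    intro n
    have hle : ∀ r, e n r ≤ δ n r + K * ∫ q in s..r, e n q := by
      intro r
      have := le_max_left (e n r - K * ∫ q in s..r, e n q) 0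
      simp only [hδ]; linarith
    have h1 := gronwall_int hK (he n) (hδc n) (hδ0 n) (fun r (_ : r ∈ Icc s d) => hle r) t ht
    have := mul_le_mul_of_nonneg_left h1 hK
    linarith [hle t]
  refine squeeze_zero (fun n => he0 n t) hb ?_
  have := (hδlim t ht).add ((hlim.const_mul (exp (K * (t - s)))).const_mul K)
  simpa using this

/-- Volterra equation -/
lemma volterra {E : Type*} [NormedAddCommGroup E] [NormedSpace ℝ E] [CompleteSpace E]
    {s d K : ℝ} (hsd : s ≤ d) (k : ℝ → ℝ → E →L[ℝ] E) (hkb : ∀ t r, ‖k t r‖ ≤ K)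
    (hkc : ∀ x, Continuous fun q : ℝ × ℝ => k q.1 q.2 x) {g : ℝ → E} (hg : Continuous g) :
    ∃ v : ℝ → E, Continuous v ∧ ∀ t ∈ Icc s d, v t = g t + ∫ r in s..t, k t r (v r) := by
  have hK : 0 ≤ K := (norm_nonneg _).trans (hkb 0 0)
  set M : ℝ := 2 * (K + 1) with hM
  have hM0 : 0 < M := by positivity
  set H : (ℝ → E) → ℝ → E := fun f t =>
    exp (-(M * (t - s))) • g t + ∫ r in s..t, exp (-(M * (t - r))) • k t r (f r) with hH
  have hint : ∀ f : ℝ → E, Continuous f →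
      Continuous fun q : ℝ × ℝ => exp (-(M * (q.1 - q.2))) • k q.1 q.2 (f q.2) := by
    intro f hf
    refine Continuous.smul (by fun_prop) ?_
    exact sc_apply (f := fun q : ℝ × ℝ => k q.1 q.2) (fun q => hkb _ _) hkc
      (g := fun q : ℝ × ℝ => f q.2) (by fun_prop)
  have hHc : ∀ f : ℝ → E, Continuous f → Continuous (H f) := by
    intro f hf
    refine Continuous.add (Continuous.smul (by fun_prop) hg) ?_
    exact intervalIntegral.continuous_parametric_intervalIntegral_of_continuous
      (f := fun t r => exp (-(M * (t - r))) • k t r (f r)) (hint f hf) continuous_id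
  have hext : ∀ f : C(Icc s d, E), Continuous (IccExtend hsd f) := fun f =>
    f.continuous.Icc_extend'
  set Φ : C(Icc s d, E) → C(Icc s d, E) := fun f =>
    ⟨fun t => H (IccExtend hsd f) t, (hHc _ (hext f)).comp continuous_subtype_val⟩ with hΦ
  have hcontr : ContractingWith (1 / 2) Φ := by
    refine ⟨by rw [← NNReal.coe_lt_coe]; norm_num, LipschitzWith.of_dist_le_mul fun f₁ f₂ => ?_⟩
    rw [ContinuousMap.dist_le (by positivity)]
    rintro ⟨t, ht⟩
    simp only [hΦ, ContinuousMap.coe_mk, hH, dist_eq_norm, add_sub_add_left_eq_sub]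
    have hi : ∀ f : C(Icc s d, E), IntervalIntegrable
        (fun r => exp (-(M * (t - r))) • k t r (IccExtend hsd f r)) volume s t := fun f =>
      ((hint _ (hext f)).comp (by fun_prop : Continuous fun r : ℝ => (t, r))).intervalIntegrable _ _
    rw [← intervalIntegral.integral_sub (hi f₁) (hi f₂)]
    have hb : ∀ r ∈ Ioc s t, ‖exp (-(M * (t - r))) • k t r (IccExtend hsd f₁ r) -
        exp (-(M * (t - r))) • k t r (IccExtend hsd f₂ r)‖ ≤
        exp (-(M * (t - r))) * (K * ‖f₁ - f₂‖) := by
      intro r _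
      rw [← smul_sub, ← map_sub, norm_smul, Real.norm_of_nonneg (exp_pos _).le]
      refine mul_le_mul_of_nonneg_left ?_ (exp_pos _).le
      refine (ContinuousLinearMap.le_of_opNorm_le _ (hkb t r) _).trans ?_
      refine mul_le_mul_of_nonneg_left ?_ hK
      exact (f₁ - f₂).norm_coe_le_norm (projIcc s d hsd r)
    have hd : ∀ r, HasDerivAt (fun r => exp (-(M * (t - r))) / M) (exp (-(M * (t - r)))) r := by
      intro r
      have := ((((hasDerivAt_id r).const_sub t).const_mul M).neg.exp).div_const M
      refine this.congr_deriv ?_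
      change exp (-(M * (t - r))) * -(M * -1) / M = _
      field_simp
    have hc1 : Continuous fun r => exp (-(M * (t - r))) := by fun_prop
    refine (intervalIntegral.norm_integral_le_of_norm_le ht.1
      (Eventually.of_forall hb) ?_).trans ?_
    · exact (hc1.mul continuous_const).intervalIntegrable _ _
    · rw [intervalIntegral.integral_mul_const,
        intervalIntegral.integral_eq_sub_of_hasDerivAt (fun r _ => hd r)
          (hc1.intervalIntegrable _ _)]
      have h1 : exp (-(M * (t - t))) / M - exp (-(M * (t - s))) / M ≤ 1 / M := by
        have := div_pos (exp_pos (-(M * (t - s)))) hM0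
        simp only [sub_self, mul_zero, neg_zero, exp_zero]; linarith
      have h2 : 0 ≤ K * ‖f₁ - f₂‖ := by positivity
      refine (mul_le_mul_of_nonneg_right h1 h2).trans ?_
      rw [← mul_assoc]
      refine mul_le_mul_of_nonneg_right ?_ (norm_nonneg _)
      rw [div_mul_eq_mul_div, one_mul, div_le_iff₀ hM0, hM]
      push_cast; linarith
  set f := ContractingWith.fixedPoint Φ hcontr with hf
  have hfix : Φ f = f := hcontr.fixedPoint_isFixedPt
  refine ⟨fun t => exp (M * (t - s)) • IccExtend hsd f t,
    Continuous.smul (by fun_prop) (hext f), fun t ht => ?_⟩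
  have h1 : IccExtend hsd f t = H (IccExtend hsd f) t := by
    rw [IccExtend_of_mem hsd f ht]
    conv_lhs => rw [← hfix]
    rfl
  beta_reduce
  rw [h1]
  simp only [hH, smul_add, ← intervalIntegral.integral_smul, smul_smul, ← exp_add, map_smul]
  congr 1
  · simp
  · congr 1; ext r; congr 2; ring

/-- contraction property -/
lemma contr {X : Type*} [NormedAddCommGroup X] [NormedSpace ℝ X] {N s t : ℝ} (hN : 0 ≤ N)
    (hst : s ≤ t) {J : ℝ → X →L[ℝ] X} (hJ : ∀ r, ‖J r‖ ≤ 1) {u : ℝ → X}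
    (hu : ∀ r ∈ Icc s t, HasDerivAt u (N • (J r (u r) - u r)) r) : ‖u t‖ ≤ ‖u s‖ := by
  have hd : ∀ r ∈ Icc s t, HasDerivAt (fun r => exp (N * (r - s)) • u r)
      (N • J r (exp (N * (r - s)) • u r)) r := by
    intro r hr
    have h1 : HasDerivAt (fun r => exp (N * (r - s))) (exp (N * (r - s)) * (N * 1)) r :=
      (((hasDerivAt_id r).sub_const s).const_mul N).exp
    refine (h1.smul (hu r hr)).congr_deriv ?_
    simp only [map_smul]
    module
  have h2 := norm_le_gronwallBound_of_norm_deriv_right_le (f := fun r => exp (N * (r - s)) • u r)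
    (f' := fun r => N • J r (exp (N * (r - s)) • u r)) (δ := ‖u s‖) (K := N) (ε := 0) (a := s) (b := t)
    (fun r hr => (hd r hr).continuousAt.continuousWithinAt)
    (fun r hr => (hd r (Ico_subset_Icc_self hr)).hasDerivWithinAt) (by simp)
    (fun r hr => by
      rw [norm_smul, Real.norm_of_nonneg hN, add_zero]
      refine mul_le_mul_of_nonneg_left ?_ hN
      simpa using (J r).le_of_opNorm_le (hJ r) (exp (N * (r - s)) • u r)) t ⟨hst, le_rfl⟩
  rw [gronwallBound_ε0, norm_smul, Real.norm_of_nonneg (exp_pos _).le, mul_comm] at h2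
  exact le_of_mul_le_mul_right h2 (exp_pos _)

/-- linear equation in a Banach algebra -/
lemma linear_ode {E : Type*} [NormedAddCommGroup E] [NormedSpace ℝ E] [CompleteSpace E]
    {c d M : ℝ} (hcd : c ≤ d) (a : ℝ → E →L[ℝ] E) (ha : Continuous a) (hb : ∀ t, ‖a t‖ ≤ M)
    (x : E) : ∃ y : ℝ → E, y c = x ∧ Continuous y ∧ ∀ t ∈ Icc c d, HasDerivAt y (a t (y t)) t := by
  obtain ⟨v, hvc, hv⟩ := volterra hcd (fun _ r => a r) (fun _ r => hb r)
    (fun x => by fun_prop) (continuous_const (y := x))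
  have hc : Continuous fun r => a r (v r) := by fun_prop
  have hD : ∀ t, HasDerivAt (fun t => x + ∫ r in c..t, a r (v r)) (a t (v t)) t := fun t =>
    ((hc.integral_hasStrictDerivAt c t).hasDerivAt).const_add x
  refine ⟨fun t => x + ∫ r in c..t, a r (v r), by simp,
    continuous_iff_continuousAt.2 fun t => (hD t).continuousAt, fun t ht => ?_⟩
  have h := hD t
  rw [show a t (v t) = a t (x + ∫ r in c..t, a r (v r)) by rw [← hv t ht]] at h
  exact h

end KatoAux

namespace KatoAux
set_option linter.unusedSectionVars false

structure KD (X : Type*) [NormedAddCommGroup X] [NormedSpace ℝ X] (c d K : ℝ) where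
  hcd : c ≤ d
  J : ℕ → ℝ → X →L[ℝ] X
  R : ℝ → X →L[ℝ] X
  B : ℝ → X →L[ℝ] X
  hJ1 : ∀ n t, ‖J n t‖ ≤ 1
  hJc : ∀ n, Continuous (J n)
  hRc : Continuous R
  hRdense : ∀ t, DenseRange (R t)
  hJR : ∀ (n : ℕ) t x, ((n : ℝ) + 1) • (J n t (R t x) - R t x) = J n t x
  hcomm : ∀ n t x, J n t (R t x) = R t (J n t x)
  hcommJ : ∀ n m t, Commute (J n t) (J m t)
  hJlim : ∀ t x, Tendsto (fun n => J n t x) atTop (𝓝 x)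
  hBK : ∀ t, ‖B t‖ ≤ K
  hBc : ∀ x, Continuous fun t => B t x
  hRd : ∀ t ∈ Ico c d, ∀ x, HasDerivWithinAt (fun τ => R τ x) (-(R t (B t x))) (Ici t) t
  hLip : ∀ (n : ℕ) r s x, ‖((n : ℝ) + 1) • (J n r (R s x) - J n s (R s x))‖ ≤ K * |r - s| * ‖x‖
  hbdd : ∀ s x, ∃ M, ∀ t, ∃ y, R t y = R s x ∧ ‖y‖ ≤ M

lemma prod_rule {X : Type*} [NormedAddCommGroup X] [NormedSpace ℝ X] {R : ℝ → X →L[ℝ] X}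
    (hR : Continuous R) {q : ℝ → X} {q' r' : X} {t : ℝ} (hq : HasDerivAt q q' t)
    (hr : HasDerivWithinAt (fun τ => R τ (q t)) r' (Ici t) t) :
    HasDerivWithinAt (fun τ => R τ (q τ)) (r' + R t q') (Ici t) t := by
  rw [hasDerivWithinAt_iff_tendsto_slope] at hr ⊢
  have hq' := hq.hasDerivWithinAt (s := Ici t)
  rw [hasDerivWithinAt_iff_tendsto_slope] at hq'
  have h1 : Tendsto R (𝓝[Ici t \ {t}] t) (𝓝 (R t)) := (hR.tendsto t).mono_left nhdsWithin_le_nhds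
  have h2 : Tendsto (fun τ => R τ (slope q t τ)) (𝓝[Ici t \ {t}] t) (𝓝 (R t q')) :=
    ((isBoundedBilinearMap_apply (𝕜 := ℝ) (E := X) (F := X)).continuous.tendsto
      (R t, q')).comp (h1.prodMk_nhds hq')
  refine (hr.add h2).congr fun τ => ?_
  simp only [slope_def_module, map_smul, map_sub]
  rw [← smul_add]
  congr 1
  abel

lemma exists_YZ {X : Type*} [NormedAddCommGroup X] [NormedSpace ℝ X] [CompleteSpace X]
    {c d M : ℝ} (hcd : c ≤ d) (a : ℝ → X →L[ℝ] X) (ha : Continuous a) (hM : ∀ t, ‖a t‖ ≤ M) :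
    ∃ Y Z : ℝ → X →L[ℝ] X, Continuous Y ∧ Continuous Z ∧
      (∀ t ∈ Icc c d, HasDerivAt Y (a t * Y t) t) ∧
      (∀ t ∈ Icc c d, HasDerivAt Z (-(Z t * a t)) t) ∧
      (∀ t ∈ Icc c d, Z t * Y t = 1) ∧ (∀ t ∈ Icc c d, Y t * Z t = 1) := by
  have hM0 : 0 ≤ M := (norm_nonneg _).trans (hM 0)
  obtain ⟨Y, hY1, hYc, hY⟩ := linear_ode (E := X →L[ℝ] X) hcd
    (fun t => ContinuousLinearMap.mul ℝ (X →L[ℝ] X) (a t)) (by fun_prop)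
    (fun t => (ContinuousLinearMap.opNorm_mul_apply_le ℝ _ (a t)).trans (hM t)) 1
  obtain ⟨Z, hZ1, hZc, hZ⟩ := linear_ode (E := X →L[ℝ] X) (M := M) hcd
    (fun t => -(ContinuousLinearMap.mul ℝ (X →L[ℝ] X)).flip (a t)) (by fun_prop)
    (fun t => by
      rw [norm_neg]
      refine ContinuousLinearMap.opNorm_le_bound _ hM0 fun x => ?_
      simp only [ContinuousLinearMap.flip_apply, ContinuousLinearMap.mul_apply']
      rw [mul_comm M]
      exact (norm_mul_le _ _).trans (mul_le_mul_of_nonneg_left (hM t) (norm_nonneg _))) 1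
  have hY' : ∀ t ∈ Icc c d, HasDerivAt Y (a t * Y t) t := fun t ht => by simpa using hY t ht
  have hZ' : ∀ t ∈ Icc c d, HasDerivAt Z (-(Z t * a t)) t := fun t ht => by simpa using hZ t ht
  refine ⟨Y, Z, hYc, hZc, hY', hZ', ?_, ?_⟩
  · intro t ht
    have := constant_of_has_deriv_right_zero (f := fun t => Z t * Y t) (a := c) (b := d)
      (hZc.mul hYc).continuousOn (fun r hr => by
        have h1 := (hZ' r (Ico_subset_Icc_self hr)).mul (hY' r (Ico_subset_Icc_self hr))
        refine (h1.congr_deriv ?_).hasDerivWithinAt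
        noncomm_ring) t ht
    simpa [hY1, hZ1] using this
  · intro t ht
    have := ODE_solution_unique (v := fun t f => a t * f - f * a t) (K := ⟨2 * M, by positivity⟩)
      (f := fun t => Y t * Z t) (g := fun _ => 1) (a := c) (b := d)
      (fun t => LipschitzWith.of_dist_le_mul fun f g => by
        rw [dist_eq_norm, dist_eq_norm]
        have e : a t * f - f * a t - (a t * g - g * a t) = a t * (f - g) - (f - g) * a t := by
          noncomm_ring
        rw [e]
        refine (norm_sub_le _ _).trans ?_
        have h1 := norm_mul_le (a t) (f - g)
        have h2 := norm_mul_le (f - g) (a t)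
        have h3 := mul_le_mul_of_nonneg_right (hM t) (norm_nonneg (f - g))
        change _ ≤ 2 * M * ‖f - g‖
        linarith)
      (hYc.mul hZc).continuousOn
      (fun r hr => by
        have h1 := (hY' r (Ico_subset_Icc_self hr)).mul (hZ' r (Ico_subset_Icc_self hr))
        refine (h1.congr_deriv ?_).hasDerivWithinAt
        noncomm_ring)
      continuousOn_const
      (fun r hr => by simpa using (hasDerivAt_const r (1 : X →L[ℝ] X)).hasDerivWithinAt)
      (by simp [hY1, hZ1])
    exact this ht

namespace KD
variable {X : Type*} [NormedAddCommGroup X] [NormedSpace ℝ X] {c d K : ℝ}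

def a (S : KD X c d K) (n : ℕ) (t : ℝ) : X →L[ℝ] X := ((n : ℝ) + 1) • (S.J n t - 1)

lemma a_apply (S : KD X c d K) (n : ℕ) (t : ℝ) (x : X) :
    S.a n t x = ((n : ℝ) + 1) • (S.J n t x - x) := by simp [a]

lemma a_cont (S : KD X c d K) (n : ℕ) : Continuous (S.a n) := by
  have := S.hJc n
  unfold a; fun_prop

lemma a_bdd (S : KD X c d K) (n : ℕ) (t : ℝ) : ‖S.a n t‖ ≤ ((n : ℝ) + 1) * 2 := by
  refine ContinuousLinearMap.opNorm_le_bound _ (by positivity) fun x => ?_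
  rw [a_apply, norm_smul, Real.norm_of_nonneg (by positivity), mul_assoc]
  refine mul_le_mul_of_nonneg_left ?_ (by positivity)
  have := (S.J n t).le_of_opNorm_le (S.hJ1 n t) x
  linarith [norm_sub_le (S.J n t x) x]

lemma aR (S : KD X c d K) (n : ℕ) (t : ℝ) (x : X) : S.a n t (S.R t x) = S.J n t x := by
  rw [a_apply, S.hJR]

lemma Ra (S : KD X c d K) (n : ℕ) (t : ℝ) (x : X) : S.R t (S.a n t x) = S.J n t x := by
  rw [a_apply, map_smul, map_sub, ← S.hcomm, S.hJR]

lemma K0 (S : KD X c d K) : 0 ≤ K := (norm_nonneg _).trans (S.hBK 0)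

variable [CompleteSpace X]

lemma exists_evo (S : KD X c d K) (n : ℕ) : ∃ U : ℝ → ℝ → X →L[ℝ] X,
    Continuous (fun q : ℝ × ℝ => U q.1 q.2) ∧ (∀ t ∈ Icc c d, U t t = 1) ∧
    (∀ t s, ∀ r ∈ Icc c d, U t r * U r s = U t s) ∧
    (∀ s, ∀ t ∈ Icc c d, HasDerivAt (fun t => U t s) (S.a n t * U t s) t) ∧
    (∀ t, ∀ s ∈ Icc c d, HasDerivAt (fun s => U t s) (-(U t s * S.a n s)) s) := by
  obtain ⟨Y, Z, hYc, hZc, hY, hZ, hZY, hYZ⟩ := exists_YZ S.hcd (S.a n) (S.a_cont n) (S.a_bdd n)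
  refine ⟨fun t s => Y t * Z s, by fun_prop, hYZ, ?_, ?_, ?_⟩
  · intro t s r hr
    calc Y t * Z r * (Y r * Z s) = Y t * (Z r * Y r) * Z s := by noncomm_ring
      _ = _ := by rw [hZY r hr, mul_one]
  · intro s t ht
    refine ((hY t ht).mul_const (Z s)).congr_deriv ?_
    noncomm_ring
  · intro t s hs
    refine ((hZ s hs).const_mul (Y t)).congr_deriv ?_
    noncomm_ring

noncomputable def U (S : KD X c d K) (n : ℕ) : ℝ → ℝ → X →L[ℝ] X := (S.exists_evo n).choose

lemma U_cont (S : KD X c d K) (n : ℕ) : Continuous (fun q : ℝ × ℝ => S.U n q.1 q.2) :=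
  (S.exists_evo n).choose_spec.1
lemma U_self (S : KD X c d K) (n : ℕ) {t : ℝ} (ht : t ∈ Icc c d) : S.U n t t = 1 :=
  (S.exists_evo n).choose_spec.2.1 t ht
lemma U_mul (S : KD X c d K) (n : ℕ) (t s : ℝ) {r : ℝ} (hr : r ∈ Icc c d) (x : X) :
    S.U n t r (S.U n r s x) = S.U n t s x := by
  exact congrArg (fun f : X →L[ℝ] X => f x) ((S.exists_evo n).choose_spec.2.2.1 t s r hr)
lemma U_dt (S : KD X c d K) (n : ℕ) (s : ℝ) {t : ℝ} (ht : t ∈ Icc c d) :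
    HasDerivAt (fun t => S.U n t s) (S.a n t * S.U n t s) t :=
  (S.exists_evo n).choose_spec.2.2.2.1 s t ht
lemma U_ds (S : KD X c d K) (n : ℕ) (t : ℝ) {s : ℝ} (hs : s ∈ Icc c d) :
    HasDerivAt (fun s => S.U n t s) (-(S.U n t s * S.a n s)) s :=
  (S.exists_evo n).choose_spec.2.2.2.2 t s hs

lemma U_dtx (S : KD X c d K) (n : ℕ) (s : ℝ) {t : ℝ} (ht : t ∈ Icc c d) (x : X) :
    HasDerivAt (fun t => S.U n t s x) (S.a n t (S.U n t s x)) t := by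
  have := (S.U_dt n s ht).clm_apply (hasDerivAt_const t x)
  simpa using this

lemma U_norm (S : KD X c d K) (n : ℕ) {s t : ℝ} (hs : c ≤ s) (hst : s ≤ t) (ht : t ≤ d) :
    ‖S.U n t s‖ ≤ 1 := by
  refine ContinuousLinearMap.opNorm_le_bound _ zero_le_one fun x => ?_
  have := contr (N := (n : ℝ) + 1) (by positivity) hst (J := S.J n) (S.hJ1 n)
    (u := fun t => S.U n t s x)
    (fun r hr => by
      have := S.U_dtx n s (t := r) ⟨hs.trans hr.1, hr.2.trans ht⟩ x
      rwa [a_apply] at this)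
  simpa [S.U_self n ⟨hs, hst.trans ht⟩] using this

/-- clamp -/
def p (c d t : ℝ) : ℝ := max c (min d t)
lemma p_cont : Continuous (p c d) := by unfold p; fun_prop
lemma p_mem (h : c ≤ d) (t : ℝ) : p c d t ∈ Icc c d := ⟨le_max_left _ _, max_le h (min_le_left _ _)⟩
lemma p_eq {t : ℝ} (h : t ∈ Icc c d) : p c d t = t := by
  unfold p; rw [min_eq_right h.2, max_eq_right h.1]
lemma p_mono {s t : ℝ} (h : s ≤ t) : p c d s ≤ p c d t :=
  max_le_max le_rfl (min_le_min le_rfl h)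

noncomputable def Mc (c d K : ℝ) : ℝ := 1 + K * (exp (K * (d - c)) * (d - c))

lemma Mc_nonneg (S : KD X c d K) : 0 ≤ Mc c d K := by
  have := S.K0
  have := sub_nonneg.2 S.hcd
  unfold Mc; positivity

lemma le_Mc (S : KD X c d K) {s t : ℝ} (hs : c ≤ s) (hst : s ≤ t) (ht : t ≤ d) :
    1 + K * (exp (K * (t - s)) * (t - s)) ≤ Mc c d K := by
  have := S.K0
  have h1 : 0 ≤ t - s := by linarith
  have h2 : t - s ≤ d - c := by linarith
  unfold Mc
  gcongr

/-- bound for solutions of the Volterra equation -/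
lemma volt_bound (S : KD X c d K) {V : ℝ → ℝ → X →L[ℝ] X} {s : ℝ} (hs : s ∈ Icc c d)
    (hV : ∀ t r, s ≤ r → r ≤ t → t ≤ d → ‖V t r‖ ≤ 1) {w : ℝ → X} (hw : Continuous w) {y : X}
    (h : ∀ t ∈ Icc s d, w t = V t s y + ∫ r in s..t, V t r (S.B r (w r))) :
    ∀ t ∈ Icc s d, ‖w t‖ ≤ Mc c d K * ‖y‖ := by
  intro t ht
  have h1 := gronwall_const (s := s) (d := d) (e := fun t => ‖w t‖) (C := ‖y‖) S.K0 (norm_nonneg _)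
    (by fun_prop) (fun t ht => by
      rw [h t ht]
      refine (norm_add_le _ _).trans (add_le_add ?_ ?_)
      · simpa using (V t s).le_of_opNorm_le (hV t s le_rfl ht.1 ht.2) y
      · rw [← intervalIntegral.integral_const_mul]
        refine intervalIntegral.norm_integral_le_of_norm_le ht.1 (Eventually.of_forall ?_)
          ((continuous_const.mul hw.norm).intervalIntegrable _ _)
        intro r hr
        have h2 := (V t r).le_of_opNorm_le (hV t r hr.1.le hr.2 ht.2) (S.B r (w r))
        have h3 := (S.B r).le_of_opNorm_le (S.hBK r) (w r)
        linarith) t ht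
  exact h1.trans (mul_le_mul_of_nonneg_right (S.le_Mc hs.1 ht.1 ht.2) (norm_nonneg _))

lemma exists_w (S : KD X c d K) (n : ℕ) {s : ℝ} (hs : s ∈ Icc c d) (y : X) :
    ∃ w : ℝ → X, Continuous w ∧
      (∀ t ∈ Icc s d, w t = S.U n t s y + ∫ r in s..t, S.U n t r (S.B r (w r))) ∧
      (∀ t ∈ Icc s d, ‖w t‖ ≤ Mc c d K * ‖y‖) ∧
      (∀ t ∈ Icc s d, S.R t (w t) = S.U n t s (S.R s y)) := by
  have hp : Continuous fun q : ℝ × ℝ => S.U n (p c d q.1) (p c d q.2) :=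
    (S.U_cont n).comp ((p_cont.comp continuous_fst).prodMk (p_cont.comp continuous_snd))
  obtain ⟨M, hM⟩ := (isCompact_Icc (a := c) (b := d)).prod (isCompact_Icc (a := c) (b := d))
    |>.exists_bound_of_continuousOn (S.U_cont n).continuousOn
  have hM' : ∀ t r, ‖S.U n (p c d t) (p c d r)‖ ≤ M := fun t r =>
    hM (p c d t, p c d r) ⟨p_mem S.hcd _, p_mem S.hcd _⟩
  have hM0 : 0 ≤ M := (norm_nonneg _).trans (hM' 0 0)
  obtain ⟨w, hwc, hw⟩ := volterra (K := M * K) hs.2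
    (fun t r => (S.U n (p c d t) (p c d r)).comp (S.B r))
    (fun t r => (ContinuousLinearMap.opNorm_comp_le _ _).trans
      (mul_le_mul (hM' t r) (S.hBK r) (norm_nonneg _) hM0))
    (fun x => by
      have := S.hBc x
      simp only [ContinuousLinearMap.comp_apply]
      exact hp.clm_apply (this.comp continuous_snd))
    (g := fun t => S.U n t s y)
    (((S.U_cont n).comp (by fun_prop : Continuous fun t : ℝ => (t, s))).clm_apply continuous_const)
  have hmem : ∀ t ∈ Icc s d, t ∈ Icc c d := fun t ht => ⟨hs.1.trans ht.1, ht.2⟩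
  have hw' : ∀ t ∈ Icc s d, w t = S.U n t s y + ∫ r in s..t, S.U n t r (S.B r (w r)) := by
    intro t ht
    rw [hw t ht]
    congr 1
    refine intervalIntegral.integral_congr fun r hr => ?_
    rw [uIcc_of_le ht.1] at hr
    simp only [ContinuousLinearMap.comp_apply]
    rw [p_eq (hmem t ht), p_eq (hmem r ⟨hr.1, hr.2.trans ht.2⟩)]
  have hBw : Continuous fun r => S.B r (w r) := sc_apply S.hBK S.hBc hwc
  refine ⟨w, hwc, hw', S.volt_bound hs
    (fun t r h1 h2 h3 => S.U_norm n (hs.1.trans h1) h2 h3) hwc hw', ?_⟩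
  set q : ℝ → X := fun t => S.U n t s (y + ∫ r in s..t, S.U n s r (S.B r (w r))) with hq
  have hic : Continuous fun r => S.U n s r (S.B r (w r)) :=
    ((S.U_cont n).comp (by fun_prop : Continuous fun r : ℝ => (s, r))).clm_apply hBw
  have hqw : ∀ t ∈ Icc s d, w t = q t := by
    intro t ht
    rw [hw' t ht, hq]
    simp only [map_add]
    congr 1
    rw [← ContinuousLinearMap.intervalIntegral_comp_comm _ (hic.intervalIntegrable _ _)]
    simp only [S.U_mul n _ _ hs]
  have hqd : ∀ t ∈ Icc s d, HasDerivAt q (S.a n t (q t) + S.B t (q t)) t := by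
    intro t ht
    have h1 := (S.U_dt n s (hmem t ht)).clm_apply
      (((hic.integral_hasStrictDerivAt s t).hasDerivAt).const_add y)
    refine h1.congr_deriv ?_
    rw [S.U_mul n _ _ hs, S.U_self n (hmem t ht), hqw t ht]
    rfl
  have hqc : Continuous q := by
    refine ((S.U_cont n).comp (by fun_prop : Continuous fun r : ℝ => (r, s))).clm_apply ?_
    exact continuous_iff_continuousAt.2 fun t =>
      (((hic.integral_hasStrictDerivAt s t).hasDerivAt).const_add y).continuousAt
  have hconst := constant_of_has_deriv_right_zero (f := fun t => S.U n s t (S.R t (q t)))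
    (a := s) (b := d)
    (((S.U_cont n).comp (by fun_prop : Continuous fun r : ℝ => (s, r))).clm_apply
      (S.hRc.clm_apply hqc)).continuousOn
    (fun t ht => by
      have htt := Ico_subset_Icc_self ht
      have h1 := prod_rule S.hRc (hqd t htt) (S.hRd t ⟨hs.1.trans ht.1, ht.2⟩ (q t))
      have h2 := (S.U_ds n s (hmem t htt)).hasDerivWithinAt (s := Ici t) |>.clm_apply h1
      refine h2.congr_deriv ?_
      have e : S.a n t (S.R t (q t)) = S.R t (S.a n t (q t)) := by rw [S.aR, S.Ra]
      simp only [neg_apply, mul_apply_eq_comp, e,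
        map_add, map_neg]
      abel)
  intro t ht
  have h3 := hconst t ht
  have h4 : S.U n t s (S.U n s t (S.R t (q t))) = S.R t (q t) := by
    rw [S.U_mul n _ _ hs, S.U_self n (hmem t ht)]; rfl
  rw [hqw t ht, ← h4]
  rw [h3, S.U_self n hs, ← hqw s ⟨le_rfl, hs.2⟩, hw' s ⟨le_rfl, hs.2⟩, S.U_self n hs]
  simp

end KD
end KatoAux

namespace KatoAux
set_option linter.unusedSectionVars false

lemma cauchy_approx {X : Type*} [NormedAddCommGroup X] {v : ℕ → X}
    (h : ∀ ε > 0, ∃ z : ℕ → X, CauchySeq z ∧ ∀ n, ‖v n - z n‖ ≤ ε) : CauchySeq v := by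
  rw [Metric.cauchySeq_iff]
  intro ε hε
  obtain ⟨z, hz, hvz⟩ := h (ε / 4) (by positivity)
  obtain ⟨N, hN⟩ := Metric.cauchySeq_iff.1 hz (ε / 4) (by positivity)
  refine ⟨N, fun m hm n hn => ?_⟩
  have h1 := hN m hm n hn
  rw [dist_eq_norm] at h1 ⊢
  have h2 := hvz m
  have h3 := hvz n
  rw [norm_sub_rev] at h3
  have : v m - v n = (v m - z m) + (z m - z n) + (z n - v n) := by abel
  rw [this]
  have := norm_add_le (v m - z m + (z m - z n)) (z n - v n)
  have := norm_add_le (v m - z m) (z m - z n)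
  linarith

lemma cauchy_dense {X : Type*} [NormedAddCommGroup X] [NormedSpace ℝ X] {T : ℕ → X →L[ℝ] X}
    (hT : ∀ n, ‖T n‖ ≤ 1) {R : X → X} (hR : DenseRange R)
    (h : ∀ y, CauchySeq fun n => T n (R y)) (x : X) : CauchySeq fun n => T n x := by
  refine cauchy_approx fun ε hε => ?_
  obtain ⟨y, hy⟩ := hR.exists_dist_lt x hε
  refine ⟨_, h y, fun n => ?_⟩
  rw [← map_sub]
  refine ((T n).le_of_opNorm_le (hT n) _).trans ?_
  rw [dist_eq_norm] at hy
  linarith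

lemma cauchy_apply {X : Type*} [NormedAddCommGroup X] [NormedSpace ℝ X] [CompleteSpace X]
    {T : ℕ → X →L[ℝ] X}
    (hT : ∀ n, ‖T n‖ ≤ 1) (h : ∀ x, CauchySeq fun n => T n x) {z : ℕ → X} (hz : CauchySeq z) :
    CauchySeq fun n => T n (z n) := by
  obtain ⟨x, hx⟩ := cauchySeq_tendsto_of_complete hz
  obtain ⟨y, hy⟩ := cauchySeq_tendsto_of_complete (h x)
  refine Tendsto.cauchySeq (x := y) ?_
  have h1 : Tendsto (fun n => T n (z n - x)) atTop (𝓝 0) := by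
    refine squeeze_zero_norm (a := fun n => ‖z n - x‖) (fun n => ?_) ?_
    · simpa using (T n).le_of_opNorm_le (hT n) (z n - x)
    · simpa using (hx.sub_const x).norm
  have := h1.add hy
  simpa using this

namespace KD
variable {X : Type*} [NormedAddCommGroup X] [NormedSpace ℝ X] {c d K : ℝ} [CompleteSpace X]

noncomputable def E (S : KD X c d K) (n : ℕ) (s τ : ℝ) : X →L[ℝ] X :=
  NormedSpace.exp (τ • S.a n s)

lemma E_dt (S : KD X c d K) (n : ℕ) (s τ : ℝ) (x : X) :
    HasDerivAt (fun τ => S.E n s τ x) (S.a n s (S.E n s τ x)) τ := by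
  have := (hasDerivAt_exp_smul_const' (𝕂 := ℝ) (S.a n s) τ).clm_apply (hasDerivAt_const τ x)
  simpa [E] using this

lemma E_dt' (S : KD X c d K) (n : ℕ) (s τ : ℝ) :
    HasDerivAt (fun τ => S.E n s τ) (S.E n s τ * S.a n s) τ :=
  hasDerivAt_exp_smul_const (𝕂 := ℝ) (S.a n s) τ

lemma E_zero (S : KD X c d K) (n : ℕ) (s : ℝ) : S.E n s 0 = 1 := by simp [E]

lemma E_comm (S : KD X c d K) (n : ℕ) (s τ : ℝ) {T : X →L[ℝ] X} (h : Commute T (S.a n s)) (x : X) :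
    T (S.E n s τ x) = S.E n s τ (T x) := by
  have : Commute T (S.E n s τ) := (h.smul_right τ).exp_right
  exact congrArg (fun f : X →L[ℝ] X => f x) this.eq

lemma R_comm (S : KD X c d K) (n : ℕ) (s : ℝ) : Commute (S.R s) (S.a n s) := by
  ext x
  simp only [mul_apply_eq_comp, S.aR, S.Ra]

lemma a_comm (S : KD X c d K) (n m : ℕ) (s : ℝ) : Commute (S.a m s) (S.a n s) := by
  have := S.hcommJ m n s
  unfold a
  exact (((this.sub_left (Commute.one_left _)).sub_right
    ((Commute.one_right _))).smul_left _).smul_right _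

lemma E_norm (S : KD X c d K) (n : ℕ) (s : ℝ) {τ : ℝ} (hτ : 0 ≤ τ) : ‖S.E n s τ‖ ≤ 1 := by
  refine ContinuousLinearMap.opNorm_le_bound _ zero_le_one fun x => ?_
  have := contr (N := (n : ℝ) + 1) (by positivity) hτ (J := fun _ => S.J n s) (fun _ => S.hJ1 n s)
    (u := fun t => S.E n s t x)
    (fun r hr => by
      have := S.E_dt n s r x
      rwa [a_apply] at this)
  simpa [E_zero] using this

lemma local_est (S : KD X c d K) (n : ℕ) {s t : ℝ} (hs : c ≤ s) (hst : s ≤ t) (ht : t ≤ d) (y : X) :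
    ‖S.U n t s (S.R s y) - S.E n s (t - s) (S.R s y)‖ ≤ K * (t - s) ^ 2 * ‖y‖ := by
  have hK := S.K0
  have hd : ∀ r ∈ Icc s t, HasDerivAt (fun r => S.U n t r (S.E n s (r - s) (S.R s y)))
      (S.U n t r (S.a n s (S.R s (S.E n s (r - s) y)) - S.a n r (S.R s (S.E n s (r - s) y)))) r := by
    intro r hr
    have h1 : HasDerivAt (fun r => S.E n s (r - s) (S.R s y))
        (S.a n s (S.E n s (r - s) (S.R s y))) r := (S.E_dt n s (r - s) (S.R s y)).comp_sub_const r s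
    have h2 := (S.U_ds n t (s := r) ⟨hs.trans hr.1, hr.2.trans ht⟩).clm_apply h1
    refine h2.congr_deriv ?_
    rw [S.E_comm n s (r - s) (S.R_comm n s)]
    simp only [neg_apply, mul_apply_eq_comp, map_sub]
    abel
  have := norm_image_sub_le_of_norm_deriv_right_le_segment (a := s) (b := t)
    (C := K * (t - s) * ‖y‖)
    (fun r hr => (hd r hr).continuousAt.continuousWithinAt)
    (fun r hr => (hd r (Ico_subset_Icc_self hr)).hasDerivWithinAt)
    (fun r hr => by
      refine ((S.U n t r).le_of_opNorm_le
        (S.U_norm n (hs.trans hr.1) hr.2.le ht) _).trans ?_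
      rw [one_mul, a_apply, a_apply, ← smul_sub, sub_sub_sub_cancel_right, ← norm_neg, ← smul_neg,
        neg_sub]
      refine (S.hLip n r s _).trans ?_
      rw [abs_of_nonneg (by linarith [hr.1])]
      have h3 := (S.E n s (r - s)).le_of_opNorm_le (S.E_norm n s (by linarith [hr.1])) y
      rw [one_mul] at h3
      have h4 : r - s ≤ t - s := by linarith [hr.2]
      have h5 : 0 ≤ r - s := by linarith [hr.1]
      gcongr) t ⟨hst, le_rfl⟩
  simp only [S.U_self n (t := t) ⟨hs.trans hst, ht⟩, sub_self, E_zero] at this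
  rw [norm_sub_rev]
  refine this.trans (le_of_eq ?_)
  ring

lemma E_cauchy (S : KD X c d K) (s : ℝ) {τ : ℝ} (hτ : 0 ≤ τ) (x : X) :
    CauchySeq fun n => S.E n s τ x := by
  refine cauchy_dense (fun n => S.E_norm n s hτ) (S.hRdense s) (fun y => ?_) x
  have hest : ∀ n m, ‖S.E n s τ (S.R s y) - S.E m s τ (S.R s y)‖ ≤
      ‖S.J n s y - S.J m s y‖ * τ := by
    intro n m
    have hd : ∀ r, HasDerivAt (fun r => S.E m s (τ - r) (S.E n s r (S.R s y)))
        (S.E m s (τ - r) (S.E n s r (S.J n s y - S.J m s y))) r := by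
      intro r
      have h0 : HasDerivAt (fun r => S.E m s (τ - r)) (-(S.E m s (τ - r) * S.a m s)) r :=
        (S.E_dt' m s (τ - r)).comp_const_sub τ r
      have h2 := h0.clm_apply (S.E_dt n s r (S.R s y))
      refine h2.congr_deriv ?_
      simp only [neg_apply, mul_apply_eq_comp, S.E_comm n s r (S.a_comm n m s),
        S.E_comm n s r (S.a_comm n n s), S.aR, map_sub]
      abel
    have := norm_image_sub_le_of_norm_deriv_right_le_segment (a := 0) (b := τ)
      (C := ‖S.J n s y - S.J m s y‖)
      (fun r hr => (hd r).continuousAt.continuousWithinAt)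
      (fun r hr => (hd r).hasDerivWithinAt)
      (fun r hr => by
        refine ((S.E m s (τ - r)).le_of_opNorm_le (S.E_norm m s (by linarith [hr.2])) _).trans ?_
        rw [one_mul]
        have h7 := (S.E n s r).le_of_opNorm_le (S.E_norm n s hr.1) (S.J n s y - S.J m s y)
        rwa [one_mul] at h7) τ ⟨hτ, le_rfl⟩
    simpa [E_zero] using this
  have hJ := (S.hJlim s y).cauchySeq
  rw [Metric.cauchySeq_iff] at hJ ⊢
  intro ε hε
  obtain ⟨N, hN⟩ := hJ (ε / (τ + 1)) (by positivity)
  refine ⟨N, fun m hm n hn => ?_⟩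
  have h1 := hN m hm n hn
  rw [dist_eq_norm] at h1 ⊢
  refine (hest m n).trans_lt ?_
  rw [lt_div_iff₀ (by positivity)] at h1
  nlinarith [norm_nonneg (S.J m s y - S.J n s y)]

noncomputable def P (S : KD X c d K) (s h : ℝ) (x : X) (n : ℕ) : ℕ → X
  | 0 => x
  | k + 1 => S.E n (s + k * h) h (P S s h x n k)

lemma P_cauchy (S : KD X c d K) (s : ℝ) {h : ℝ} (hh : 0 ≤ h) (x : X) (k : ℕ) :
    CauchySeq fun n => S.P s h x n k := by
  induction k with
  | zero => exact cauchySeq_const x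
  | succ k ih =>
    exact cauchy_apply (fun n => S.E_norm n (s + k * h) hh) (S.E_cauchy (s + k * h) hh) ih

lemma P_est (S : KD X c d K) {s h : ℝ} (hs : c ≤ s) (hh : 0 ≤ h) (y : X) (n k : ℕ)
    (hk : s + k * h ≤ d) :
    ‖S.U n (s + k * h) s (S.R s y) - S.P s h (S.R s y) n k‖ ≤ k * (K * h ^ 2 * (Mc c d K * ‖y‖)) := by
  have hK := S.K0
  induction k with
  | zero =>
    have : s ≤ d := by simpa using hk
    simp [P, S.U_self n (t := s) ⟨hs, this⟩]
  | succ k ih =>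
    have e1 : s + (k + 1 : ℕ) * h = s + k * h + h := by push_cast; ring
    rw [e1] at hk ⊢
    set t := s + k * h with ht
    have hkh : 0 ≤ k * h := by positivity
    have hst : s ≤ t := by linarith
    have htd : t ≤ d := by linarith
    have ih' := ih htd
    obtain ⟨w, -, -, hwb, hw⟩ := S.exists_w n (s := s) ⟨hs, hst.trans htd⟩ y
    have h1 := S.local_est n (s := t) (t := t + h) (hs.trans hst) (by linarith) hk (w t)
    have h2 := hw t ⟨hst, htd⟩
    rw [h2, S.U_mul n _ _ ⟨hs.trans hst, htd⟩, add_sub_cancel_left] at h1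
    have h3 := (S.E n t h).le_of_opNorm_le (S.E_norm n t hh)
      (S.U n t s (S.R s y) - S.P s h (S.R s y) n k)
    rw [one_mul, map_sub] at h3
    have h4 := norm_add_le (S.U n (t + h) s (S.R s y) - S.E n t h (S.U n t s (S.R s y)))
      (S.E n t h (S.U n t s (S.R s y)) - S.E n t h (S.P s h (S.R s y) n k))
    rw [sub_add_sub_cancel] at h4
    have h5 : K * h ^ 2 * ‖w t‖ ≤ K * h ^ 2 * (Mc c d K * ‖y‖) :=
      mul_le_mul_of_nonneg_left (hwb t ⟨hst, htd⟩) (by positivity)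
    change ‖_ - S.E n t h (S.P s h (S.R s y) n k)‖ ≤ _
    refine h4.trans ?_
    push_cast
    linarith

lemma U_cauchy (S : KD X c d K) {s t : ℝ} (hs : c ≤ s) (hst : s ≤ t) (ht : t ≤ d) (x : X) :
    CauchySeq fun n => S.U n t s x := by
  refine cauchy_dense (fun n => S.U_norm n hs hst ht) (S.hRdense s) (fun y => ?_) x
  refine cauchy_approx fun ε hε => ?_
  set A := K * (t - s) ^ 2 * (Mc c d K * ‖y‖) with hA
  obtain ⟨N, hN⟩ := exists_nat_gt (A / ε)
  have hA0 : 0 ≤ A := by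
    have := S.K0; have := S.Mc_nonneg
    positivity
  have hN0 : (0 : ℝ) < N := (by positivity : 0 ≤ A / ε).trans_lt hN
  have hh : 0 ≤ (t - s) / N := div_nonneg (by linarith) hN0.le
  have e : s + N * ((t - s) / N) = t := by field_simp; ring
  refine ⟨_, S.P_cauchy s hh (S.R s y) N, fun n => ?_⟩
  have := S.P_est hs hh y n N (by rw [e]; exact ht)
  rw [e] at this
  refine this.trans ?_
  rw [div_lt_iff₀ hε] at hN
  have e2 : (N : ℝ) * (K * ((t - s) / N) ^ 2 * (Mc c d K * ‖y‖)) = A / N := by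
    rw [hA]; field_simp
  rw [e2, div_le_iff₀ hN0]
  linarith

lemma U_lip_t (S : KD X c d K) (n : ℕ) {s t t' : ℝ} (hs : c ≤ s) (hst : s ≤ t) (htt : t ≤ t')
    (ht : t' ≤ d) (y : X) :
    ‖S.U n t' s (S.R s y) - S.U n t s (S.R s y)‖ ≤ Mc c d K * ‖y‖ * (t' - t) := by
  obtain ⟨w, -, -, hwb, hw⟩ := S.exists_w n (s := s) ⟨hs, (hst.trans htt).trans ht⟩ y
  have hd : ∀ r ∈ Icc t t', HasDerivAt (fun r => S.U n r s (S.R s y)) (S.J n r (w r)) r := by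
    intro r hr
    have := S.U_dtx n s (t := r) ⟨(hs.trans hst).trans hr.1, hr.2.trans ht⟩ (S.R s y)
    rwa [← hw r ⟨hst.trans hr.1, hr.2.trans ht⟩, S.aR] at this
  refine norm_image_sub_le_of_norm_deriv_right_le_segment (a := t) (b := t')
    (fun r hr => (hd r hr).continuousAt.continuousWithinAt)
    (fun r hr => (hd r (Ico_subset_Icc_self hr)).hasDerivWithinAt)
    (fun r hr => ?_) t' ⟨htt, le_rfl⟩
  refine ((S.J n r).le_of_opNorm_le (S.hJ1 n r) _).trans ?_
  rw [one_mul]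
  exact hwb r ⟨hst.trans hr.1, hr.2.le.trans ht⟩

end KD
end KatoAux

namespace KatoAux
set_option linter.unusedSectionVars false
namespace KD
variable {X : Type*} [NormedAddCommGroup X] [NormedSpace ℝ X] {c d K : ℝ} [CompleteSpace X]

lemma exists_V0 (S : KD X c d K) : ∃ V : ℝ → ℝ → X →L[ℝ] X,
    ∀ s t, c ≤ s → s ≤ t → t ≤ d → ∀ x,
      Tendsto (fun n => S.U n t s x) atTop (𝓝 (V t s x)) := by
  have : ∀ t s, ∃ V : X →L[ℝ] X, c ≤ s → s ≤ t → t ≤ d → ∀ x,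
      Tendsto (fun n => S.U n t s x) atTop (𝓝 (V x)) := by
    intro t s
    by_cases h : c ≤ s ∧ s ≤ t ∧ t ≤ d
    · obtain ⟨h1, h2, h3⟩ := h
      choose f hf using fun x => cauchySeq_tendsto_of_complete (S.U_cauchy h1 h2 h3 x)
      refine ⟨continuousLinearMapOfTendsto (fun n => S.U n t s) (f := f) (tendsto_pi_nhds.2 hf),
        fun _ _ _ x => hf x⟩
    · exact ⟨0, fun h1 h2 h3 => absurd ⟨h1, h2, h3⟩ h⟩
  choose V hV using this
  exact ⟨V, fun s t => hV t s⟩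

lemma exists_V (S : KD X c d K) : ∃ V : ℝ → ℝ → X →L[ℝ] X,
    (∀ t s, ‖V t s‖ ≤ 1) ∧ (∀ x, Continuous fun q : ℝ × ℝ => V q.1 q.2 x) ∧
    ∀ s t, c ≤ s → s ≤ t → t ≤ d → ∀ x,
      Tendsto (fun n => S.U n t s x) atTop (𝓝 (V t s x)) := by
  obtain ⟨V, hV⟩ := S.exists_V0
  have hN : ∀ s t, c ≤ s → s ≤ t → t ≤ d → ‖V t s‖ ≤ 1 := by
    intro s t hs hst ht
    refine ContinuousLinearMap.opNorm_le_bound _ zero_le_one fun x => ?_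
    refine le_of_tendsto (hV s t hs hst ht x).norm (Eventually.of_forall fun n => ?_)
    exact (S.U n t s).le_of_opNorm_le (S.U_norm n hs hst ht) x
  have hlipt : ∀ s t t', c ≤ s → s ≤ t → t ≤ t' → t' ≤ d → ∀ y,
      ‖V t' s (S.R s y) - V t s (S.R s y)‖ ≤ Mc c d K * ‖y‖ * (t' - t) := by
    intro s t t' h1 h2 h3 h4 y
    exact le_of_tendsto ((hV s t' h1 (h2.trans h3) h4 _).sub (hV s t h1 h2 (h3.trans h4) _)).norm
      (Eventually.of_forall fun n => S.U_lip_t n h1 h2 h3 h4 y)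
  have hlips : ∀ s s' t, c ≤ s → s ≤ s' → s' ≤ t → t ≤ d → ∀ y,
      ‖V t s (S.R s y) - V t s' (S.R s y)‖ ≤ Mc c d K * ‖y‖ * (s' - s) := by
    intro s s' t h1 h2 h3 h4 y
    refine le_of_tendsto ((hV s t h1 (h2.trans h3) h4 _).sub (hV s' t (h1.trans h2) h3 h4 _)).norm
      (Eventually.of_forall fun n => ?_)
    have e := S.U_lip_t n h1 le_rfl h2 (h3.trans h4) y
    rw [S.U_self n ⟨h1, (h2.trans h3).trans h4⟩] at e
    have e2 := (S.U n t s').le_of_opNorm_le (S.U_norm n (h1.trans h2) h3 h4)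
      (S.U n s' s (S.R s y) - S.R s y)
    rw [map_sub, S.U_mul n _ _ ⟨h1.trans h2, h3.trans h4⟩, one_mul] at e2
    exact e2.trans e
  set T : Set (ℝ × ℝ) := {q | c ≤ q.2 ∧ q.2 ≤ q.1 ∧ q.1 ≤ d} with hT
  have hcontR : ∀ y, ContinuousOn (fun q : ℝ × ℝ => V q.1 q.2 (S.R c y)) T := by
    intro y
    obtain ⟨M, hM⟩ := S.hbdd c y
    set x := S.R c y with hx
    have hM0 : 0 ≤ M := by
      obtain ⟨z, -, hz⟩ := hM 0
      exact (norm_nonneg _).trans hz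
    have hMc := S.Mc_nonneg
    set Λ := Mc c d K * M with hΛ
    have hΛ0 : 0 ≤ Λ := by positivity
    have ht : ∀ s t t', c ≤ s → s ≤ t → t ≤ t' → t' ≤ d → ‖V t' s x - V t s x‖ ≤ Λ * (t' - t) := by
      intro s t t' h1 h2 h3 h4
      obtain ⟨z, hz, hzM⟩ := hM s
      rw [← hz]
      refine (hlipt s t t' h1 h2 h3 h4 z).trans ?_
      have : 0 ≤ t' - t := by linarith
      exact mul_le_mul_of_nonneg_right (mul_le_mul_of_nonneg_left hzM hMc) this
    have hs : ∀ s s' t, c ≤ s → s ≤ s' → s' ≤ t → t ≤ d → ‖V t s x - V t s' x‖ ≤ Λ * (s' - s) := by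
      intro s s' t h1 h2 h3 h4
      obtain ⟨z, hz, hzM⟩ := hM s
      rw [← hz]
      refine (hlips s s' t h1 h2 h3 h4 z).trans ?_
      have : 0 ≤ s' - s := by linarith
      exact mul_le_mul_of_nonneg_right (mul_le_mul_of_nonneg_left hzM hMc) this
    have hs' : ∀ s s' t, c ≤ s → c ≤ s' → s ≤ t → s' ≤ t → t ≤ d →
        ‖V t s x - V t s' x‖ ≤ Λ * |s - s'| := by
      intro s s' t h1 h2 h3 h4 h5
      rcases le_total s s' with h | h
      · rw [abs_sub_comm, abs_of_nonneg (by linarith)]; exact hs s s' t h1 h h4 h5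
      · rw [norm_sub_rev, abs_of_nonneg (by linarith)]; exact hs s' s t h2 h h3 h5
    have hall : ∀ q ∈ T, ∀ q' ∈ T, ‖V q.1 q.2 x - V q'.1 q'.2 x‖ ≤
        Λ * (|q.1 - q'.1| + |q.2 - q'.2|) := by
      rintro ⟨t, s⟩ ⟨h1, h2, h3⟩ ⟨t', s'⟩ ⟨h1', h2', h3'⟩
      simp only at *
      have e1 := ht s t (max t t') h1 h2 (le_max_left _ _) (max_le h3 h3')
      have e2 := ht s' t' (max t t') h1' h2' (le_max_right _ _) (max_le h3 h3')
      have e3 := hs' s s' (max t t') h1 h1' (h2.trans (le_max_left _ _))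
        (h2'.trans (le_max_right _ _)) (max_le h3 h3')
      have e4 : (max t t' - t) + (max t t' - t') = |t - t'| := by
        rcases le_total t t' with h | h
        · rw [max_eq_right h, abs_sub_comm, abs_of_nonneg (by linarith)]; ring
        · rw [max_eq_left h, abs_of_nonneg (by linarith)]; ring
      have e5 : V t s x - V t' s' x = -(V (max t t') s x - V t s x) +
        (V (max t t') s x - V (max t t') s' x) + (V (max t t') s' x - V t' s' x) := by abel
      rw [e5]
      have n1 := norm_add_le (-(V (max t t') s x - V t s x) +
        (V (max t t') s x - V (max t t') s' x)) (V (max t t') s' x - V t' s' x)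
      have n2 := norm_add_le (-(V (max t t') s x - V t s x))
        (V (max t t') s x - V (max t t') s' x)
      rw [norm_neg] at n2
      rw [← e4]
      linarith
    intro q hq
    have h0 : Tendsto (fun q' : ℝ × ℝ => Λ * (|q'.1 - q.1| + |q'.2 - q.2|)) (𝓝[T] q) (𝓝 0) := by
      have : Continuous fun q' : ℝ × ℝ => Λ * (|q'.1 - q.1| + |q'.2 - q.2|) := by fun_prop
      have := (this.tendsto q).mono_left (nhdsWithin_le_nhds (s := T))
      simpa using this
    refine tendsto_iff_norm_sub_tendsto_zero.2 ?_
    refine squeeze_zero' (Eventually.of_forall fun _ => norm_nonneg _) ?_ h0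
    filter_upwards [self_mem_nhdsWithin] with q' hq'
    exact hall q' hq' q hq
  have hcont : ∀ x, ContinuousOn (fun q : ℝ × ℝ => V q.1 q.2 x) T := by
    intro x
    refine continuousOn_of_uniform_approx_of_continuousOn fun u hu => ?_
    obtain ⟨ε, hε, hεu⟩ := Metric.mem_uniformity_dist.1 hu
    obtain ⟨y, hy⟩ := (S.hRdense c).exists_dist_lt x hε
    refine ⟨_, hcontR y, fun q hq => hεu ?_⟩
    rw [dist_eq_norm] at hy ⊢
    rw [← map_sub]
    refine ((V q.1 q.2).le_of_opNorm_le (hN _ _ hq.1 hq.2.1 hq.2.2) _).trans_lt ?_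
    linarith
  refine ⟨fun t s => V (p c d (max t s)) (p c d s), fun t s => ?_, fun x => ?_, ?_⟩
  · exact hN _ _ (p_mem S.hcd _).1 (p_mono (le_max_right _ _)) (p_mem S.hcd _).2
  · refine (hcont x).comp_continuous
      (f := fun q : ℝ × ℝ => (p c d (max q.1 q.2), p c d q.2)) ?_ ?_
    · exact (p_cont.comp (by fun_prop)).prodMk (p_cont.comp (by fun_prop))
    · intro q
      exact ⟨(p_mem S.hcd _).1, p_mono (le_max_right _ _), (p_mem S.hcd _).2⟩
  · intro s t h1 h2 h3 x
    simp only [max_eq_left h2]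
    rw [p_eq ⟨h1.trans h2, h3⟩, p_eq ⟨h1, h2.trans h3⟩]
    exact hV s t h1 h2 h3 x

lemma V_deriv (S : KD X c d K) {V : ℝ → ℝ → X →L[ℝ] X}
    (hN : ∀ t s, ‖V t s‖ ≤ 1) (hVc : ∀ x, Continuous fun q : ℝ × ℝ => V q.1 q.2 x)
    (hV : ∀ s t, c ≤ s → s ≤ t → t ≤ d → ∀ x,
      Tendsto (fun n => S.U n t s x) atTop (𝓝 (V t s x))) {s : ℝ} (hs : s ∈ Icc c d) (y : X) :
    ∃ w : ℝ → X, ∀ t ∈ Icc s d, V t s (S.R s y) = S.R t (w t) ∧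
      HasDerivWithinAt (fun τ => V τ s (S.R s y)) (w t) (Icc s d) t := by
  have hK := S.K0
  have hBV : ∀ f : ℝ → X, Continuous f → Continuous fun r => S.B r (f r) := fun f hf =>
    sc_apply S.hBK S.hBc hf
  obtain ⟨w, hwc, hw⟩ := volterra (K := 1 * K) hs.2 (fun t r => (V t r).comp (S.B r))
    (fun t r => (ContinuousLinearMap.opNorm_comp_le _ _).trans
      (mul_le_mul (hN t r) (S.hBK r) (norm_nonneg _) zero_le_one))
    (fun x => by
      simp only [ContinuousLinearMap.comp_apply]
      exact sc_apply (f := fun q : ℝ × ℝ => V q.1 q.2) (fun q => hN _ _) hVc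
        ((S.hBc x).comp continuous_snd))
    (g := fun t => V t s y) ((hVc y).comp (by fun_prop : Continuous fun t : ℝ => (t, s)))
  simp only [ContinuousLinearMap.comp_apply] at hw
  have hwb := S.volt_bound hs (fun t r _ _ _ => hN t r) hwc hw
  choose wn hwnc hwn hwnb hwnR using fun n => S.exists_w n hs y
  have hlim : ∀ t ∈ Icc s d, Tendsto (fun n => wn n t) atTop (𝓝 (w t)) := by
    intro t ht
    refine tendsto_iff_norm_sub_tendsto_zero.2 ?_
    refine gronwall_tendsto (s := s) (d := d) (M := Mc c d K * ‖y‖ + Mc c d K * ‖y‖) hK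
      (e := fun n t => ‖wn n t - w t‖) (fun n => ((hwnc n).sub hwc).norm)
      (fun n t => norm_nonneg _)
      (fun n t ht => (norm_sub_le _ _).trans (add_le_add (hwnb n t ht) (hwb t ht))) ?_ t ht
    clear t ht
    intro t ht ε hε
    have hUc : ∀ n (f : ℝ → X), Continuous f → Continuous fun r => S.U n t r (f r) := fun n f hf =>
      ((S.U_cont n).comp (by fun_prop : Continuous fun r : ℝ => (t, r))).clm_apply hf
    have hVc' : ∀ (f : ℝ → X), Continuous f → Continuous fun r => V t r (f r) := fun f hf =>
      sc_apply (f := fun r => V t r) (fun r => hN _ _)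
        (fun x => (hVc x).comp (by fun_prop : Continuous fun r : ℝ => (t, r))) hf
    have hA : Tendsto (fun n => S.U n t s y - V t s y) atTop (𝓝 0) := by
      simpa using (hV s t hs.1 ht.1 ht.2 y).sub_const (V t s y)
    have hI : Tendsto (fun n => ∫ r in s..t, (S.U n t r (S.B r (w r)) - V t r (S.B r (w r)))) atTop
        (𝓝 (∫ r in s..t, (0 : X))) := by
      refine intervalIntegral.tendsto_integral_filter_of_dominated_convergence
        (fun r => ‖S.B r (w r)‖ + ‖S.B r (w r)‖)
        (Eventually.of_forall fun n => Continuous.aestronglyMeasurable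
          ((hUc n _ (hBV w hwc)).sub (hVc' _ (hBV w hwc))))
        (Eventually.of_forall fun n => Eventually.of_forall fun r hr => ?_)
        (((hBV w hwc).norm.add (hBV w hwc).norm).intervalIntegrable _ _)
        (Eventually.of_forall fun r hr => ?_)
      · rw [uIoc_of_le ht.1] at hr
        refine (norm_sub_le _ _).trans (add_le_add ?_ ?_)
        · simpa using (S.U n t r).le_of_opNorm_le
            (S.U_norm n (hs.1.trans hr.1.le) hr.2 ht.2) (S.B r (w r))
        · simpa using (V t r).le_of_opNorm_le (hN t r) (S.B r (w r))
      · rw [uIoc_of_le ht.1] at hr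
        simpa using (hV r t (hs.1.trans hr.1.le) hr.2 ht.2 (S.B r (w r))).sub_const
          (V t r (S.B r (w r)))
    rw [intervalIntegral.integral_zero] at hI
    have hsum := hA.norm.add hI.norm
    rw [norm_zero, add_zero] at hsum
    filter_upwards [hsum.eventually (gt_mem_nhds hε)] with n hn
    have i1 : IntervalIntegrable (fun r => S.U n t r (S.B r (w r)) - V t r (S.B r (w r)))
      volume s t := ((hUc n _ (hBV w hwc)).sub (hVc' _ (hBV w hwc))).intervalIntegrable _ _
    have i2 : IntervalIntegrable (fun r => S.U n t r (S.B r (wn n r - w r))) volume s t :=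
      (hUc n _ (hBV (fun r => wn n r - w r) ((hwnc n).sub hwc))).intervalIntegrable _ _
    have i3 : IntervalIntegrable (fun r => S.U n t r (S.B r (wn n r))) volume s t :=
      (hUc n _ (hBV _ (hwnc n))).intervalIntegrable _ _
    have i4 : IntervalIntegrable (fun r => V t r (S.B r (w r))) volume s t :=
      (hVc' _ (hBV _ hwc)).intervalIntegrable _ _
    have e : wn n t - w t = (S.U n t s y - V t s y) +
        (∫ r in s..t, (S.U n t r (S.B r (w r)) - V t r (S.B r (w r)))) +
        ∫ r in s..t, S.U n t r (S.B r (wn n r - w r)) := by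
      rw [hwn n t ht, hw t ht, add_assoc, ← intervalIntegral.integral_add i1 i2,
        add_sub_add_comm, ← intervalIntegral.integral_sub i3 i4]
      congr 1
      refine intervalIntegral.integral_congr fun r _ => ?_
      simp only [map_sub]
      abel
    have b : ‖∫ r in s..t, S.U n t r (S.B r (wn n r - w r))‖ ≤ K * ∫ r in s..t, ‖wn n r - w r‖ := by
      rw [← intervalIntegral.integral_const_mul]
      refine intervalIntegral.norm_integral_le_of_norm_le ht.1 (Eventually.of_forall ?_)
        ((continuous_const.mul ((hwnc n).sub hwc).norm).intervalIntegrable _ _)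
      intro r hr
      have h2 := (S.U n t r).le_of_opNorm_le (S.U_norm n (hs.1.trans hr.1.le) hr.2 ht.2)
        (S.B r (wn n r - w r))
      have h3 := (S.B r).le_of_opNorm_le (S.hBK r) (wn n r - w r)
      linarith
    conv_lhs => rw [e]
    have n1 := norm_add₃_le (a := S.U n t s y - V t s y)
      (b := ∫ r in s..t, (S.U n t r (S.B r (w r)) - V t r (S.B r (w r))))
      (c := ∫ r in s..t, S.U n t r (S.B r (wn n r - w r)))
    linarith
  have hVR : ∀ t ∈ Icc s d, V t s (S.R s y) = S.R t (w t) := by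
    intro t ht
    have h1 := hV s t hs.1 ht.1 ht.2 (S.R s y)
    have h2 := ((S.R t).continuous.tendsto (w t)).comp (hlim t ht)
    refine tendsto_nhds_unique h1 (h2.congr fun n => ?_)
    simp only [Function.comp_apply]
    exact hwnR n t ht
  have hVI : ∀ t ∈ Icc s d, V t s (S.R s y) = S.R s y + ∫ r in s..t, w r := by
    intro t ht
    have h1 := hV s t hs.1 ht.1 ht.2 (S.R s y)
    have hJc : ∀ n, Continuous fun r => S.J n r (wn n r) := fun n => (S.hJc n).clm_apply (hwnc n)
    have h2 : ∀ n, S.U n t s (S.R s y) = S.R s y + ∫ r in s..t, S.J n r (wn n r) := by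
      intro n
      rw [intervalIntegral.integral_eq_sub_of_hasDerivAt (f := fun r => S.U n r s (S.R s y)) ?_
        ((hJc n).intervalIntegrable _ _), S.U_self n hs]
      · simp
      · intro r hr
        rw [uIcc_of_le ht.1] at hr
        have := S.U_dtx n s (t := r) ⟨hs.1.trans hr.1, hr.2.trans ht.2⟩ (S.R s y)
        rwa [← hwnR n r ⟨hr.1, hr.2.trans ht.2⟩, S.aR] at this
    have h3 : Tendsto (fun n => ∫ r in s..t, S.J n r (wn n r)) atTop (𝓝 (∫ r in s..t, w r)) := by
      refine intervalIntegral.tendsto_integral_filter_of_dominated_convergence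
        (fun r => Mc c d K * ‖y‖)
        (Eventually.of_forall fun n => (hJc n).aestronglyMeasurable)
        (Eventually.of_forall fun n => Eventually.of_forall fun r hr => ?_)
        (continuous_const.intervalIntegrable _ _)
        (Eventually.of_forall fun r hr => ?_)
      · rw [uIoc_of_le ht.1] at hr
        refine ((S.J n r).le_of_opNorm_le (S.hJ1 n r) _).trans ?_
        rw [one_mul]
        exact hwnb n r ⟨hr.1.le, hr.2.trans ht.2⟩
      · rw [uIoc_of_le ht.1] at hr
        have h4 := hlim r ⟨hr.1.le, hr.2.trans ht.2⟩
        have h5 : Tendsto (fun n => S.J n r (wn n r - w r)) atTop (𝓝 0) := by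
          refine squeeze_zero_norm (a := fun n => ‖wn n r - w r‖) (fun n => ?_)
            (tendsto_iff_norm_sub_tendsto_zero.1 h4)
          simpa using (S.J n r).le_of_opNorm_le (S.hJ1 n r) (wn n r - w r)
        simpa using h5.add (S.hJlim r (w r))
    exact tendsto_nhds_unique h1 ((h3.const_add (S.R s y)).congr fun n => (h2 n).symm)
  refine ⟨w, fun t ht => ⟨hVR t ht, ?_⟩⟩
  have h6 := ((hwc.integral_hasStrictDerivAt s t).hasDerivAt.const_add (S.R s y)).hasDerivWithinAt
    (s := Icc s d)
  exact h6.congr hVI (hVI t ht)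

end KD
end KatoAux

namespace KatoAux
set_option linter.unusedSectionVars false
section single
variable {X : Type*} [NormedAddCommGroup X] [NormedSpace ℝ X]

/-- `A` is linear on `D` and dissipative. -/
structure LD (D : Submodule ℝ X) (A : X → X) : Prop where
  add : ∀ x ∈ D, ∀ y ∈ D, A (x + y) = A x + A y
  smul : ∀ x ∈ D, ∀ c : ℝ, A (c • x) = c • A x
  diss : ∀ x ∈ D, ∀ lam : ℝ, 0 < lam → lam * ‖x‖ ≤ ‖lam • x - A x‖

variable {D : Submodule ℝ X} {A : X → X}

lemma LD.sub (h : LD D A) {x y : X} (hx : x ∈ D) (hy : y ∈ D) : A (x - y) = A x - A y := by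
  have := h.smul y hy (-1)
  rw [sub_eq_add_neg, ← neg_one_smul ℝ y, h.add x hx _ (D.smul_mem _ hy), this, neg_one_smul,
    sub_eq_add_neg]

lemma LD.dist (h : LD D A) {x y : X} (hx : x ∈ D) (hy : y ∈ D) {lam : ℝ} (hl : 0 < lam) :
    lam * ‖x - y‖ ≤ ‖(lam • x - A x) - (lam • y - A y)‖ := by
  refine (h.diss _ (D.sub_mem hx hy) lam hl).trans_eq ?_
  rw [h.sub hx hy, smul_sub]
  congr 1
  abel

lemma LD.inj (h : LD D A) {x y : X} (hx : x ∈ D) (hy : y ∈ D) {lam : ℝ} (hl : 0 < lam)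
    (e : lam • x - A x = lam • y - A y) : x = y := by
  have := h.dist hx hy hl
  rw [e, sub_self, norm_zero] at this
  have h2 : ‖x - y‖ ≤ 0 := by
    by_contra h3
    push Not at h3
    have := mul_pos hl h3
    linarith
  exact sub_eq_zero.1 (norm_le_zero_iff.1 h2)

lemma LD.surj_step [CompleteSpace X] (h : LD D A) {lam mu : ℝ} (hl : 0 < lam) (hm : 0 < mu)
    (hml : mu < 2 * lam) (hs : ∀ y : X, ∃ x ∈ D, lam • x - A x = y) (y : X) :
    ∃ x ∈ D, mu • x - A x = y := by
  choose g hgD hg using hs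
  have hgl : ∀ z w, lam * ‖g z - g w‖ ≤ ‖z - w‖ := by
    intro z w
    have := h.dist (hgD z) (hgD w) hl
    rwa [hg, hg] at this
  have hq : |lam - mu| / lam < 1 := by
    rw [div_lt_one hl, abs_lt]; constructor <;> linarith
  have hq0 : 0 ≤ |lam - mu| / lam := by positivity
  have hc : ContractingWith ⟨|lam - mu| / lam, hq0⟩ (fun z => y + (lam - mu) • g z) := by
    refine ⟨by exact_mod_cast hq, LipschitzWith.of_dist_le_mul fun z w => ?_⟩
    rw [dist_eq_norm, dist_eq_norm, add_sub_add_left_eq_sub, ← smul_sub, norm_smul]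
    change |lam - mu| * _ ≤ |lam - mu| / lam * _
    rw [div_mul_eq_mul_div, le_div_iff₀ hl, mul_assoc]
    refine mul_le_mul_of_nonneg_left ?_ (abs_nonneg _)
    rw [mul_comm]; exact hgl z w
  have : Nonempty X := ⟨0⟩
  have hf := hc.fixedPoint_isFixedPt
  set z := ContractingWith.fixedPoint _ hc
  have hz : y + (lam - mu) • g z = z := hf
  refine ⟨g z, hgD z, ?_⟩
  have e1 := hg z
  have e2 : mu • g z - A (g z) = (lam • g z - A (g z)) - (lam - mu) • g z := by
    rw [sub_smul]; abel
  rw [e2, e1, sub_eq_iff_eq_add]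
  exact hz.symm

lemma LD.surj [CompleteSpace X] (h : LD D A)
    (hmax : ∃ lam : ℝ, 0 < lam ∧ ∀ y : X, ∃ x ∈ D, lam • x - A x = y) {mu : ℝ} (hm : 0 < mu) :
    ∀ y : X, ∃ x ∈ D, mu • x - A x = y := by
  have key : ∀ k : ℕ, ∀ lam : ℝ, 0 < lam → mu < (3 / 2) ^ k * lam →
      (∀ y : X, ∃ x ∈ D, lam • x - A x = y) → ∀ y : X, ∃ x ∈ D, mu • x - A x = y := by
    intro k
    induction k with
    | zero =>
      intro lam hl hml hs
      exact h.surj_step hl hm (by linarith) hs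
    | succ k ih =>
      intro lam hl hml hs
      refine ih (3 / 2 * lam) (by linarith) ?_ (h.surj_step hl (by linarith) (by linarith) hs)
      rw [pow_succ] at hml
      linarith
  obtain ⟨lam, hl, hs⟩ := hmax
  obtain ⟨k, hk⟩ := pow_unbounded_of_one_lt (mu / lam) (by norm_num : (1 : ℝ) < 3 / 2)
  exact key k lam hl (by rwa [div_lt_iff₀ hl] at hk) hs

lemma LD.exists_J [CompleteSpace X] (h : LD D A)
    (hmax : ∃ lam : ℝ, 0 < lam ∧ ∀ y : X, ∃ x ∈ D, lam • x - A x = y) (n : ℕ) :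
    ∃ J : X →L[ℝ] X, ‖J‖ ≤ 1 ∧ (∀ x, J x ∈ D) ∧
      ∀ x, ((n : ℝ) + 1) • J x - A (J x) = ((n : ℝ) + 1) • x := by
  have hn : (0 : ℝ) < (n : ℝ) + 1 := by positivity
  choose g hgD hg using fun x => h.surj hmax hn (((n : ℝ) + 1) • x)
  let J0 : X →ₗ[ℝ] X :=
    { toFun := g
      map_add' := fun x y => by
        refine h.inj (hgD _) (D.add_mem (hgD _) (hgD _)) hn ?_
        rw [hg, h.add _ (hgD _) _ (hgD _), smul_add, smul_add, ← hg x, ← hg y]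
        abel
      map_smul' := fun r x => by
        refine h.inj (hgD _) (D.smul_mem _ (hgD _)) hn ?_
        simp only [RingHom.id_apply]
        rw [hg, h.smul _ (hgD _), smul_comm _ r (g x), ← smul_sub, hg, smul_comm] }
  refine ⟨J0.mkContinuous 1 fun x => ?_, ?_, hgD, hg⟩
  · have := h.diss _ (hgD x) _ hn
    rw [hg, norm_smul, Real.norm_of_nonneg hn.le] at this
    rw [one_mul]
    exact le_of_mul_le_mul_left this hn
  · exact J0.mkContinuous_norm_le zero_le_one _

end single

section mk
variable {X : Type*} [NormedAddCommGroup X] [NormedSpace ℝ X]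

lemma exists_KD {c d K M0 : ℝ} (hcd : c ≤ d) (D : Submodule ℝ X) (hdense : Dense (D : Set X))
    (A : ℝ → X → X) (hA : ∀ t, LD D (A t))
    (J : ℕ → ℝ → X →L[ℝ] X) (R B : ℝ → X →L[ℝ] X)
    (hJ1 : ∀ n t, ‖J n t‖ ≤ 1) (hJD : ∀ n t x, J n t x ∈ D)
    (hJ : ∀ (n : ℕ) t x, ((n : ℝ) + 1) • J n t x - A t (J n t x) = ((n : ℝ) + 1) • x)
    (hR : ∀ t x, R t x ∈ D ∧ A t (R t x) = x)
    (hRA : ∀ t, ∀ y ∈ D, R t (A t y) = y)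
    (hCb : ∀ t s x, ‖A t (R s x)‖ ≤ M0 * ‖x‖)
    (hC : ∀ t s x, ‖A t (R s x) - x‖ ≤ K * |t - s| * ‖x‖)
    (hBK : ∀ t, ‖B t‖ ≤ K) (hBc : ∀ x, Continuous fun t => B t x)
    (hd : ∀ t ∈ Ico c d, ∀ x,
      Tendsto (fun τ => (τ - t)⁻¹ • (A τ (R t x) - x)) (𝓝[>] t) (𝓝 (B t x))) :
    ∃ S : KD X c d K, S.J = J ∧ S.R = R := by
  have hK : 0 ≤ K := (norm_nonneg _).trans (hBK 0)
  have hn : ∀ n : ℕ, (0 : ℝ) < (n : ℝ) + 1 := fun n => by positivity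
  have uniq : ∀ (n : ℕ) t, ∀ u ∈ D, ∀ z, ((n : ℝ) + 1) • u - A t u = ((n : ℝ) + 1) • z →
      J n t z = u := fun n t u hu z e => (hA t).inj (hJD n t z) hu (hn n) ((hJ n t z).trans e.symm)
  have hAJ : ∀ (n : ℕ) t x, A t (J n t x) = ((n : ℝ) + 1) • (J n t x - x) := by
    intro n t x
    have := hJ n t x
    rw [smul_sub, ← this]; abel
  have hcomm : ∀ n t x, J n t (R t x) = R t (J n t x) := by
    intro n t x
    refine uniq n t _ (hR _ _).1 _ ?_
    have := congrArg (R t) (hJ n t x)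
    rw [map_sub, map_smul, map_smul, hRA _ _ (hJD _ _ _)] at this
    rw [(hR _ _).2, this]
  have hJR : ∀ (n : ℕ) t x, ((n : ℝ) + 1) • (J n t (R t x) - R t x) = J n t x := by
    intro n t x
    rw [← hAJ, hcomm, (hR _ _).2]
  have hAJ2 : ∀ n t, ∀ w ∈ D, A t (J n t w) = J n t (A t w) := by
    intro n t w hw
    conv_lhs => rw [← hRA t w hw, hcomm, (hR _ _).2]
  have hdiff : ∀ (n : ℕ) r s x, ((n : ℝ) + 1) • (J n r x - J n s x) =
      J n r (A r (R s (A s (J n s x))) - A s (J n s x)) := by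
    intro n r s x
    rw [hRA s _ (hJD _ _ _), map_sub]
    have e : J n r (A r (J n s x)) = ((n : ℝ) + 1) • (J n r (J n s x) - J n s x) := by
      rw [← hAJ2 _ _ _ (hJD _ _ _), hAJ]
    rw [e, hAJ, map_smul, map_sub, ← smul_sub]
    congr 1; abel
  have hJle : ∀ n t x, ‖J n t x‖ ≤ ‖x‖ := fun n t x => by
    simpa using (J n t).le_of_opNorm_le (hJ1 n t) x
  have hdn : ∀ (n : ℕ) r s x, ‖((n : ℝ) + 1) • (J n r x - J n s x)‖ ≤
      K * |r - s| * ‖A s (J n s x)‖ := by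
    intro n r s x
    rw [hdiff]
    exact (hJle _ _ _).trans (hC _ _ _)
  have hJlip : ∀ (n : ℕ) r s, ‖J n r - J n s‖ ≤ 2 * K * |r - s| := by
    intro n r s
    refine ContinuousLinearMap.opNorm_le_bound _ (by positivity) fun x => ?_
    have h1 := hdn n r s x
    rw [hAJ, norm_smul, norm_smul, Real.norm_of_nonneg (hn n).le] at h1
    have h2 := hJle n s x
    have h3 := norm_sub_le (J n s x) x
    have h4 : ((n : ℝ) + 1) * ‖J n r x - J n s x‖ ≤ ((n : ℝ) + 1) * (2 * K * |r - s| * ‖x‖) := by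
      refine h1.trans ?_
      have : K * |r - s| * (((n : ℝ) + 1) * ‖J n s x - x‖) ≤
          K * |r - s| * (((n : ℝ) + 1) * (2 * ‖x‖)) := by
        refine mul_le_mul_of_nonneg_left (mul_le_mul_of_nonneg_left (by linarith) (hn n).le)
          (by positivity)
      linarith
    simpa using le_of_mul_le_mul_left h4 (hn n)
  have hM0 : ∀ x : X, 0 ≤ M0 * ‖x‖ := fun x => (norm_nonneg _).trans (hCb 0 0 x)
  have hRb : ∀ t x, ‖R t x‖ ≤ ‖R 0‖ * (M0 * ‖x‖) := by
    intro t x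
    rw [← hRA 0 _ (hR t x).1]
    exact ((R 0).le_opNorm _).trans (mul_le_mul_of_nonneg_left (hCb _ _ _) (norm_nonneg _))
  have hRdiff : ∀ t s x, R t x - R s x = - R t (A t (R s x) - x) := by
    intro t s x
    rw [map_sub, hRA t _ (hR s x).1]; abel
  have hRlip : ∀ t s, ‖R t - R s‖ ≤ ‖R 0‖ * |M0| * K * |t - s| := by
    intro t s
    refine ContinuousLinearMap.opNorm_le_bound _ (by positivity) fun x => ?_
    rw [sub_apply, hRdiff, norm_neg]
    refine (hRb _ _).trans ?_
    have h1 : M0 * ‖A t (R s x) - x‖ ≤ |M0| * (K * |t - s| * ‖x‖) :=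
      (mul_le_mul_of_nonneg_right (le_abs_self _) (norm_nonneg _)).trans
        (mul_le_mul_of_nonneg_left (hC _ _ _) (abs_nonneg _))
    have := mul_le_mul_of_nonneg_left h1 (norm_nonneg (R 0))
    linarith
  have lipc : ∀ (F : ℝ → X →L[ℝ] X) (k : ℝ), (∀ t s, ‖F t - F s‖ ≤ k * |t - s|) → Continuous F := by
    intro F k h
    have : LipschitzWith ‖k‖₊ F := LipschitzWith.of_dist_le_mul fun t s => by
      rw [dist_eq_norm, dist_eq_norm]
      refine (h t s).trans ?_
      exact mul_le_mul_of_nonneg_right (le_abs_self k) (abs_nonneg _)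
    exact this.continuous
  have hRc := lipc R _ hRlip
  have hrange : ∀ t, range (R t) = (D : Set X) := by
    intro t
    ext y
    constructor
    · rintro ⟨x, rfl⟩; exact (hR t x).1
    · intro hy; exact ⟨A t y, hRA t y hy⟩
  have hRdense : ∀ t, DenseRange (R t) := fun t => by
    unfold DenseRange; rw [hrange]; exact hdense
  refine ⟨⟨hcd, J, R, B, hJ1, fun n => lipc _ _ (hJlip n), hRc, hRdense, hJR, hcomm, ?_, ?_, hBK, hBc,
    ?_, ?_, ?_⟩, rfl, rfl⟩
  · intro n m t
    ext x
    change J n t (J m t x) = J m t (J n t x)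
    refine uniq n t _ (hJD _ _ _) _ ?_
    rw [hAJ2 _ _ _ (hJD _ _ _), ← map_smul, ← map_sub, hJ, map_smul]
  · intro t x
    rw [Metric.tendsto_atTop]
    intro ε hε
    obtain ⟨y, hy⟩ := (hRdense t).exists_dist_lt x (by positivity : (0 : ℝ) < ε / 4)
    obtain ⟨N, hN⟩ := exists_nat_gt (2 * ‖y‖ / ε)
    refine ⟨N, fun n hnN => ?_⟩
    rw [dist_eq_norm] at hy ⊢
    have e1 : J n t x - x = J n t (x - R t y) - (x - R t y) + (J n t (R t y) - R t y) := by
      rw [map_sub]; abel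
    have e2 := congrArg norm (hJR n t y)
    rw [norm_smul, Real.norm_of_nonneg (hn n).le] at e2
    have e3 := hJle n t y
    have e4 : ‖J n t (R t y) - R t y‖ < ε / 2 := by
      rw [div_lt_iff₀ hε] at hN
      have : (N : ℝ) ≤ n := by exact_mod_cast hnN
      have h5 : ((n : ℝ) + 1) * ‖J n t (R t y) - R t y‖ < ((n : ℝ) + 1) * (ε / 2) := by
        nlinarith
      exact lt_of_mul_lt_mul_left h5 (hn n).le
    rw [e1]
    have := norm_add_le (J n t (x - R t y) - (x - R t y)) (J n t (R t y) - R t y)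
    have := norm_sub_le (J n t (x - R t y)) (x - R t y)
    have := hJle n t (x - R t y)
    linarith
  · intro t ht x
    rw [hasDerivWithinAt_iff_tendsto_slope, Ici_sdiff_left]
    have h1 : Tendsto R (𝓝[>] t) (𝓝 (R t)) := (hRc.tendsto t).mono_left nhdsWithin_le_nhds
    have h2 := (((isBoundedBilinearMap_apply (𝕜 := ℝ) (E := X) (F := X)).continuous.tendsto
      (R t, B t x)).comp (h1.prodMk_nhds (hd t ht x))).neg
    refine h2.congr fun τ => ?_
    simp only [slope_def_module, Function.comp, hRdiff, map_smul, smul_neg]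
  · intro n r s x
    refine (hdn n r s _).trans ?_
    rw [hcomm, (hR _ _).2]
    exact mul_le_mul_of_nonneg_left (hJle _ _ _) (by positivity)
  · intro s x
    exact ⟨M0 * ‖x‖, fun t => ⟨A t (R s x), hRA _ _ (hR _ _).1, hCb _ _ _⟩⟩

end mk
end KatoAux

namespace KatoAux
set_option linter.unusedSectionVars false
section
variable {X : Type*} [NormedAddCommGroup X] [NormedSpace ℝ X]

lemma abs_p_sub_le (c d t s : ℝ) : |KD.p c d t - KD.p c d s| ≤ |t - s| := by
  unfold KD.p
  have h1 := abs_max_sub_max_le_abs (min d t) (min d s) c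
  have h2 := abs_min_sub_min_le_max d t d s
  rw [max_comm c, max_comm c]
  refine h1.trans (h2.trans ?_)
  simp

lemma bdd_of_uc {f : ℝ × ℝ → X} {c d : ℝ} {T : Set (ℝ × ℝ)} (hT : T ⊆ Icc c d ×ˢ Icc c d)
    (hf : UniformContinuousOn f T) : ∃ M, ∀ q ∈ T, ‖f q‖ ≤ M := by
  rw [uniformContinuousOn_iff_restrict] at hf
  have h1 : TotallyBounded T :=
    ((isCompact_Icc (a := c) (b := d)).prod (isCompact_Icc (a := c) (b := d))).totallyBounded.subset hT
  have h2 : TotallyBounded ((Subtype.val : T → ℝ × ℝ) ⁻¹' T) :=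
    totallyBounded_preimage (isUniformInducing_val T) h1
  have h3 := (h2.image hf).isBounded
  obtain ⟨M, hM⟩ := h3.exists_norm_le
  exact ⟨M, fun q hq => hM _ ⟨⟨q, hq⟩, hq, rfl⟩⟩

lemma exists_C [CompleteSpace X] {D : Submodule ℝ X} {A : X → X} (hA : LD D A) {R Q : X →L[ℝ] X}
    (hR : ∀ x, R x ∈ D ∧ A (R x) = x) (hRA : ∀ y ∈ D, R (A y) = y) (hQ : ∀ x, Q x ∈ D) :
    ∃ C : X →L[ℝ] X, ∀ x, C x = A (Q x) := by
  let C0 : X →ₗ[ℝ] X :=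
    { toFun := fun x => A (Q x)
      map_add' := fun x y => by rw [map_add, hA.add _ (hQ _) _ (hQ _)]
      map_smul' := fun r x => by rw [map_smul, hA.smul _ (hQ _), RingHom.id_apply] }
  have hc : Continuous C0 := by
    refine C0.continuous_of_seq_closed_graph fun u x y hu hy => ?_
    have h1 : Tendsto (fun n => R (C0 (u n))) atTop (𝓝 (R y)) := (R.continuous.tendsto y).comp hy
    have h2 : Tendsto (fun n => R (C0 (u n))) atTop (𝓝 (Q x)) := by
      refine ((Q.continuous.tendsto x).comp hu).congr fun n => ?_
      exact (hRA _ (hQ _)).symm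
    have h3 := tendsto_nhds_unique h1 h2
    change y = A (Q x)
    rw [← h3, (hR y).2]
  exact ⟨⟨C0, hc⟩, fun x => rfl⟩

lemma KD.U_congr [CompleteSpace X] {c d K c' d' K' : ℝ} (S : KD X c d K) (S' : KD X c' d' K')
    {s t : ℝ} (h1 : c ≤ s) (h2 : s ≤ t) (h3 : t ≤ d) (h1' : c' ≤ s) (h3' : t ≤ d')
    (hJ : ∀ n, ∀ r ∈ Icc s t, S.J n r = S'.J n r) (n : ℕ) (x : X) :
    S.U n t s x = S'.U n t s x := by
  have hm : ∀ r ∈ Icc s t, r ∈ Icc c d := fun r hr => ⟨h1.trans hr.1, hr.2.trans h3⟩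
  have hm' : ∀ r ∈ Icc s t, r ∈ Icc c' d' := fun r hr => ⟨h1'.trans hr.1, hr.2.trans h3'⟩
  have := ODE_solution_unique (v := fun t f => S.a n t f) (K := ⟨((n : ℝ) + 1) * 2, by positivity⟩)
    (f := fun r => S.U n r s x) (g := fun r => S'.U n r s x) (a := s) (b := t)
    (fun r => (S.a n r).lipschitz.weaken (S.a_bdd n r))
    (fun r hr => (S.U_dtx n s (hm r hr) x).continuousAt.continuousWithinAt)
    (fun r hr => (S.U_dtx n s (hm r (Ico_subset_Icc_self hr)) x).hasDerivWithinAt)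
    (fun r hr => (S'.U_dtx n s (hm' r hr) x).continuousAt.continuousWithinAt)
    (fun r hr => by
      have e := (S'.U_dtx n s (hm' r (Ico_subset_Icc_self hr)) x).hasDerivWithinAt (s := Ici r)
      rw [S'.a_apply, ← hJ n r (Ico_subset_Icc_self hr), ← S.a_apply] at e
      exact e)
    (by
      have hs : s ∈ Icc s t := ⟨le_rfl, h2⟩
      simp only [S.U_self n (hm s hs), S'.U_self n (hm' s hs)])
  exact this ⟨h2, le_rfl⟩

lemma exists_local [CompleteSpace X]
    {I : Set ℝ} (D : Submodule ℝ X) (hdense : Dense (D : Set X))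
    (Aop : ℝ → X → X) (hA : ∀ t ∈ I, LD D (Aop t))
    (J : ℕ → ℝ → X →L[ℝ] X)
    (hJ : ∀ n : ℕ, ∀ t ∈ I, ‖J n t‖ ≤ 1 ∧ (∀ x, J n t x ∈ D) ∧
      ∀ x, ((n : ℝ) + 1) • J n t x - Aop t (J n t x) = ((n : ℝ) + 1) • x)
    (Ainv : ℝ → X →L[ℝ] X)
    (hAinv_mem : ∀ t ∈ I, ∀ x : X, Ainv t x ∈ D ∧ Aop t (Ainv t x) = x)
    (hAinv_inv : ∀ t ∈ I, ∀ y ∈ D, Ainv t (Aop t y) = y)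
    (L : ℝ → X →L[ℝ] X) {c d : ℝ} (hcd : c ≤ d) (hI : Icc c d ⊆ I)
    (hii : ∀ x : X,
      UniformContinuousOn
        (fun q : ℝ × ℝ => (q.1 - q.2)⁻¹ • (Aop q.1 (Ainv q.2 x) - x))
        {q : ℝ × ℝ | q.1 ∈ Icc c d ∧ q.2 ∈ Icc c d ∧ q.1 ≠ q.2})
    (hiii : ∀ x : X, ∀ ε : ℝ, 0 < ε →
      ∃ δ : ℝ, 0 < δ ∧ ∀ t ∈ Icc c d, ∀ s ∈ Icc c d, s ≠ t → |t - s| < δ →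
        ‖(t - s)⁻¹ • (Aop t (Ainv s x) - x) - L t x‖ < ε)
    (hL_bdd : ∃ K : ℝ, ∀ t ∈ Icc c d, ‖L t‖ ≤ K)
    (hL_cont : ∀ x : X, ContinuousOn (fun t => L t x) I) :
    ∃ K, ∃ S : KD X c d K, ∀ t ∈ Icc c d, (∀ n, S.J n t = J n t) ∧ S.R t = Ainv t := by
  obtain ⟨K1, hK1⟩ := hL_bdd
  have hCex : ∀ q : {q : ℝ × ℝ // q.1 ∈ Icc c d ∧ q.2 ∈ Icc c d ∧ q.1 ≠ q.2},
      ∃ C : X →L[ℝ] X, ∀ x, C x = Aop q.1.1 (Ainv q.1.2 x) := by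
    rintro ⟨⟨t, s⟩, ht, hs, hne⟩
    exact exists_C (hA t (hI ht)) (hAinv_mem t (hI ht)) (hAinv_inv t (hI ht))
      (fun x => (hAinv_mem s (hI hs) x).1)
  choose C hC using hCex
  obtain ⟨K2, hK2⟩ := banach_steinhaus
    (g := fun q : {q : ℝ × ℝ // q.1 ∈ Icc c d ∧ q.2 ∈ Icc c d ∧ q.1 ≠ q.2} =>
      (q.1.1 - q.1.2)⁻¹ • (C q - 1)) (fun x => by
      obtain ⟨M, hM⟩ := bdd_of_uc (c := c) (d := d) (fun q hq => ⟨hq.1, hq.2.1⟩) (hii x)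
      refine ⟨M, fun q => ?_⟩
      have := hM q.1 q.2
      rw [← hC q x] at this
      simpa using this)
  set K := max (max K1 K2) 0 with hKdef
  have hK0 : 0 ≤ K := le_max_right _ _
  have hCl : ∀ t ∈ Icc c d, ∀ s ∈ Icc c d, ∀ x, ‖Aop t (Ainv s x) - x‖ ≤ K * |t - s| * ‖x‖ := by
    intro t ht s hs x
    by_cases hne : t = s
    · subst hne
      rw [(hAinv_mem t (hI ht) x).2]; simp
    · have h1 := ContinuousLinearMap.le_of_opNorm_le _ (hK2 ⟨(t, s), ht, hs, hne⟩) x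
      have h2 : t - s ≠ 0 := sub_ne_zero.2 hne
      have h3 : ‖(t - s)⁻¹ • (Aop t (Ainv s x) - x)‖ ≤ K2 * ‖x‖ := by
        have := hC ⟨(t, s), ht, hs, hne⟩ x
        rw [← this]
        simpa using h1
      rw [norm_smul, norm_inv, Real.norm_eq_abs, inv_mul_le_iff₀ (abs_pos.2 h2)] at h3
      refine h3.trans ?_
      have h4 : K2 ≤ K := (le_max_right _ _).trans (le_max_left _ _)
      have := mul_le_mul_of_nonneg_right h4 (mul_nonneg (abs_nonneg (t - s)) (norm_nonneg x))
      linarith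
  have hp : ∀ t, KD.p c d t ∈ Icc c d := KD.p_mem hcd
  have hpI : ∀ t, KD.p c d t ∈ I := fun t => hI (hp t)
  have hBc : ∀ x, Continuous fun t => L (KD.p c d t) x := fun x =>
    (hL_cont x).comp_continuous KD.p_cont hpI
  obtain ⟨S, hS1, hS2⟩ := exists_KD (c := c) (d := d) (K := K) (M0 := 1 + K * (d - c)) hcd D hdense
    (fun t => Aop (KD.p c d t)) (fun t => hA _ (hpI t)) (fun n t => J n (KD.p c d t))
    (fun t => Ainv (KD.p c d t)) (fun t => L (KD.p c d t))
    (fun n t => (hJ n _ (hpI t)).1) (fun n t => (hJ n _ (hpI t)).2.1)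
    (fun n t => (hJ n _ (hpI t)).2.2) (fun t => hAinv_mem _ (hpI t))
    (fun t => hAinv_inv _ (hpI t))
    (fun t s x => by
      have h1 := hCl _ (hp t) _ (hp s) x
      have h2 : |KD.p c d t - KD.p c d s| ≤ d - c := by
        have := hp t; have := hp s
        rw [abs_le]; constructor <;> linarith [(hp t).1, (hp t).2, (hp s).1, (hp s).2]
      have h3 : K * |KD.p c d t - KD.p c d s| * ‖x‖ ≤ K * (d - c) * ‖x‖ := by gcongr
      have h4 := norm_add_le (Aop (KD.p c d t) (Ainv (KD.p c d s) x) - x) x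
      rw [sub_add_cancel] at h4
      linarith)
    (fun t s x => (hCl _ (hp t) _ (hp s) x).trans (by
      have := abs_p_sub_le c d t s
      gcongr))
    (fun t => (hK1 _ (hp t)).trans ((le_max_left _ _).trans (le_max_left _ _)))
    hBc
    (fun t ht x => by
      have htI : t ∈ Icc c d := Ico_subset_Icc_self ht
      have h1 : Tendsto (fun τ => L (KD.p c d τ) x) (𝓝[>] t) (𝓝 (L (KD.p c d t) x)) :=
        ((hBc x).tendsto t).mono_left nhdsWithin_le_nhds
      have h2 : Tendsto (fun τ => (τ - t)⁻¹ • (Aop (KD.p c d τ) (Ainv (KD.p c d t) x) - x)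
          - L (KD.p c d τ) x) (𝓝[>] t) (𝓝 0) := by
        rw [Metric.tendsto_nhds]
        intro ε hε
        obtain ⟨δ, hδ, h⟩ := hiii x ε hε
        have hlt : t < min d (t + δ) := lt_min ht.2 (by linarith)
        filter_upwards [Ioo_mem_nhdsGT hlt] with τ hτ
        have hτ2 := lt_min_iff.1 hτ.2
        have hτI : τ ∈ Icc c d := ⟨ht.1.trans hτ.1.le, hτ2.1.le⟩
        rw [KD.p_eq hτI, KD.p_eq htI, dist_zero_right]
        exact h τ hτI t htI hτ.1.ne (by rw [abs_of_pos (by linarith [hτ.1])]; linarith)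
      simpa using h2.add h1)
  refine ⟨K, S, fun t ht => ⟨fun n => ?_, ?_⟩⟩
  · rw [hS1]; beta_reduce; rw [KD.p_eq ht]
  · rw [hS2]; beta_reduce; rw [KD.p_eq ht]

end
end KatoAux

/-- **Wellposedness for time-independent domains (Theorem 2.22).**
Let `I ⊆ ℝ` be an open interval and `A(t)`, `t ∈ I`, maximally dissipative
operators on a Banach space `X` with `0 ∈ ρ(A(t))`, a common dense domain
`D`, and such that `(t,s) ↦ (t−s)⁻¹(A(t)A(s)⁻¹ − 1)x` is uniformly strongly
continuous off the diagonal on compact subintervals, with a limit as `s → t`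
that exists uniformly, is bounded, and is continuous in `t`. Then there is a
strongly continuous, bounded propagator `U(t,s)` such that `t ↦ U(t,s)x` is a
classical solution of `u' = A(t)u`, `u(s) = x`, for every `x ∈ D`. -/
theorem time_independent_domain_wellposed
    {X : Type*} [NormedAddCommGroup X] [NormedSpace ℝ X] [CompleteSpace X]
    (I : Set ℝ) (hI_open : IsOpen I) (hI_conn : I.OrdConnected)
    -- the common domain `D`
    (D : Submodule ℝ X) (hdense : Dense (D : Set X))
    (Aop : ℝ → X → X)
    (hlin : ∀ t ∈ I, ∀ x ∈ D, ∀ y ∈ D, ∀ c : ℝ,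
      Aop t (x + y) = Aop t x + Aop t y ∧ Aop t (c • x) = c • Aop t x)
    -- `A(t)` is dissipative ...
    (hdiss : ∀ t ∈ I, ∀ x ∈ D, ∀ lam : ℝ, 0 < lam →
      lam * ‖x‖ ≤ ‖lam • x - Aop t x‖)
    -- ... and maximally so
    (hmax : ∀ t ∈ I, ∃ lam : ℝ, 0 < lam ∧ ∀ y : X, ∃ x ∈ D,
      lam • x - Aop t x = y)
    -- `0 ∈ ρ(A(t))`: bounded inverses `A(t)⁻¹`
    (Ainv : ℝ → X →L[ℝ] X)
    (hAinv_mem : ∀ t ∈ I, ∀ x : X, Ainv t x ∈ D ∧ Aop t (Ainv t x) = x)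
    (hAinv_inv : ∀ t ∈ I, ∀ y ∈ D, Ainv t (Aop t y) = y)
    -- (ii) uniform strong continuity of
    -- `(t,s) ↦ (t−s)⁻¹ (A(t)A(s)⁻¹ − 1) x` off the diagonal
    (hii : ∀ x : X, ∀ c d : ℝ, Icc c d ⊆ I →
      UniformContinuousOn
        (fun q : ℝ × ℝ => (q.1 - q.2)⁻¹ • (Aop q.1 (Ainv q.2 x) - x))
        {q : ℝ × ℝ | q.1 ∈ Icc c d ∧ q.2 ∈ Icc c d ∧ q.1 ≠ q.2})
    -- (iii) existence of the uniform limit as `s → t`; the limit is a bounded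
    -- operator, locally uniformly bounded and strongly continuous in `t`
    (L : ℝ → X →L[ℝ] X)
    (hiii : ∀ x : X, ∀ c d : ℝ, Icc c d ⊆ I → ∀ ε : ℝ, 0 < ε →
      ∃ δ : ℝ, 0 < δ ∧ ∀ t ∈ Icc c d, ∀ s ∈ Icc c d, s ≠ t → |t - s| < δ →
        ‖(t - s)⁻¹ • (Aop t (Ainv s x) - x) - L t x‖ < ε)
    (hL_bdd : ∀ c d : ℝ, Icc c d ⊆ I → ∃ K : ℝ, ∀ t ∈ Icc c d, ‖L t‖ ≤ K)
    (hL_cont : ∀ x : X, ContinuousOn (fun t => L t x) I) :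
    ∃ U : ℝ → ℝ → X →L[ℝ] X,
      -- `U` is a strongly continuous, bounded propagator
      (∀ t ∈ I, U t t = 1) ∧
      (∀ t ∈ I, ∀ r ∈ I, ∀ s ∈ I, s ≤ r → r ≤ t →
        (U t r).comp (U r s) = U t s) ∧
      (∀ x : X, ContinuousOn (fun q : ℝ × ℝ => U q.1 q.2 x)
        {q : ℝ × ℝ | q.1 ∈ I ∧ q.2 ∈ I ∧ q.2 ≤ q.1}) ∧
      (∃ C : ℝ, 1 ≤ C ∧ ∀ t ∈ I, ∀ s ∈ I, s ≤ t → ‖U t s‖ ≤ C) ∧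
      -- classical solvability for initial values in `D`
      (∀ s ∈ I, ∀ x ∈ D, ∀ t ∈ I, s ≤ t →
        U t s x ∈ D ∧
        HasDerivWithinAt (fun τ => U τ s x) (Aop t (U t s x))
          (I ∩ Ici s) t) := by
  have hA : ∀ t ∈ I, KatoAux.LD D (Aop t) := fun t ht =>
    ⟨fun x hx y hy => (hlin t ht x hx y hy 0).1, fun x hx c => (hlin t ht x hx x hx c).2,
      hdiss t ht⟩
  have hJex : ∀ (n : ℕ) (t : ℝ), ∃ J : X →L[ℝ] X, t ∈ I → ‖J‖ ≤ 1 ∧ (∀ x, J x ∈ D) ∧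
      ∀ x, ((n : ℝ) + 1) • J x - Aop t (J x) = ((n : ℝ) + 1) • x := by
    intro n t
    by_cases ht : t ∈ I
    · obtain ⟨J, hJ⟩ := (hA t ht).exists_J (hmax t ht) n
      exact ⟨J, fun _ => hJ⟩
    · exact ⟨0, fun h => absurd h ht⟩
  choose J hJ using hJex
  have hloc : ∀ c d : ℝ, ∃ V : ℝ → ℝ → X →L[ℝ] X, c ≤ d → Icc c d ⊆ I →
      (∀ t s, ‖V t s‖ ≤ 1) ∧ (∀ x, Continuous fun q : ℝ × ℝ => V q.1 q.2 x) ∧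
      (∀ t ∈ Icc c d, V t t = 1) ∧
      (∀ s r t, c ≤ s → s ≤ r → r ≤ t → t ≤ d → ∀ x, V t r (V r s x) = V t s x) ∧
      (∀ s ∈ Icc c d, ∀ x ∈ D, ∀ t ∈ Icc s d, V t s x ∈ D ∧
        HasDerivWithinAt (fun τ => V τ s x) (Aop t (V t s x)) (Icc s d) t) ∧
      ∃ K, ∃ S : KatoAux.KD X c d K, (∀ t ∈ Icc c d, ∀ n, S.J n t = J n t) ∧
        ∀ s t, c ≤ s → s ≤ t → t ≤ d → ∀ x,
          Tendsto (fun n => S.U n t s x) atTop (𝓝 (V t s x)) := by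
    intro c d
    by_cases hcd : c ≤ d
    swap
    · exact ⟨0, fun h => absurd h hcd⟩
    by_cases hI : Icc c d ⊆ I
    swap
    · exact ⟨0, fun _ h => absurd h hI⟩
    obtain ⟨K, S, hS⟩ := KatoAux.exists_local D hdense Aop hA J (fun n t ht => hJ n t ht) Ainv
      hAinv_mem hAinv_inv L hcd hI (fun x => hii x c d hI) (fun x => hiii x c d hI)
      (hL_bdd c d hI) hL_cont
    obtain ⟨V, hN, hVc, hV⟩ := S.exists_V
    refine ⟨V, fun _ _ => ⟨hN, hVc, ?_, ?_, ?_, K, S, fun t ht n => (hS t ht).1 n, hV⟩⟩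
    · intro t ht
      ext x
      refine tendsto_nhds_unique (hV t t ht.1 le_rfl ht.2 x) ?_
      simp only [S.U_self _ ht]
      exact tendsto_const_nhds
    · intro s r t h1 h2 h3 h4 x
      have e1 := hV s t h1 (h2.trans h3) h4 x
      have e2 := hV r t (h1.trans h2) h3 h4 (V r s x)
      have e3 : Tendsto (fun n => S.U n t r (S.U n r s x) - S.U n t r (V r s x)) atTop (𝓝 0) := by
        refine squeeze_zero_norm (fun n => ?_)
          (tendsto_iff_norm_sub_tendsto_zero.1 (hV s r h1 h2 (h3.trans h4) x))
        rw [← map_sub]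
        simpa using (S.U n t r).le_of_opNorm_le (S.U_norm n (h1.trans h2) h3 h4)
          (S.U n r s x - V r s x)
      refine tendsto_nhds_unique ?_ e1
      have e4 := e3.add e2
      rw [zero_add] at e4
      refine e4.congr fun n => ?_
      rw [sub_add_cancel, S.U_mul n t s ⟨h1.trans h2, h3.trans h4⟩]
    · intro s hs x hx t ht
      obtain ⟨w, hw⟩ := S.V_deriv hN hVc hV hs (Aop s x)
      rw [(hS s hs).2, hAinv_inv s (hI hs) x hx] at hw
      obtain ⟨h1, h2⟩ := hw t ht
      have htI : t ∈ Icc c d := ⟨hs.1.trans ht.1, ht.2⟩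
      rw [(hS t htI).2] at h1
      obtain ⟨h3, h4⟩ := hAinv_mem t (hI htI) (w t)
      rw [h1, h4]
      exact ⟨h3, h2⟩
  choose V hV using hloc
  have hsub : ∀ {c d : ℝ}, c ∈ I → d ∈ I → Icc c d ⊆ I := fun hc hd => hI_conn.out hc hd
  -- consistency of the local propagators
  have hcons : ∀ c d s t, c ∈ I → d ∈ I → c ≤ s → s ≤ t → t ≤ d → V s t t s = V c d t s := by
    intro c d s t hc hd h1 h2 h3
    have hs : s ∈ I := hsub hc hd ⟨h1, h2.trans h3⟩
    have ht : t ∈ I := hsub hc hd ⟨h1.trans h2, h3⟩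
    obtain ⟨-, -, -, -, -, K1, S1, hJ1, hl1⟩ := hV s t h2 (hsub hs ht)
    obtain ⟨-, -, -, -, -, K2, S2, hJ2, hl2⟩ := hV c d (h1.trans (h2.trans h3)) (hsub hc hd)
    ext x
    refine tendsto_nhds_unique (hl1 s t le_rfl h2 le_rfl x) ?_
    refine (hl2 s t h1 h2 h3 x).congr fun n => ?_
    refine S2.U_congr S1 h1 h2 h3 le_rfl le_rfl (fun m r hr => ?_) n x
    rw [hJ1 r hr, hJ2 r ⟨h1.trans hr.1, hr.2.trans h3⟩]
  have hup : ∀ t ∈ I, ∃ d ∈ I, t < d := by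
    intro t ht
    obtain ⟨ε, hε, hb⟩ := Metric.isOpen_iff.1 hI_open t ht
    refine ⟨t + ε / 2, hb ?_, by linarith⟩
    rw [Metric.mem_ball, Real.dist_eq, add_sub_cancel_left, abs_of_pos (by linarith)]
    linarith
  have hdown : ∀ t ∈ I, ∃ c ∈ I, c < t := by
    intro t ht
    obtain ⟨ε, hε, hb⟩ := Metric.isOpen_iff.1 hI_open t ht
    refine ⟨t - ε / 2, hb ?_, by linarith⟩
    rw [Metric.mem_ball, Real.dist_eq, abs_sub_comm, sub_sub_cancel, abs_of_pos (by linarith)]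
    linarith
  refine ⟨fun t s => V s t t s, ?_, ?_, ?_, ⟨1, le_rfl, ?_⟩, ?_⟩
  · intro t ht
    exact (hV t t le_rfl (hsub ht ht)).2.2.1 t ⟨le_rfl, le_rfl⟩
  · intro t ht r hr s hs hsr hrt
    ext x
    have := (hV s t (hsr.trans hrt) (hsub hs ht)).2.2.2.1 s r t le_rfl hsr hrt le_rfl x
    beta_reduce
    rw [hcons s t s r hs ht le_rfl hsr hrt, hcons s t r t hs ht hsr hrt le_rfl]
    exact this
  · rintro x ⟨t, s⟩ ⟨ht, hs, hst⟩
    simp only at ht hs hst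
    obtain ⟨d, hd, htd⟩ := hup t ht
    obtain ⟨c, hc, hcs⟩ := hdown s hs
    have hcont := (hV c d (hcs.le.trans (hst.trans htd.le)) (hsub hc hd)).2.1 x
    refine hcont.continuousAt.continuousWithinAt.congr_of_eventuallyEq ?_ ?_
    · have ho : IsOpen {q : ℝ × ℝ | c < q.2 ∧ q.1 < d} :=
        (isOpen_lt continuous_const continuous_snd).inter
          (isOpen_lt continuous_fst continuous_const)
      filter_upwards [self_mem_nhdsWithin, mem_nhdsWithin_of_mem_nhds
        (ho.mem_nhds (⟨hcs, htd⟩ : (t, s) ∈ {q : ℝ × ℝ | c < q.2 ∧ q.1 < d}))] with q hq hq2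
      rw [hcons c d q.2 q.1 hc hd hq2.1.le hq.2.2 hq2.2.le]
    · exact congrArg (fun f : X →L[ℝ] X => f x) (hcons c d s t hc hd hcs.le hst htd.le)
  · intro t ht s hs hst
    exact (hV s t hst (hsub hs ht)).1 t s
  · intro s hs x hx t ht hst
    obtain ⟨d, hd, htd⟩ := hup t ht
    have hsd := hst.trans htd.le
    obtain ⟨h1, h2⟩ := (hV s d hsd (hsub hs hd)).2.2.2.2.1 s ⟨le_rfl, hsd⟩ x hx t ⟨hst, htd.le⟩
    beta_reduce
    rw [hcons s d s t hs hd le_rfl hst htd.le]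
    refine ⟨h1, ?_⟩
    have h3 : HasDerivWithinAt (fun τ => V s τ τ s x) (Aop t (V s d t s x)) (Icc s d) t := by
      refine h2.congr (fun τ hτ => ?_) ?_
      · rw [hcons s d s τ hs hd le_rfl hτ.1 hτ.2]
      · rw [hcons s d s t hs hd le_rfl hst htd.le]
    refine h3.mono_of_mem_nhdsWithin ?_
    filter_upwards [self_mem_nhdsWithin, mem_nhdsWithin_of_mem_nhds (Iio_mem_nhds htd)] with τ h4 h5
    exact ⟨h4.2, le_of_lt h5⟩
end
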